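/- For every integer i ≥ 0 there exists N such that for all n ≥ N the i-th homotopy group π_i(U(n), I) of the unitary group U(n) (based at the identity matrix) is isomorphic to ℤ if i is odd, and is trivial if i is even. -/

import Mathlib

/-!
# Bott periodicity for the unitary groups

For a compact space `X` and a closed subset `Y`, `PiG Y G` is the group of homotopy classes,
relative to `Y`, of maps `X → G` equal to `1` on `Y`, multiplied pointwise; for the cube and its
boundary it is `π_i(G, 1)` by the Eckmann–Hilton argument (`piEquiv`, `piEquiv_mul`). Polar
decomposition replaces `U(n)` by the general linear group (`nonempty_unitary`). Deforming one column
to a basis vector, which is possible by general position (`exists_contraction`), shows that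
enlarging the matrices is bijective on classes once their size exceeds half of `dim X` by a constant
(`stabSurj`, `stabInj`).

The heart is `bott_step`: in the stable range the classes of maps on `(X, Y)` and on
`(X, Y) × (I, ∂I)²` agree. It follows Cuntz's proof of periodicity, with `ℓ¹` algebras in place of
C*-algebras. Let `Lau = ℓ¹(ℤ)` be the Wiener algebra and `Toe` the `ℓ¹` algebra of the bicyclic
monoid, generated by `s`, `s*` with `s* s = 1`. Sending `s` to the generator of `ℤ` gives the
symbol map `Toe → Lau`. Four facts are needed.

* Loops of invertible matrices are, up to homotopy, invertible matrices over `Lau` (`loop_surj`,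
  `loop_inj`): loops are approximated by absolutely convergent Fourier series, and a matrix over
  `Lau` whose value at each point of the circle is invertible is itself invertible by Wiener's lemma
  (`isUnit_matrix_lau`).
* Paths of invertible matrices lift along the symbol map (`exists_toe_lift`).
* The kernel of the symbol map consists of limits of finite corners, namely matrices over `ℂ` in the
  matrix units `sⁱ (1 - s s*) s*ʲ`. A family of invertible matrices congruent to `1` modulo this
  kernel therefore deforms to one of invertible matrices over `ℂ` (`exists_truncation`).
* Every map into the general linear group of `Toe` with trivial augmentation is null after
  stabilization (`toe_null`). To see this, let `Toe` act on bounded sequences over itself, and let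
  `e` be the projection to the term of index `0` and `S` the shift. Rotations join the isometry `S`
  both to `s e + S (1 - e)` and to `e + S (1 - e)`. The resulting two paths of representations of
  `Toe` agree at the beginning, agree modulo the ideal of corners throughout, and differ at the end
  exactly by the inclusion of the matrix itself as a corner when its augmentation is trivial, so
  their quotient truncates to a null homotopy.

Now let `x` be a family of invertible complex matrices. As a corner in the Toeplitz group it is
joined to `1` by a path `γ`, whose symbol is a loop over `Lau`, hence a double loop `z` of complex
matrices. The pairs `(x, z)` that arise in this way form a group `bottRel`. It is total on both
sides (`bott_total_left`, `bott_total_right`), and `x` is null if and only if `z` is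
(`bott_null_right`, `bott_null_left`), so it induces an isomorphism on classes. No choice of lifts
has to be shown to be well defined.

Finally `π_0` is trivial by stabilization from the trivial group, `π_1 = ℤ` by stabilization from
rank one and winding numbers (`nonempty_winding`), and `pi_gl` proceeds by steps of two.
-/

open scoped Topology

/-- The target groups of Bott periodicity for the stable homotopy groups of the
unitary groups: `ℤ` if `i` is odd and the trivial group (`ZMod 1`) if `i` is even. -/
def bottUnitaryTarget (i : ℕ) : Type := if i % 2 = 1 then ℤ else ZMod 1

instance bottUnitaryTarget.instAddCommGroup (i : ℕ) : AddCommGroup (bottUnitaryTarget i) := by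
  unfold bottUnitaryTarget; split <;> infer_instance

set_option linter.unusedSectionVars false

/-! ### Homotopy classes of maps of pairs into a group -/

namespace BottP

open Set unitInterval

section Framework

variable {X X' G G' : Type*} [TopologicalSpace X] [TopologicalSpace X']
  [Group G'] [TopologicalSpace G'] [IsTopologicalGroup G']
  [Group G] [TopologicalSpace G] [IsTopologicalGroup G]

/-- The group of continuous maps of pairs `(X, Y) → (G, 1)`. -/
def maps (Y : Set X) (G : Type*) [Group G] [TopologicalSpace G] [IsTopologicalGroup G] :
    Subgroup (X → G) where
  carrier := {f | Continuous f ∧ ∀ y ∈ Y, f y = 1}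
  mul_mem' := by
    rintro a b ⟨ha, ha'⟩ ⟨hb, hb'⟩
    exact ⟨ha.mul hb, fun y hy => by simp [ha' y hy, hb' y hy]⟩
  one_mem' := ⟨continuous_const, fun _ _ => rfl⟩
  inv_mem' := by
    rintro a ⟨ha, ha'⟩
    exact ⟨ha.inv, fun y hy => by simp [ha' y hy]⟩

/-- `Null H Y f`: the map `f` is homotopic to the constant map `1`, relative to `Y`, through
maps with values in the subgroup `H`. -/
def Null (H : Subgroup G) (Y : Set X) (f : X → G) : Prop :=
  ∃ F : X × I → G, Continuous F ∧ (∀ x, F (x, 0) = 1) ∧ (∀ x, F (x, 1) = f x) ∧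
    (∀ y ∈ Y, ∀ t, F (y, t) = 1) ∧ ∀ p, F p ∈ H

/-- The relatively null-homotopic maps form a group. -/
def nulls (H : Subgroup G) (Y : Set X) : Subgroup (X → G) where
  carrier := {f | Null H Y f}
  mul_mem' := by
    rintro a b ⟨F, h1, h2, h3, h4, h5⟩ ⟨F', k1, k2, k3, k4, k5⟩
    exact ⟨F * F', h1.mul k1, fun x => by simp [h2, k2], fun x => by simp [h3, k3],
      fun y hy t => by simp [h4 y hy, k4 y hy], fun p => H.mul_mem (h5 p) (k5 p)⟩
  one_mem' := ⟨1, continuous_const, fun _ => rfl, fun _ => rfl, fun _ _ _ => rfl,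
    fun _ => H.one_mem⟩
  inv_mem' := by
    rintro a ⟨F, h1, h2, h3, h4, h5⟩
    exact ⟨F⁻¹, h1.inv, fun x => by simp [h2], fun x => by simp [h3],
      fun y hy t => by simp [h4 y hy], fun p => H.inv_mem (h5 p)⟩

theorem mem_maps {Y : Set X} {f : X → G} : f ∈ maps Y G ↔ Continuous f ∧ ∀ y ∈ Y, f y = 1 :=
  Iff.rfl

theorem mem_nulls {H : Subgroup G} {Y : Set X} {f : X → G} : f ∈ nulls H Y ↔ Null H Y f := Iff.rfl

theorem Null.mul {H : Subgroup G} {Y : Set X} {f g : X → G} (hf : Null H Y f) (hg : Null H Y g) :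
    Null H Y (f * g) := (nulls H Y).mul_mem hf hg

theorem Null.inv {H : Subgroup G} {Y : Set X} {f : X → G} (hf : Null H Y f) :
    Null H Y f⁻¹ := (nulls H Y).inv_mem hf

theorem Null.one (H : Subgroup G) (Y : Set X) : Null H Y (1 : X → G) := (nulls H Y).one_mem

theorem Null.mono {H H' : Subgroup G} (h : H ≤ H') {Y : Set X} {f : X → G} (hf : Null H Y f) :
    Null H' Y f := by
  obtain ⟨F, h1, h2, h3, h4, h5⟩ := hf
  exact ⟨F, h1, h2, h3, h4, fun p => h (h5 p)⟩

theorem Null.mem_maps {H : Subgroup G} {Y : Set X} {f : X → G} (hf : Null H Y f) :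
    f ∈ maps Y G := by
  obtain ⟨F, h1, h2, h3, h4, h5⟩ := hf
  obtain rfl : (fun x => F (x, 1)) = f := funext h3
  exact ⟨by fun_prop, fun y hy => h4 y hy 1⟩

theorem nulls_le_maps (H : Subgroup G) (Y : Set X) : nulls H Y ≤ maps Y G :=
  fun _ h => Null.mem_maps h

theorem Null.conj {H : Subgroup G} [hn : H.Normal] {Y : Set X} {f g : X → G}
    (hf : Null H Y f) (hg : Continuous g) : Null H Y (g * f * g⁻¹) := by
  obtain ⟨F, h1, h2, h3, h4, h5⟩ := hf
  exact ⟨fun p => g p.1 * F p * (g p.1)⁻¹, by fun_prop, fun x => by simp [h2], fun x => by simp [h3],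
      fun y hy t => by simp [h4 y hy], fun p => hn.conj_mem _ (h5 p) _⟩

theorem Null.map {H : Subgroup G} {H' : Subgroup G'} {Y : Set X} {f : X → G} (hf : Null H Y f)
    (φ : G →* G') (hφ : Continuous φ) (hH : ∀ h ∈ H, φ h ∈ H') :
    Null H' Y (fun x => φ (f x)) := by
  obtain ⟨F, h1, h2, h3, h4, h5⟩ := hf
  exact ⟨fun p => φ (F p), by fun_prop, fun x => by simp [h2], fun x => by simp [h3],
      fun y hy t => by simp [h4 y hy], fun p => hH _ (h5 p)⟩

theorem Null.comp {H : Subgroup G} {Y : Set X} {Y' : Set X'} {f : X → G} (hf : Null H Y f)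
    (θ : X' → X) (hθ : Continuous θ) (hY : ∀ y ∈ Y', θ y ∈ Y) :
    Null H Y' (fun x => f (θ x)) := by
  obtain ⟨F, h1, h2, h3, h4, h5⟩ := hf
  exact ⟨fun p => F (θ p.1, p.2), by fun_prop, fun x => by simp [h2], fun x => by simp [h3],
      fun y hy t => by simp [h4 _ (hY y hy)], fun p => h5 _⟩

theorem Null.subset {H : Subgroup G} {Y Y' : Set X} {f : X → G} (hf : Null H Y f) (h : Y' ⊆ Y) :
    Null H Y' f := hf.comp id continuous_id h

/-- A homotopy relative to `Y`, with values in `H`, makes the quotient of its ends null. -/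
theorem Null.of_homotopy {H : Subgroup G} {Y : Set X} {f g : X → G} (F : X × I → G)
    (hF : Continuous F) (h0 : ∀ x, F (x, 0) = f x) (h1 : ∀ x, F (x, 1) = g x)
    (hY : ∀ y ∈ Y, ∀ t, F (y, t) = F (y, 0)) (hH : ∀ p, F p * (F (p.1, 0))⁻¹ ∈ H) :
    Null H Y (g * f⁻¹) :=
  ⟨fun p => F p * (F (p.1, 0))⁻¹, by fun_prop, fun x => by simp, fun x => by simp [h0, h1],
    fun y hy t => by simp [hY y hy t], hH⟩

theorem Null.of_homotopy_top {Y : Set X} {f g : X → G} (F : X × I → G)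
    (hF : Continuous F) (h0 : ∀ x, F (x, 0) = f x) (h1 : ∀ x, F (x, 1) = g x)
    (hY : ∀ y ∈ Y, ∀ t, F (y, t) = F (y, 0)) : Null (⊤ : Subgroup G) Y (g * f⁻¹) :=
  Null.of_homotopy F hF h0 h1 hY fun _ => trivial

/-- A map in the homotopy class of a null-homotopic map is null-homotopic. -/
theorem Null.of_mul_inv {H : Subgroup G} {Y : Set X} {f g : X → G} (h : Null H Y (g * f⁻¹))
    (hf : Null H Y f) : Null H Y g := by
  simpa using h.mul hf

instance nulls_normal (H : Subgroup G) [H.Normal] (Y : Set X) :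
    ((nulls H Y).subgroupOf (maps Y G)).Normal := by
  constructor
  intro n hn g
  rw [Subgroup.mem_subgroupOf] at hn ⊢
  exact Null.conj hn g.2.1

/-- The group of homotopy classes of maps of pairs `(X, Y) → (G, 1)`. -/
abbrev PiG (Y : Set X) (G : Type*) [Group G] [TopologicalSpace G] [IsTopologicalGroup G] : Type _ :=
  maps Y G ⧸ (nulls (⊤ : Subgroup G) Y).subgroupOf (maps Y G)

/-- The boundary of `X × I` relative to `Y`. -/
def bd (Y : Set X) : Set (X × I) := {p | p.1 ∈ Y ∨ p.2 = 0 ∨ p.2 = 1}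

theorem isClosed_bd {Y : Set X} (hY : IsClosed Y) : IsClosed (bd Y) := by
  have : bd Y = (Prod.fst ⁻¹' Y) ∪ ((Prod.snd ⁻¹' {0}) ∪ (Prod.snd ⁻¹' {1})) := by
    ext p; simp [bd]
  rw [this]
  exact (hY.preimage continuous_fst).union
    ((isClosed_singleton.preimage continuous_snd).union (isClosed_singleton.preimage continuous_snd))

end Framework

/-- Two subquotients linked by a correspondence that is total on both sides and matches the trivial
classes are isomorphic. -/
theorem nonempty_mulEquiv_of_correspondence {Γ Δ : Type*} [Group Γ] [Group Δ]
    (A A0 : Subgroup Γ) (B B0 : Subgroup Δ) [(A0.subgroupOf A).Normal] [(B0.subgroupOf B).Normal]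
    (R : Subgroup (Γ × Δ)) (hA : ∀ p ∈ R, p.1 ∈ A) (hB : ∀ p ∈ R, p.2 ∈ B)
    (tA : ∀ a ∈ A, ∃ b, (a, b) ∈ R) (tB : ∀ b ∈ B, ∃ a, (a, b) ∈ R)
    (h : ∀ p ∈ R, p.1 ∈ A0 ↔ p.2 ∈ B0) :
    Nonempty ((A ⧸ A0.subgroupOf A) ≃* (B ⧸ B0.subgroupOf B)) := by
  let φ : R →* A := ((MonoidHom.fst Γ Δ).comp R.subtype).codRestrict A fun p => hA _ p.2
  let ψ : R →* B := ((MonoidHom.snd Γ Δ).comp R.subtype).codRestrict B fun p => hB _ p.2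
  let φ' := (QuotientGroup.mk' (A0.subgroupOf A)).comp φ
  let ψ' := (QuotientGroup.mk' (B0.subgroupOf B)).comp ψ
  have hφ : Function.Surjective φ' := by
    refine (QuotientGroup.mk'_surjective _).comp fun a => ?_
    obtain ⟨b, hb⟩ := tA a a.2
    exact ⟨⟨_, hb⟩, rfl⟩
  have hψ : Function.Surjective ψ' := by
    refine (QuotientGroup.mk'_surjective _).comp fun b => ?_
    obtain ⟨a, ha⟩ := tB b b.2
    exact ⟨⟨_, ha⟩, rfl⟩
  have hk : φ'.ker = ψ'.ker := by
    ext p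
    have := h p p.2
    simp only [φ', ψ', MonoidHom.mem_ker, MonoidHom.comp_apply, QuotientGroup.mk'_apply,
      QuotientGroup.eq_one_iff, Subgroup.mem_subgroupOf]
    exact this
  exact ⟨(QuotientGroup.quotientKerEquivOfSurjective φ' hφ).symm.trans
    ((QuotientGroup.quotientMulEquivOfEq hk).trans
      (QuotientGroup.quotientKerEquivOfSurjective ψ' hψ))⟩

section Cubes

variable {G : Type*} [Group G] [TopologicalSpace G] [IsTopologicalGroup G]

/-- A generalized loop at `1` as a map of pairs. -/
def toMaps {k : ℕ} (f : GenLoop (Fin k) G 1) : maps (Cube.boundary (Fin k)) G :=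
  ⟨fun x => f x, f.1.continuous, fun y hy => f.2 y hy⟩

/-- Homotopies of loops correspond to null homotopies of the quotient, by multiplying with the
initial loop. -/
theorem homotopic_iff {k : ℕ} (f g : GenLoop (Fin k) G 1) :
    GenLoop.Homotopic f g ↔
      (toMaps f)⁻¹ * toMaps g ∈ (nulls (⊤ : Subgroup G) (Cube.boundary (Fin k))).subgroupOf
        (maps (Cube.boundary (Fin k)) G) := by
  constructor
  · rintro ⟨F⟩
    refine ⟨fun p => (f p.1)⁻¹ * F (p.2, p.1), ?_, fun x => ?_, fun x => ?_, fun y hy t => ?_,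
      fun _ => trivial⟩
    · have : Continuous fun x => f x := f.1.continuous
      fun_prop
    · have := F.apply_zero x
      exact inv_mul_eq_one.2 this.symm
    · have := F.apply_one x
      exact congrArg (fun z => (f x)⁻¹ * z) this
    · have := F.eq_fst t hy
      exact inv_mul_eq_one.2 this.symm
  · rintro ⟨F, h1, h2, h3, h4, -⟩
    have hf : Continuous fun x => f x := f.1.continuous
    refine ⟨⟨⟨⟨fun p => f p.2 * F (p.2, p.1), by fun_prop⟩, fun x => ?_, fun x => ?_⟩,
      fun t x hx => ?_⟩⟩
    · change f x * F (x, 0) = f x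
      simp [h2]
    · change f x * F (x, 1) = g x
      rw [h3]; exact mul_inv_cancel_left _ _
    · change f x * F (x, t) = f x
      simp [h4 x hx]

/-- The homotopy group as a set of classes of maps of pairs. -/
noncomputable def piEquiv (k : ℕ) : (π_ k) G 1 ≃ PiG (Cube.boundary (Fin k)) G :=
  Quotient.congr ⟨toMaps, fun f => ⟨⟨f.1, f.2.1⟩, f.2.2⟩, fun f => rfl, fun f => rfl⟩ (by
    intro f g
    refine (homotopic_iff f g).trans ?_
    exact QuotientGroup.leftRel_apply.symm)

theorem piEquiv_mk (k : ℕ) (f : GenLoop (Fin k) G 1) :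
    piEquiv (G := G) k (Quotient.mk _ f) = QuotientGroup.mk (toMaps f) := rfl

/-- Concatenation of generalized loops agrees with their pointwise product, by the Eckmann-Hilton
argument. -/
theorem piEquiv_mul (j : ℕ) (a b : (π_ (j+1)) G 1) :
    piEquiv (G := G) (j+1) (a * b) = piEquiv (j+1) a * piEquiv (j+1) b := by
  induction a using Quotient.inductionOn with | _ p
  induction b using Quotient.inductionOn with | _ q
  have e1 := HomotopyGroup.mul_spec (N := Fin (j+1)) (i := 0) (p := GenLoop.const) (q := q)
  have e2 := HomotopyGroup.mul_spec (N := Fin (j+1)) (i := 0) (p := p) (q := GenLoop.const)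
  have e3 := HomotopyGroup.mul_spec (N := Fin (j+1)) (i := 0) (p := p) (q := q)
  have o := HomotopyGroup.one_def (N := Fin (j+1)) (X := G) (x := 1)
  have e1' : (Quotient.mk _ (GenLoop.transAt 0 q GenLoop.const) : (π_ (j+1)) G 1) =
      Quotient.mk _ q := by
    refine e1.symm.trans ?_
    let q' : (π_ (j+1)) G 1 := Quotient.mk _ q
    exact (congrArg (fun z : (π_ (j+1)) G 1 => z * q') o.symm).trans (one_mul q')
  have e2' : (Quotient.mk _ (GenLoop.transAt 0 GenLoop.const p) : (π_ (j+1)) G 1) =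
      Quotient.mk _ p := by
    refine e2.symm.trans ?_
    let pc : (π_ (j+1)) G 1 := Quotient.mk _ p
    exact (congrArg (fun z : (π_ (j+1)) G 1 => pc * z) o.symm).trans (mul_one pc)
  -- a concatenation is the pointwise product of the two loops made constant on one half
  have hp : toMaps (GenLoop.transAt 0 q p) =
      toMaps (GenLoop.transAt 0 GenLoop.const p) * toMaps (GenLoop.transAt 0 q GenLoop.const) := by
    ext x
    change GenLoop.transAt 0 q p x = GenLoop.transAt 0 GenLoop.const p x *
      GenLoop.transAt 0 q GenLoop.const x
    simp only [GenLoop.transAt, GenLoop.coe_copy]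
    split_ifs <;> simp [GenLoop.const] 
  refine (congrArg (piEquiv (j+1)) e3).trans ?_
  rw [← e1', ← e2']
  exact congrArg (QuotientGroup.mk) hp

end Cubes
end BottP

/-! ### Lifting homotopies along group actions -/

namespace BottP
open Set unitInterval

/-- Homotopies lift along an action with local sections. Here `s` is a continuous choice, for `w`
near `z`, of a group element moving `z` to `w`. The lift is the product of the local choices along a fine
subdivision of the interval. -/
theorem exists_lift_homotopy {X Z G : Type*} [TopologicalSpace X] [CompactSpace X]
    [TopologicalSpace Z] [Group G] [TopologicalSpace G] [IsTopologicalGroup G]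
    (act : G → Z → Z) (hmul : ∀ g h z, act (g * h) z = act g (act h z)) (hone : ∀ z, act 1 z = z)
    (U : Set (Z × Z)) (hU : IsOpen U) (hdiag : ∀ z, (z, z) ∈ U)
    (s : Z × Z → G) (hs : ContinuousOn s U) (hs1 : ∀ z, s (z, z) = 1)
    (hsact : ∀ z w, (z, w) ∈ U → act (s (z, w)) z = w)
    (h : X × I → Z) (hh : Continuous h) :
    ∃ g : X × I → G, Continuous g ∧ (∀ x, g (x, 0) = 1) ∧
      (∀ x t, act (g (x, t)) (h (x, 0)) = h (x, t)) ∧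
      ∀ x, (∀ t, h (x, t) = h (x, 0)) → ∀ t, g (x, t) = 1 := by
  -- a mesh that works uniformly, by compactness
  obtain ⟨δ, hδ, hδU⟩ : ∃ δ : ℝ, 0 < δ ∧ ∀ x : X, ∀ t t' : I, |(t : ℝ) - t'| < δ →
      (h (x, t), h (x, t')) ∈ U := by
    let W : Set (X × I × I) := {p | (h (p.1, p.2.1), h (p.1, p.2.2)) ∈ U}
    have hW : IsOpen W := hU.preimage (by fun_prop)
    have hc : IsCompact Wᶜ := hW.isClosed_compl.isCompact
    have hcont : Continuous fun p : X × I × I => |(p.2.1 : ℝ) - p.2.2| := by fun_prop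
    rcases (Wᶜ).eq_empty_or_nonempty with he | hne
    · refine ⟨1, one_pos, fun x t t' _ => ?_⟩
      have : (x, t, t') ∈ W := by rw [compl_empty_iff.1 he]; trivial
      exact this
    · obtain ⟨p, hp, hmin⟩ := hc.exists_isMinOn hne hcont.continuousOn
      refine ⟨|(p.2.1 : ℝ) - p.2.2|, ?_, fun x t t' ht => ?_⟩
      · rw [abs_pos, sub_ne_zero]
        intro hE
        apply hp
        have : p.2.1 = p.2.2 := Subtype.ext hE
        change (h (p.1, p.2.1), h (p.1, p.2.2)) ∈ U
        rw [this]; exact hdiag _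
      · by_contra hx
        have : (x, t, t') ∈ Wᶜ := hx
        exact absurd (hmin this) (not_le.2 ht)
  let c : ℕ → I := fun j => projIcc 0 1 zero_le_one (j * (δ / 2))
  have key : ∀ j : ℕ, ∃ g : X × I → G, Continuous g ∧ (∀ x, g (x, 0) = 1) ∧
      (∀ x t, act (g (x, t)) (h (x, 0)) = h (x, min t (c j))) ∧
      ∀ x, (∀ t, h (x, t) = h (x, 0)) → ∀ t, g (x, t) = 1 := by
    intro j
    induction j with
    | zero =>
      refine ⟨1, continuous_const, fun _ => rfl, fun x t => ?_, fun _ _ _ => rfl⟩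
      have : c 0 = 0 := by simp [c]
      rw [this]
      have : min t 0 = 0 := min_eq_right bot_le
      rw [this]; exact hone _
    | succ j ih =>
      obtain ⟨g, g1, g2, g3, g4⟩ := ih
      have hmem : ∀ p : X × I, (h (p.1, min p.2 (c j)), h (p.1, min p.2 (c (j+1)))) ∈ U := by
        intro p
        apply hδU
        have h1 : |((min p.2 (c j) : I) : ℝ) - (min p.2 (c (j+1)) : I)| ≤
            |((c j : I) : ℝ) - (c (j+1) : I)| := by
          have := abs_min_sub_min_le_max (p.2 : ℝ) (c j) p.2 (c (j+1))
          simpa using this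
        have h2 : |((c j : I) : ℝ) - (c (j+1) : I)| ≤ |j * (δ / 2) - (j+1 : ℕ) * (δ/2)| :=
          abs_projIcc_sub_projIcc zero_le_one
        have h3 : |j * (δ / 2) - (j+1 : ℕ) * (δ/2)| = δ / 2 := by
          push_cast
          rw [show j * (δ / 2) - (j+1) * (δ/2) = - (δ/2) by ring, abs_neg, abs_of_pos (by linarith)]
        linarith
      refine ⟨fun p => s (h (p.1, min p.2 (c j)), h (p.1, min p.2 (c (j+1)))) * g p, ?_, fun x => ?_,
        fun x t => ?_, fun x hx t => ?_⟩
      · refine Continuous.mul ?_ g1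
        exact hs.comp_continuous (by fun_prop) hmem
      · have e : ∀ u : I, min 0 u = 0 := fun u => min_eq_left bot_le
        simp [hs1, g2]
      · rw [hmul, g3]
        exact hsact _ _ (hmem (x, t))
      · simp only [g4 x hx, hx (min t _), hs1, mul_one]
  obtain ⟨N, hN⟩ := exists_nat_gt (2 / δ)
  obtain ⟨g, g1, g2, g3, g4⟩ := key N
  refine ⟨g, g1, g2, fun x t => ?_, g4⟩
  have hc : c N = 1 := by
    apply projIcc_of_right_le
    rw [div_lt_iff₀ hδ] at hN
    linarith
  rw [g3, hc]
  congr 2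
  exact min_eq_left t.2.2

end BottP

/-! ### General position -/

namespace BottP
open Set unitInterval

section GeneralPosition

variable {V : Type*} [NormedAddCommGroup V] [NormedSpace ℝ V]

/-- The radial cut-off function `r ↦ clamp (r / δ - 1)`. -/
noncomputable def cutoff (δ : ℝ) (r : ℝ) : ℝ := max 0 (min 1 (r / δ - 1))

theorem continuous_cutoff (δ : ℝ) : Continuous (cutoff δ) := by unfold cutoff; fun_prop

theorem cutoff_of_le {δ r : ℝ} (hδ : 0 < δ) (h : r ≤ δ) : cutoff δ r = 0 := by
  have : r / δ ≤ 1 := (div_le_one hδ).2 h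
  exact max_eq_left ((min_le_right _ _).trans (by linarith))

theorem cutoff_of_ge {δ r : ℝ} (hδ : 0 < δ) (h : 2 * δ ≤ r) : cutoff δ r = 1 := by
  have : 2 ≤ r / δ := by rwa [le_div_iff₀ hδ]
  unfold cutoff
  rw [min_eq_left (by linarith), max_eq_right zero_le_one]

theorem cutoff_nonneg (δ r : ℝ) : 0 ≤ cutoff δ r := le_max_left _ _

theorem cutoff_le_one (δ r : ℝ) : cutoff δ r ≤ 1 := max_le zero_le_one (min_le_left _ _)

/-- The homotopy from the identity to the map collapsing the ball of radius `δ` around `e` to `e`;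
the time `t` is applied to the cut-off. -/
noncomputable def collapse (e : V) (δ t : ℝ) (y : V) : V :=
  e + ((1 - t) + t * cutoff δ ‖y - e‖) • (y - e)

/-- The collapse moves points only inside the ball of radius `2 * δ` around `e`, which misses the
origin. -/
theorem collapse_ne_zero {e : V} {δ t : ℝ} (hδ : 0 < δ) (he : 2 * δ < ‖e‖) (ht0 : 0 ≤ t)
    (ht1 : t ≤ 1) {y : V} (hy : y ≠ 0) : collapse e δ t y ≠ 0 := by
  rcases le_or_gt (2 * δ) ‖y - e‖ with h | h
  · simpa [collapse, cutoff_of_ge hδ h] using hy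
  · intro h0
    have h1 := cutoff_nonneg δ ‖y - e‖
    have h2 := cutoff_le_one δ ‖y - e‖
    have h3 : 0 ≤ (1 - t) + t * cutoff δ ‖y - e‖ := by nlinarith
    have h4 : (1 - t) + t * cutoff δ ‖y - e‖ ≤ 1 := by nlinarith
    have : ‖e‖ = ‖((1 - t) + t * cutoff δ ‖y - e‖) • (y - e)‖ := by
      rw [← norm_neg e]; congr 1; exact neg_eq_of_add_eq_zero_right h0
    rw [norm_smul, Real.norm_of_nonneg h3] at this
    nlinarith [norm_nonneg (y - e)]

theorem collapse_one_of_le {e : V} {δ : ℝ} (hδ : 0 < δ) {y : V} (hy : ‖y - e‖ ≤ δ) :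
    collapse e δ 1 y = e := by
  simp [collapse, cutoff_of_le hδ hy]

theorem collapse_zero (e : V) (δ : ℝ) (y : V) : collapse e δ 0 y = y := by simp [collapse]

theorem collapse_self (e : V) (δ t : ℝ) : collapse e δ t e = e := by simp [collapse]

theorem Continuous.collapse {W : Type*} [TopologicalSpace W] (e : V) (δ : ℝ) {t : W → ℝ} {y : W → V}
    (ht : Continuous t) (hy : Continuous y) : Continuous fun w => collapse e δ (t w) (y w) := by
  have := continuous_cutoff δ
  unfold BottP.collapse
  fun_prop

/-- General position: a map from a compact space of dimension `< dim V - 1` to `V ∖ 0` contracts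
to a constant, relative to any set on which it already is that constant. The map is replaced by a
smooth approximation `w`; the cone over the image of `w` has empty interior, so segments towards a
generic point `q` near `e` avoid the origin. Collapsing a neighbourhood of `e` to `e` makes this
homotopy relative. -/
theorem exists_contraction [FiniteDimensional ℝ V] {X E : Type*} [TopologicalSpace X]
    [CompactSpace X] [NormedAddCommGroup E] [NormedSpace ℝ E] [FiniteDimensional ℝ E]
    (j : X → E) (hj : Continuous j) (hinj : Function.Injective j)
    (hdim : Module.finrank ℝ E + 1 < Module.finrank ℝ V)
    (A : Set X) (e : V) (he : e ≠ 0) (v : X → V) (hv : Continuous v) (hv0 : ∀ x, v x ≠ 0)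
    (hA : ∀ x ∈ A, v x = e) :
    ∃ h : X × I → V, Continuous h ∧ (∀ x, h (x, 0) = v x) ∧ (∀ x, h (x, 1) = e) ∧
      (∀ p, h p ≠ 0) ∧ ∀ x ∈ A, ∀ t, h (x, t) = e := by
  obtain ⟨δ, hδ, hδe, hδv⟩ : ∃ δ : ℝ, 0 < δ ∧ 2 * δ < ‖e‖ ∧ ∀ x, δ < ‖v x‖ := by
    have he' : 0 < ‖e‖ := norm_pos_iff.2 he
    rcases isEmpty_or_nonempty X with hX | hX
    · exact ⟨‖e‖ / 3, by positivity, by linarith, fun x => (hX.false x).elim⟩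
    · obtain ⟨x₀, -, hx₀⟩ := isCompact_univ.exists_isMinOn univ_nonempty hv.norm.continuousOn
      have h0 : 0 < ‖v x₀‖ := norm_pos_iff.2 (hv0 x₀)
      refine ⟨min (‖e‖ / 3) (‖v x₀‖ / 2), by positivity, ?_, fun x => ?_⟩
      · have := min_le_left (‖e‖ / 3) (‖v x₀‖ / 2); linarith
      · have := min_le_right (‖e‖ / 3) (‖v x₀‖ / 2)
        have h2 : ‖v x₀‖ ≤ ‖v x‖ := hx₀ (mem_univ x)
        linarith
  have hcl : Topology.IsClosedEmbedding j := hj.isClosedEmbedding hinj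
  obtain ⟨v', hv'⟩ := ContinuousMap.exists_extension' hcl (⟨v, hv⟩ : C(X, V))
  obtain ⟨w, hw, hwv, -⟩ := v'.continuous.exists_contDiff_approx 1 (ε := fun _ => δ)
    continuous_const (fun _ => hδ)
  have hwv' : ∀ x, ‖w (j x) - v x‖ < δ := fun x => by
    have := hwv (j x)
    rwa [dist_eq_norm, show v' (j x) = v x from congrFun hv' x] at this
  -- a point near `e` off the cone over the smooth approximation
  obtain ⟨q, hq, hqe⟩ : ∃ q : V, q ∉ range (fun p : ℝ × E => p.1 • w p.2) ∧ ‖q - e‖ < δ := by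
    have hd : Dense (range (fun p : ℝ × E => p.1 • w p.2))ᶜ := by
      apply ContDiff.dense_compl_range_of_finrank_lt_finrank
      · exact contDiff_fst.smul (hw.comp contDiff_snd)
      · rw [Module.finrank_prod, Module.finrank_self]; omega
    obtain ⟨q, hq, hq'⟩ := hd.exists_dist_lt e hδ
    exact ⟨q, hq, by rwa [← dist_eq_norm, dist_comm]⟩
  have hw0 : ∀ x, ∀ t : ℝ, 0 ≤ t → t ≤ 1 → (1 - t) • v x + t • w (j x) ≠ 0 := by
    intro x t ht0 ht1 h0
    have h1 : v x = t • (v x - w (j x)) := by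
      have : v x - t • (v x - w (j x)) = 0 := by rw [← h0]; module
      exact sub_eq_zero.1 this
    have h2 : ‖v x‖ ≤ ‖v x - w (j x)‖ := by
      conv_lhs => rw [h1, norm_smul, Real.norm_of_nonneg ht0]
      nlinarith [norm_nonneg (v x - w (j x))]
    have := hwv' x
    rw [norm_sub_rev] at this
    linarith [hδv x]
  have hq0 : ∀ x, ∀ t : ℝ, 0 ≤ t → t ≤ 1 → (1 - t) • w (j x) + t • q ≠ 0 := by
    intro x t ht0 ht1 h0
    rcases eq_or_ne t 0 with rfl | ht
    · have := hw0 x 1 zero_le_one le_rfl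
      simp at h0 this
      exact this h0
    · apply hq
      refine ⟨(- ((1 - t) / t), j x), ?_⟩
      have : t • q = -((1 - t) • w (j x)) := by rw [eq_neg_iff_add_eq_zero, add_comm]; exact h0
      calc (-((1 - t) / t)) • w (j x) = t⁻¹ • (-((1 - t) • w (j x))) := by
            rw [← smul_neg, smul_smul, neg_smul, smul_neg]; congr 2; ring
        _ = q := by rw [← this, smul_smul, inv_mul_cancel₀ ht, one_smul]
  have hwj : Continuous fun x => w (j x) := hw.continuous.comp hj
  let P : C(X, V) → Prop := fun f => (∀ x, f x ≠ 0) ∧ ∀ x ∈ A, f x = e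
  let f0 : C(X, V) := ⟨v, hv⟩
  let f1 : C(X, V) := ⟨fun x => collapse e δ 1 (v x), Continuous.collapse e δ continuous_const hv⟩
  let f2 : C(X, V) := ⟨fun x => collapse e δ 1 (w (j x)), Continuous.collapse e δ continuous_const hwj⟩
  let f3 : C(X, V) := ⟨fun _ => e, continuous_const⟩
  have H1 : f0.HomotopicWith f1 P := by
    refine ⟨⟨⟨⟨fun p => collapse e δ p.1 (v p.2), Continuous.collapse e δ (by fun_prop) (by fun_prop)⟩,
      fun x => ?_, fun x => ?_⟩, fun t => ⟨fun x => ?_, fun x hx => ?_⟩⟩⟩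
    · exact collapse_zero e δ (v x)
    · rfl
    · exact collapse_ne_zero hδ hδe t.2.1 t.2.2 (hv0 x)
    · change collapse e δ t (v x) = e
      rw [hA x hx, collapse_self]
  have H2 : f1.HomotopicWith f2 P := by
    refine ⟨⟨⟨⟨fun p => collapse e δ 1 ((1 - (p.1 : ℝ)) • v p.2 + (p.1 : ℝ) • w (j p.2)),
      Continuous.collapse e δ (by fun_prop) (by fun_prop)⟩,
      fun x => ?_, fun x => ?_⟩, fun t => ⟨fun x => ?_, fun x hx => ?_⟩⟩⟩
    · simp [f1]
    · simp [f2]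
    · exact collapse_ne_zero hδ hδe zero_le_one le_rfl (hw0 x t t.2.1 t.2.2)
    · apply collapse_one_of_le hδ
      have h1 : (1 - (t : ℝ)) • v x + (t : ℝ) • w (j x) - e = (t : ℝ) • (w (j x) - v x) := by
        rw [hA x hx]; module
      have ht := t.2.2
      have ht' := t.2.1
      change ‖(1 - (t : ℝ)) • v x + (t : ℝ) • w (j x) - e‖ ≤ δ
      rw [h1, norm_smul, Real.norm_of_nonneg ht']
      nlinarith [hwv' x, norm_nonneg (w (j x) - v x)]
  have H3 : f2.HomotopicWith f3 P := by
    refine ⟨⟨⟨⟨fun p => collapse e δ 1 ((1 - (p.1 : ℝ)) • w (j p.2) + (p.1 : ℝ) • q),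
      Continuous.collapse e δ (by fun_prop) (by fun_prop)⟩,
      fun x => ?_, fun x => ?_⟩, fun t => ⟨fun x => ?_, fun x hx => ?_⟩⟩⟩
    · simp [f2]
    · have : collapse e δ 1 q = e := collapse_one_of_le hδ hqe.le
      simpa [f3] using this
    · exact collapse_ne_zero hδ hδe zero_le_one le_rfl (hq0 x t t.2.1 t.2.2)
    · apply collapse_one_of_le hδ
      have h1 : (1 - (t : ℝ)) • w (j x) + (t : ℝ) • q - e =
          (1 - (t : ℝ)) • (w (j x) - e) + (t : ℝ) • (q - e) := by module
      have ht := t.2.2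
      have ht' := t.2.1
      have h2 : ‖w (j x) - e‖ ≤ δ := by have := hwv' x; rw [hA x hx] at this; exact this.le
      change ‖(1 - (t : ℝ)) • w (j x) + (t : ℝ) • q - e‖ ≤ δ
      rw [h1]
      refine (norm_add_le _ _).trans ?_
      rw [norm_smul, norm_smul, Real.norm_of_nonneg ht', Real.norm_of_nonneg (by linarith)]
      nlinarith
  obtain ⟨H⟩ := (H1.trans H2).trans H3
  refine ⟨fun p => H (p.2, p.1), by fun_prop, fun x => H.apply_zero x, fun x => H.apply_one x,
    fun p => (H.prop' p.2).1 p.1, fun x hx t => (H.prop' t).2 x hx⟩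

end GeneralPosition
end BottP

/-! ### Units, padding and stabilization of general linear groups -/

namespace BottP
open Set unitInterval Matrix

section UnitsOne

variable {A B C : Type*} [Ring A] [Ring B] [Ring C]

/-- The group homomorphism `1 + a ↦ 1 + φ a` on units induced by a non-unital ring homomorphism. -/
def unitsOne (φ : A →ₙ+* B) : Aˣ →* Bˣ where
  toFun u := ⟨1 + φ (u - 1), 1 + φ ((u⁻¹ : Aˣ) - 1), by
      have : φ (((u : A) - 1) * ((u⁻¹ : Aˣ) - 1)) = φ (1 + 1 - u - (u⁻¹ : Aˣ)) := by
        congr 1; rw [sub_mul, mul_sub, Units.mul_inv]; noncomm_ring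
      rw [map_mul] at this
      rw [add_mul, mul_add, mul_add, this, one_mul, one_mul, mul_one, add_assoc]
      simp only [← map_add]
      rw [show (u⁻¹ : Aˣ) - 1 + ((u : A) - 1 + (1 + 1 - u - (u⁻¹ : Aˣ))) = (0 : A) by abel]
      simp, by
      have : φ (((u⁻¹ : Aˣ) - 1) * ((u : A) - 1)) = φ (1 + 1 - u - (u⁻¹ : Aˣ)) := by
        congr 1; rw [sub_mul, mul_sub, Units.inv_mul]; noncomm_ring
      rw [map_mul] at this
      rw [add_mul, mul_add, mul_add, this, one_mul, one_mul, mul_one, add_assoc]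
      simp only [← map_add]
      rw [show (u : A) - 1 + ((u⁻¹ : Aˣ) - 1 + (1 + 1 - u - (u⁻¹ : Aˣ))) = (0 : A) by abel]
      simp⟩
  map_one' := by ext; simp
  map_mul' u v := by
    ext
    simp only [Units.val_mul]
    have : φ (((u : A) - 1) * (v - 1)) = φ (u * v - u - v + 1) := by
      congr 1; noncomm_ring
    rw [map_mul] at this
    rw [add_mul, mul_add, mul_add, this, one_mul, one_mul, mul_one, add_assoc]
    simp only [← map_add]
    congr 2
    abel

theorem val_unitsOne (φ : A →ₙ+* B) (u : Aˣ) : (unitsOne φ u : B) = 1 + φ (u - 1) := rfl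

theorem val_inv_unitsOne (φ : A →ₙ+* B) (u : Aˣ) :
    (((unitsOne φ u)⁻¹ : Bˣ) : B) = 1 + φ ((u⁻¹ : Aˣ) - 1) := rfl

theorem continuous_unitsOne [TopologicalSpace A] [TopologicalSpace B] [IsTopologicalRing A]
    [IsTopologicalRing B] (φ : A →ₙ+* B) (hφ : Continuous φ) : Continuous (unitsOne φ) := by
  rw [Units.continuous_iff]
  constructor
  · change Continuous fun u : Aˣ => 1 + φ (u - 1)
    have : Continuous fun u : Aˣ => (u : A) := Units.continuous_val
    fun_prop
  · change Continuous fun u : Aˣ => 1 + φ ((u⁻¹ : Aˣ) - 1)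
    have : Continuous fun u : Aˣ => ((u⁻¹ : Aˣ) : A) := Units.continuous_val.comp continuous_inv
    fun_prop

theorem unitsOne_injective (φ : A →ₙ+* B) (hφ : Function.Injective φ) :
    Function.Injective (unitsOne φ) := by
  intro u v h
  have := congrArg Units.val h
  rw [val_unitsOne, val_unitsOne, add_right_inj] at this
  exact Units.ext (sub_left_injective (hφ this))

/-- A family of units `1 + φ a` for a corner embedding `φ` comes from a family of units `1 + a`. -/
theorem exists_corner_lift {X : Type*} [TopologicalSpace X] [TopologicalSpace A]
    [TopologicalSpace B] [IsTopologicalRing A] [IsTopologicalRing B] (φ : A →ₙ+* B) (c : B →+ A)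
    (hcφ : ∀ a, c (φ a) = a) (hc : Continuous c)
    (hcorner : ∀ a b a', φ a * b * φ a' = φ (a * c b * a'))
    (f : X → Bˣ) (hf : Continuous f) (hfφ : ∀ x, ∃ a, (f x : B) = 1 + φ a) :
    ∃ g : X → Aˣ, Continuous g ∧ ∀ x, unitsOne φ (g x) = f x := by
  have hinj : Function.Injective φ := fun a b h => by rw [← hcφ a, h, hcφ]
  have h1 : ∀ x, φ (c (f x - 1)) = f x - 1 := fun x => by
    obtain ⟨a, ha⟩ := hfφ x
    rw [ha, add_sub_cancel_left, hcφ]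
  have h2 : ∀ x, φ (c (((f x)⁻¹ : Bˣ) - 1)) = ((f x)⁻¹ : Bˣ) - 1 := fun x => by
    obtain ⟨a, ha⟩ := hfφ x
    have e : (((f x)⁻¹ : Bˣ) : B) - 1 = φ (-a + a * a + a * c (((f x)⁻¹ : Bˣ) - 1) * a) := by
      set u := f x
      have ha' : φ a = u - 1 := by rw [ha]; abel
      rw [map_add, map_add, ← hcorner, map_neg, map_mul, ha']
      have e1 : (u : B) * (u⁻¹ : Bˣ) = 1 := Units.mul_inv u
      have e2 : ((u⁻¹ : Bˣ) : B) * u = 1 := Units.inv_mul u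
      have e3 : ((u : B) - 1) * ((u⁻¹ : Bˣ) - 1) * (u - 1) =
        ((u : B) * (u⁻¹ : Bˣ)) * u - u * (u⁻¹ : Bˣ) - ((u⁻¹ : Bˣ) : B) * u + (u⁻¹ : Bˣ)
          - (u * u - u - u + 1) := by noncomm_ring
      rw [e3, e1, e2]
      noncomm_ring
    rw [e, hcφ]
  have hv : Continuous fun x => (f x : B) := Units.continuous_val.comp hf
  have hi : Continuous fun x => (((f x)⁻¹ : Bˣ) : B) := Units.continuous_val.comp hf.inv
  have aux : ∀ p q r : A, p + q + r = 0 → 1 + q + (p + r) = 1 := by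
    intro p q r h
    have : 1 + q + (p + r) = 1 + (p + q + r) := by abel
    rw [this, h, add_zero]
  have m1 : ∀ x, (1 + c (f x - 1)) * (1 + c (((f x)⁻¹ : Bˣ) - 1)) = 1 := fun x => by
    have : c (f x - 1) + c (((f x)⁻¹ : Bˣ) - 1) + c (f x - 1) * c (((f x)⁻¹ : Bˣ) - 1) = 0 := by
      apply hinj
      rw [map_add, map_add, map_mul, h1, h2, map_zero, sub_mul, mul_sub, Units.mul_inv]
      noncomm_ring
    rw [add_mul, mul_add, mul_add, one_mul, one_mul, mul_one]
    exact aux _ _ _ this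
  have m2 : ∀ x, (1 + c (((f x)⁻¹ : Bˣ) - 1)) * (1 + c (f x - 1)) = 1 := fun x => by
    have : c (f x - 1) + c (((f x)⁻¹ : Bˣ) - 1) + c (((f x)⁻¹ : Bˣ) - 1) * c (f x - 1) = 0 := by
      apply hinj
      rw [map_add, map_add, map_mul, h1, h2, map_zero, sub_mul, mul_sub, Units.inv_mul]
      noncomm_ring
    rw [add_mul, mul_add, mul_add, one_mul, one_mul, mul_one]
    exact aux _ _ _ (by rw [← this]; abel)
  refine ⟨fun x => ⟨1 + c (f x - 1), 1 + c (((f x)⁻¹ : Bˣ) - 1), m1 x, m2 x⟩, ?_, fun x => ?_⟩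
  · rw [Units.continuous_iff]
    constructor
    · change Continuous fun x => 1 + c (f x - 1)
      fun_prop
    · change Continuous fun x => 1 + c (((f x)⁻¹ : Bˣ) - 1)
      fun_prop
  · ext
    rw [val_unitsOne]
    change 1 + φ (1 + c (f x - 1) - 1) = _
    rw [add_sub_cancel_left, h1, add_sub_cancel]

end UnitsOne

section Pad

variable {α β γ : Type*} [Fintype α] [Fintype β] [Fintype γ] [DecidableEq α] [DecidableEq β]
  [DecidableEq γ] (R : Type*) [Ring R]

/-- The `0/1` matrix of an injection. -/
def incl (e : α ↪ β) : Matrix β α R := Matrix.of fun b a => if b = e a then 1 else 0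

theorem transpose_incl_mul_incl (e : α ↪ β) : (incl R e)ᵀ * incl R e = 1 := by
  ext i j
  simp [incl, Matrix.mul_apply, Matrix.one_apply, e.injective.eq_iff, eq_comm]

theorem incl_trans (e : α ↪ β) (e' : β ↪ γ) : incl R (e.trans e') = incl R e' * incl R e := by
  ext i j
  simp [incl, Matrix.mul_apply]

theorem incl_refl : incl R (Function.Embedding.refl α) = 1 := by
  ext i j
  simp [incl, Matrix.one_apply]

theorem transpose_incl_trans (e : α ↪ β) (e' : β ↪ γ) :
    (incl R (e.trans e'))ᵀ = (incl R e)ᵀ * (incl R e')ᵀ := by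
  ext i j
  simp only [incl, Matrix.mul_apply, Matrix.transpose_apply, Matrix.of_apply, ite_mul, one_mul,
    zero_mul, Finset.sum_ite_eq', Finset.mem_univ, if_true,
    Function.Embedding.trans_apply]

variable {R}

/-- Extension of a matrix by zero along an injection of index sets. -/
def pad (e : α ↪ β) : Matrix α α R →ₙ+* Matrix β β R where
  toFun a := incl R e * a * (incl R e)ᵀ
  map_mul' a b := by
    calc incl R e * (a * b) * (incl R e)ᵀ
        = incl R e * a * (1 : Matrix α α R) * b * (incl R e)ᵀ := by simp [Matrix.mul_assoc]
      _ = _ := by rw [← transpose_incl_mul_incl R e]; simp only [Matrix.mul_assoc]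
  map_zero' := by simp
  map_add' a b := by simp [Matrix.mul_add, Matrix.add_mul]

theorem pad_def (e : α ↪ β) (a : Matrix α α R) : pad e a = incl R e * a * (incl R e)ᵀ := rfl

/-- Restriction of a matrix to the indices in the image of an injection. -/
def unpad (e : α ↪ β) : Matrix β β R →+ Matrix α α R where
  toFun b := (incl R e)ᵀ * b * incl R e
  map_zero' := by simp
  map_add' a b := by simp [Matrix.mul_add, Matrix.add_mul]

theorem unpad_pad (e : α ↪ β) (a : Matrix α α R) : unpad e (pad e a) = a := by
  change (incl R e)ᵀ * (incl R e * a * (incl R e)ᵀ) * incl R e = a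
  calc _ = ((incl R e)ᵀ * incl R e) * a * ((incl R e)ᵀ * incl R e) := by
        simp only [Matrix.mul_assoc]
    _ = a := by simp [transpose_incl_mul_incl]

theorem pad_mul_pad (e : α ↪ β) (a a' : Matrix α α R) (b : Matrix β β R) :
    pad e a * b * pad e a' = pad e (a * unpad e b * a') := by
  change incl R e * a * (incl R e)ᵀ * b * (incl R e * a' * (incl R e)ᵀ) =
    incl R e * (a * ((incl R e)ᵀ * b * incl R e) * a') * (incl R e)ᵀ
  simp only [Matrix.mul_assoc]

theorem pad_trans (e : α ↪ β) (e' : β ↪ γ) (a : Matrix α α R) :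
    pad (e.trans e') a = pad e' (pad e a) := by
  rw [pad_def, pad_def, pad_def, transpose_incl_trans, incl_trans]
  simp only [Matrix.mul_assoc]

theorem pad_refl (a : Matrix α α R) : pad (Function.Embedding.refl α) a = a := by
  simp [pad_def, incl_refl]

theorem continuous_pad [TopologicalSpace R] [IsTopologicalRing R] (e : α ↪ β) :
    Continuous (pad e : Matrix α α R →ₙ+* Matrix β β R) := by
  change Continuous fun a : Matrix α α R => incl R e * a * (incl R e)ᵀ
  fun_prop

theorem continuous_unpad [TopologicalSpace R] [IsTopologicalRing R] (e : α ↪ β) :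
    Continuous (unpad e : Matrix β β R →+ Matrix α α R) := by
  change Continuous fun a : Matrix β β R => (incl R e)ᵀ * a * incl R e
  fun_prop

theorem incl_map {R' : Type*} [Ring R'] (φ : R →+* R') (e : α ↪ β) :
    (incl R e).map φ = incl R' e := by
  ext i j
  simp only [incl, Matrix.map_apply, Matrix.of_apply]
  split_ifs <;> simp

theorem pad_map {R' : Type*} [Ring R'] (φ : R →+* R') (e : α ↪ β) (a : Matrix α α R) :
    (pad e a).map φ = pad e (a.map φ) := by
  simp only [pad_def, Matrix.map_mul, incl_map, Matrix.transpose_map]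

theorem pad_apply_self (e : α ↪ β) (a : Matrix α α R) (i j : α) : pad e a (e i) (e j) = a i j := by
  simp [pad_def, incl, Matrix.mul_apply]

theorem pad_apply_left (e : α ↪ β) (a : Matrix α α R) (i j : β) (hi : ∀ k, i ≠ e k) :
    pad e a i j = 0 := by
  simp [pad_def, incl, Matrix.mul_apply, hi]

theorem pad_apply_right (e : α ↪ β) (a : Matrix α α R) (i j : β) (hj : ∀ k, j ≠ e k) :
    pad e a i j = 0 := by
  simp [pad_def, incl, Matrix.mul_apply, hj]

/-- General linear groups over a ring. -/
abbrev GLR (α : Type*) [Fintype α] [DecidableEq α] (R : Type*) [Ring R] := (Matrix α α R)ˣ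

/-- Stabilization of general linear groups along an injection of index sets. -/
def st (e : α ↪ β) : GLR α R →* GLR β R := unitsOne (pad e)

theorem st_injective (e : α ↪ β) : Function.Injective (st e : GLR α R →* GLR β R) :=
  unitsOne_injective _ fun a b h => by rw [← unpad_pad e a, h, unpad_pad]

theorem continuous_st [TopologicalSpace R] [IsTopologicalRing R] (e : α ↪ β) :
    Continuous (st e : GLR α R →* GLR β R) := continuous_unitsOne _ (continuous_pad e)

theorem st_trans (e : α ↪ β) (e' : β ↪ γ) (a : GLR α R) : st (e.trans e') a = st e' (st e a) := by
  ext1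
  simp only [st, val_unitsOne, pad_trans, add_sub_cancel_left]

theorem st_refl (a : GLR α R) : st (Function.Embedding.refl α) a = a := by
  ext1
  simp only [st, val_unitsOne, pad_refl, add_sub_cancel]

/-- The map of general linear groups induced by a ring homomorphism. -/
def mapGL {R' : Type*} [Ring R'] (φ : R →+* R') : GLR α R →* GLR α R' :=
  Units.map (φ.mapMatrix : Matrix α α R →+* Matrix α α R').toMonoidHom

theorem val_mapGL {R' : Type*} [Ring R'] (φ : R →+* R') (a : GLR α R) :
    (mapGL φ a : Matrix α α R') = (a : Matrix α α R).map φ := rfl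

theorem continuous_mapGL {R' : Type*} [Ring R'] [TopologicalSpace R] [TopologicalSpace R']
    (φ : R →+* R') (hφ : Continuous φ) : Continuous (mapGL φ : GLR α R →* GLR α R') :=
  Continuous.units_map _ (by
    change Continuous fun a : Matrix α α R => a.map φ
    exact continuous_id.matrix_map hφ)

theorem mapGL_st {R' : Type*} [Ring R'] (φ : R →+* R') (e : α ↪ β) (a : GLR α R) :
    mapGL φ (st e a) = st e (mapGL φ a) := by
  ext1
  simp only [st, val_unitsOne, val_mapGL]
  have h1 : ∀ M N : Matrix β β R, (M + N).map φ = M.map φ + N.map φ := fun M N => by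
    ext; simp
  have h2 : ∀ M N : Matrix α α R, (M - N).map φ = M.map φ - N.map φ := fun M N => by
    ext; simp
  have h3 : (pad e ((a : Matrix α α R) - 1)).map φ = (pad e ((a : Matrix α α R).map φ - 1)) := by
    rw [pad_map, h2, Matrix.map_one _ (map_zero _) (map_one _)]
  rw [h1, Matrix.map_one _ (map_zero _) (map_one _), h3]

end Pad

end BottP

/-! ### Matrices moving vectors -/

namespace BottP
open Set unitInterval Matrix

section UnitsTopology

attribute [local instance] Matrix.linftyOpNormedRing in
/-- The topology of the unit group is the one induced from the matrices, and units are open. The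
matrix algebra is given a complete norm for this purpose. -/
theorem isOpenEmbedding_val_GLR (α : Type*) [Fintype α] [DecidableEq α] (R : Type*) [NormedRing R]
    [CompleteSpace R] : Topology.IsOpenEmbedding (Units.val : GLR α R → Matrix α α R) := by
  have : @CompleteSpace (Matrix α α R) (Matrix.linftyOpNormedRing :
      NormedRing (Matrix α α R)).toMetricSpace.toUniformSpace :=
    (inferInstance : @CompleteSpace (Matrix α α R) (Matrix.instUniformSpace α α R))
  exact Units.isOpenEmbedding_val

variable {α : Type*} [Fintype α] [DecidableEq α]

/-- A family of invertible matrices over a Banach algebra as a continuous family of units. -/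
theorem exists_units_lift {R : Type*} [NormedRing R] [CompleteSpace R] {X : Type*}
    [TopologicalSpace X] (f : X → Matrix α α R) (hf : Continuous f) (hu : ∀ x, IsUnit (f x)) :
    ∃ g : X → GLR α R, Continuous g ∧ ∀ x, (g x : Matrix α α R) = f x := by
  choose g hg using hu
  exact ⟨g, (isOpenEmbedding_val_GLR α R).isEmbedding.continuous_iff.2 (by
    rwa [show Units.val ∘ g = f from funext hg]), hg⟩

end UnitsTopology

section Straighten

variable {α : Type*} [Fintype α] [DecidableEq α]

open scoped ComplexOrder in
theorem star_dotProduct_self_ne_zero {v : α → ℂ} (hv : v ≠ 0) : star v ⬝ᵥ v ≠ 0 := fun h =>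
  hv (dotProduct_star_self_eq_zero.1 h)

/-- The rank one perturbation of the identity taking `v` to `w`. -/
noncomputable def moveMat (v w : α → ℂ) : Matrix α α ℂ :=
  1 + Matrix.vecMulVec ((star v ⬝ᵥ v)⁻¹ • (w - v)) (star v)

theorem moveMat_mulVec {v w : α → ℂ} (hv : v ≠ 0) : moveMat v w *ᵥ v = w := by
  have h0 := star_dotProduct_self_ne_zero hv
  unfold moveMat
  rw [Matrix.add_mulVec, Matrix.one_mulVec, Matrix.vecMulVec_mulVec]
  ext i
  simp
  field_simp
  ring

theorem isUnit_moveMat {v w : α → ℂ} (hv : v ≠ 0) (h : star v ⬝ᵥ w ≠ 0) :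
    IsUnit (moveMat v w) := by
  have h0 := star_dotProduct_self_ne_zero hv
  rw [Matrix.isUnit_iff_isUnit_det, isUnit_iff_ne_zero]
  unfold moveMat
  rw [Matrix.vecMulVec_eq Unit, Matrix.det_one_add_replicateCol_mul_replicateRow]
  rw [dotProduct_smul, dotProduct_sub, smul_eq_mul]
  have : 1 + (star v ⬝ᵥ v)⁻¹ * (star v ⬝ᵥ w - star v ⬝ᵥ v) = (star v ⬝ᵥ v)⁻¹ * (star v ⬝ᵥ w) := by
    field_simp; ring
  rw [this]
  exact mul_ne_zero (inv_ne_zero h0) h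

/-- A homotopy of nonzero vectors is followed by a homotopy of invertible matrices. -/
theorem exists_matrix_homotopy {X : Type*} [TopologicalSpace X] [CompactSpace X]
    (h : X × I → α → ℂ) (hh : Continuous h) (h0 : ∀ p, h p ≠ 0) :
    ∃ g : X × I → GLR α ℂ, Continuous g ∧ (∀ x, g (x, 0) = 1) ∧
      (∀ x t, (g (x, t) : Matrix α α ℂ) *ᵥ (h (x, 0)) = h (x, t)) ∧
      ∀ x, (∀ t, h (x, t) = h (x, 0)) → ∀ t, g (x, t) = 1 := by
  classical
  let Z := {v : α → ℂ // v ≠ 0}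
  have hne : ∀ (u : GLR α ℂ) (z : α → ℂ), z ≠ 0 → (u : Matrix α α ℂ) *ᵥ z ≠ 0 := by
    intro u z hz h
    apply hz
    have := congrArg (fun y => ((u⁻¹ : GLR α ℂ) : Matrix α α ℂ) *ᵥ y) h
    simpa [Matrix.mulVec_mulVec] using this
  let act : GLR α ℂ → Z → Z := fun u z => ⟨(u : Matrix α α ℂ) *ᵥ z.1, hne u z.1 z.2⟩
  let U : Set (Z × Z) := {p | star p.1.1 ⬝ᵥ p.2.1 ≠ 0}
  have hU : IsOpen U := by
    have c1 : Continuous fun p : Z × Z => p.1.1 := continuous_subtype_val.comp continuous_fst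
    have c2 : Continuous fun p : Z × Z => p.2.1 := continuous_subtype_val.comp continuous_snd
    have : Continuous fun p : Z × Z => star p.1.1 ⬝ᵥ p.2.1 := c1.star.dotProduct c2
    exact isOpen_ne.preimage this
  let s : Z × Z → GLR α ℂ := fun p => if hp : p ∈ U then (isUnit_moveMat p.1.2 hp).unit else 1
  have hsv : ∀ p ∈ U, (s p : Matrix α α ℂ) = moveMat p.1.1 p.2.1 := fun p hp => by
    simp only [s, dif_pos hp, IsUnit.unit_spec]
  have hd0 : ∀ z : Z, star z.1 ⬝ᵥ z.1 ≠ 0 := fun z =>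
    star_dotProduct_self_ne_zero z.2
  obtain ⟨g, g1, g2, g3, g4⟩ := exists_lift_homotopy act
    (fun u v z => Subtype.ext (by simp [act, Matrix.mulVec_mulVec]))
    (fun z => Subtype.ext (by simp [act])) U hU hd0 s (by
      rw [(isOpenEmbedding_val_GLR α ℂ).isEmbedding.continuousOn_iff]
      have : Continuous fun p : Z × Z => moveMat p.1.1 p.2.1 := by
        have c1 : Continuous fun p : Z × Z => p.1.1 := continuous_subtype_val.comp continuous_fst
        have c2 : Continuous fun p : Z × Z => p.2.1 := continuous_subtype_val.comp continuous_snd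
        unfold moveMat
        have h1 : Continuous fun p : Z × Z => (star p.1.1 ⬝ᵥ p.1.1)⁻¹ := by
          exact Continuous.inv₀ (c1.star.dotProduct c1) fun p => hd0 _
        exact continuous_const.add (Continuous.matrix_vecMulVec (h1.smul (c2.sub c1)) c1.star)
      exact this.continuousOn.congr fun p hp => hsv p hp)
    (fun z => by
      ext1
      rw [hsv _ (hd0 z)]
      simp [moveMat])
    (fun z w hzw => Subtype.ext (by
      change (s (z, w) : Matrix α α ℂ) *ᵥ z.1 = w.1
      rw [hsv _ hzw]
      exact moveMat_mulVec z.2))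
    (fun p => ⟨h p, h0 p⟩) (by fun_prop)
  exact ⟨g, g1, g2, fun x t => congrArg Subtype.val (g3 x t),
    fun x hx => g4 x fun t => Subtype.ext (hx t)⟩

end Straighten
end BottP

/-! ### The stable range -/

namespace BottP
open Set unitInterval Matrix

section Reduction

variable {α : Type} [Fintype α] [DecidableEq α]

theorem shear_sq (r : α → ℂ) :
    vecMulVec (Pi.single none 1 : Option α → ℂ) (fun i : Option α => i.elim 0 r) *
      vecMulVec (Pi.single none 1 : Option α → ℂ) (fun i : Option α => i.elim 0 r) = 0 := by
  rw [vecMulVec_mul_vecMulVec]; simp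

/-- The transvection subtracting multiples of the column `none` from the other columns. -/
noncomputable def shear (r : α → ℂ) : GLR (Option α) ℂ where
  val := 1 - vecMulVec (Pi.single none 1) (fun i => i.elim 0 r)
  inv := 1 + vecMulVec (Pi.single none 1) (fun i => i.elim 0 r)
  val_inv := by
    have := shear_sq r
    rw [sub_mul, mul_add, mul_add, this]; simp
  inv_val := by
    have := shear_sq r
    rw [add_mul, mul_sub, mul_sub, this]; simp

theorem val_shear (r : α → ℂ) : (shear r : Matrix (Option α) (Option α) ℂ) =
    1 - vecMulVec (Pi.single none 1) (fun i => i.elim 0 r) := rfl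

theorem shear_zero : shear (0 : α → ℂ) = 1 := by
  ext1
  rw [val_shear]
  have : (fun i : Option α => i.elim 0 (0 : α → ℂ)) = 0 := by
    ext i; cases i <;> rfl
  rw [this]; simp

theorem continuous_shear : Continuous (shear : (α → ℂ) → GLR (Option α) ℂ) := by
  rw [(isOpenEmbedding_val_GLR (Option α) ℂ).isEmbedding.continuous_iff]
  have h : Continuous fun r : α → ℂ => (fun i : Option α => i.elim 0 r) := by
    refine continuous_pi fun i => ?_
    cases i
    · exact continuous_const
    · exact continuous_apply _
  change Continuous fun r : α → ℂ => 1 - vecMulVec (Pi.single none 1) (fun i : Option α => i.elim 0 r)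
  exact continuous_const.sub (Continuous.matrix_vecMulVec continuous_const h)

/-- An invertible matrix fixing the last basis vector becomes, after clearing its last row by a
transvection, a block matrix with a `1` in the corner. -/
theorem mul_shear_eq_pad {N : GLR (Option α) ℂ}
    (hN : (N : Matrix (Option α) (Option α) ℂ) *ᵥ (Pi.single none 1) = Pi.single none 1) :
    ∃ a, ((N * shear (fun i => N.1 none (some i)) : GLR (Option α) ℂ) :
      Matrix (Option α) (Option α) ℂ) = 1 + pad Function.Embedding.some a := by
  have hcol : ∀ i, N.1 i none = (Pi.single none 1 : Option α → ℂ) i := fun i => by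
    rw [← hN]; simp
  refine ⟨Matrix.of (fun i j => N.1 (some i) (some j)) - 1, ?_⟩
  rw [Units.val_mul, val_shear, mul_sub, mul_one, Matrix.mul_vecMulVec, hN]
  ext i j
  rw [Matrix.sub_apply, Matrix.add_apply, vecMulVec_apply]
  cases i with
  | none =>
    rw [pad_apply_left _ _ _ _ (fun k => by simp)]
    cases j with
    | none => simp [hcol]
    | some j => simp
  | some i =>
    cases j with
    | none =>
      rw [pad_apply_right _ _ _ _ (fun k => by simp)]
      simp [hcol]
    | some j =>
      have := pad_apply_self (R := ℂ) Function.Embedding.some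
        (Matrix.of (fun i j => N.1 (some i) (some j)) - 1) i j
      simp only [Function.Embedding.some_apply] at this
      rw [this]
      simp [Matrix.one_apply]

/-- Invertible matrices supported in a corner come from invertible matrices of smaller size. -/
theorem exists_pad_lift {X R β γ : Type*} [TopologicalSpace X] [Ring R] [TopologicalSpace R]
    [IsTopologicalRing R] [Fintype β] [DecidableEq β] [Fintype γ] [DecidableEq γ] (e : β ↪ γ)
    (f : X → GLR γ R) (hf : Continuous f)
    (hfe : ∀ x, ∃ a, (f x : Matrix γ γ R) = 1 + pad e a) :
    ∃ g : X → GLR β R, Continuous g ∧ ∀ x, st e (g x) = f x := by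
  have h1 : ∀ a : Matrix β β R, (unpad e) (pad e a) = a := unpad_pad e
  have h2 : Continuous (unpad (R := R) e) := continuous_unpad e
  have h3 : ∀ (a : Matrix β β R) (b : Matrix γ γ R) (a' : Matrix β β R),
      pad e a * b * pad e a' = pad e (a * unpad e b * a') := fun a b a' => pad_mul_pad e a a' b
  exact exists_corner_lift (X := X) (A := Matrix β β R) (B := Matrix γ γ R) (pad e) (unpad e)
    h1 h2 h3 f hf hfe

variable {X E : Type*} [TopologicalSpace X]
    [CompactSpace X] [NormedAddCommGroup E] [NormedSpace ℝ E] [FiniteDimensional ℝ E]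

/-- In the stable range a family of invertible matrices deforms into the smaller general linear
group, relative to the locus where it already lies there. -/
theorem exists_reduction (j : X → E) (hj : Continuous j) (hinj : Function.Injective j)
    (hdim : Module.finrank ℝ E + 1 < 2 * (Fintype.card α + 1))
    (A : Set X) (M : X → GLR (Option α) ℂ) (hM : Continuous M)
    (hA : ∀ x ∈ A, ∃ b, M x = st Function.Embedding.some b) :
    ∃ B : X → GLR α ℂ, Continuous B ∧ ∃ H : X × I → GLR (Option α) ℂ, Continuous H ∧
      (∀ x, H (x, 0) = M x) ∧ (∀ x, H (x, 1) = st Function.Embedding.some (B x)) ∧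
      ∀ x ∈ A, ∀ t, H (x, t) = M x := by
  have hMv : Continuous fun x => (M x : Matrix (Option α) (Option α) ℂ) :=
    Units.continuous_val.comp hM
  let e : Option α → ℂ := Pi.single none 1
  have he : e ≠ 0 := fun h => by have := congrFun h none; simp [e] at this
  have hstcol : ∀ b : GLR α ℂ, (st Function.Embedding.some b :
      Matrix (Option α) (Option α) ℂ) *ᵥ e = e := fun b => by
    ext i
    simp only [e, Matrix.mulVec_single_one, Matrix.col_apply, st, val_unitsOne, Matrix.add_apply]
    rw [pad_apply_right _ _ _ _ (fun k => by simp)]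
    simp [Matrix.one_apply, Pi.single_apply]
  have hstrow : ∀ (b : GLR α ℂ) (i : α), (st Function.Embedding.some b :
      Matrix (Option α) (Option α) ℂ) none (some i) = 0 := fun b i => by
    simp only [st, val_unitsOne, Matrix.add_apply]
    rw [pad_apply_left _ _ _ _ (fun k => by simp)]
    simp
  -- the last columns form a family of nonzero vectors in a real vector space of dimension
  -- `2 * (card α + 1)`; contract it to the last basis vector and lift to matrices
  obtain ⟨h, h1, h2, h3, h4, h5⟩ := exists_contraction (V := Option α → ℂ) j hj hinj (by
      rw [Module.finrank_pi_fintype]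
      simp only [Complex.finrank_real_complex, Finset.sum_const, Finset.card_univ,
        Fintype.card_option, smul_eq_mul]
      omega) A e he (fun x => M x *ᵥ e) (by fun_prop) (fun x h0 => by
      apply he
      have := congrArg (fun y => ((M x)⁻¹ : GLR (Option α) ℂ).1 *ᵥ y) h0
      simpa [Matrix.mulVec_mulVec] using this) (fun x hx => by
      obtain ⟨b, hb⟩ := hA x hx
      simp only [hb, hstcol])
  obtain ⟨g, g1, g2, g3, g4⟩ := exists_matrix_homotopy h h1 h4
  have gA : ∀ x ∈ A, ∀ t, g (x, t) = 1 := fun x hx => g4 x fun t => by rw [h5 x hx, h5 x hx]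
  let N : X → GLR (Option α) ℂ := fun x => g (x, 1) * M x
  have hN : Continuous N := by fun_prop
  have hNv : Continuous fun x => (N x).1 := Units.continuous_val.comp hN
  have hNe : ∀ x, (N x : Matrix (Option α) (Option α) ℂ) *ᵥ e = e := fun x => by
    have := g3 x 1
    rw [h2, h3, Matrix.mulVec_mulVec] at this
    exact this
  have hNA : ∀ x ∈ A, ∀ i, (N x).1 none (some i) = 0 := fun x hx i => by
    obtain ⟨b, hb⟩ := hA x hx
    simp only [N, gA x hx, one_mul, hb, hstrow]
  have hr : Continuous fun x => (fun i : α => (N x).1 none (some i)) :=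
    continuous_pi fun i => hNv.matrix_elem none (some i)
  have cs := continuous_shear (α := α)
  obtain ⟨B, hB, hB'⟩ := exists_pad_lift Function.Embedding.some
    (fun x => N x * shear fun i => (N x).1 none (some i)) (hN.mul (cs.comp hr))
    (fun x => mul_shear_eq_pad (hNe x))
  -- move the last column first, then clear the last row by a transvection
  refine ⟨B, hB, fun p => g p * M p.1 * shear ((p.2 : ℝ) • fun i => (N p.1).1 none (some i)),
    ?_, fun x => ?_, fun x => ?_, fun x hx t => ?_⟩
  · have c1 : Continuous fun p : X × I => ((p.2 : ℝ) • fun i : α => (N p.1).1 none (some i)) :=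
      (continuous_subtype_val.comp continuous_snd).smul (hr.comp continuous_fst)
    have c2 := cs.comp c1
    have c3 : Continuous fun p : X × I => g p * M p.1 := by fun_prop
    exact c3.mul c2
  · simp [g2, shear_zero]
  · have := hB' x
    rw [this]
    simp [N]
  · have : (fun i => (N x).1 none (some i)) = 0 := funext fun i => hNA x hx i
    simp [gA x hx, this, shear_zero]

/-- Surjectivity of stabilization on homotopy classes of maps of pairs. -/
def StabSurj (Y : Set X) {α β : Type} [Fintype α] [DecidableEq α] [Fintype β] [DecidableEq β]
    (e : α ↪ β) : Prop :=
  ∀ M ∈ maps Y (GLR β ℂ), ∃ B ∈ maps Y (GLR α ℂ), Null ⊤ Y (M * (fun x => (st e (B x))⁻¹))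

/-- Injectivity of stabilization on homotopy classes of maps of pairs. -/
def StabInj (Y : Set X) {α β : Type} [Fintype α] [DecidableEq α] [Fintype β] [DecidableEq β]
    (e : α ↪ β) : Prop :=
  ∀ B ∈ maps Y (GLR α ℂ), Null ⊤ Y (fun x => st e (B x)) → Null ⊤ Y B

theorem stabSurj_some (j : X → E) (hj : Continuous j) (hinj : Function.Injective j)
    (hdim : Module.finrank ℝ E + 1 < 2 * (Fintype.card α + 1)) (Y : Set X) :
    StabSurj Y (Function.Embedding.some (α := α)) := by
  rintro M ⟨hM, hMY⟩
  obtain ⟨B, hB, H, h1, h2, h3, h4⟩ := exists_reduction j hj hinj hdim Y M hM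
    (fun x hx => ⟨1, by rw [hMY x hx, map_one]⟩)
  refine ⟨B, ⟨hB, fun y hy => ?_⟩, ?_⟩
  · apply st_injective (Function.Embedding.some (α := α))
    rw [← h3, h4 y hy, hMY y hy, map_one]
  · have := (Null.of_homotopy_top H h1 h2 h3 fun y hy t => by rw [h4 y hy, h4 y hy]).inv
    rw [_root_.mul_inv_rev, inv_inv] at this
    exact this

theorem stabInj_some (j : X → E) (hj : Continuous j) (hinj : Function.Injective j)
    (hdim : Module.finrank ℝ E + 2 < 2 * (Fintype.card α + 1)) (Y : Set X) :
    StabInj Y (Function.Embedding.some (α := α)) := by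
  rintro A ⟨hA, hAY⟩ ⟨F, f1, f2, f3, f4, -⟩
  have hval : ∀ p ∈ bd Y, ∃ b, F p = st Function.Embedding.some b ∧
      (p.2 = 1 → b = A p.1) ∧ (p.1 ∈ Y → b = 1) ∧ (p.2 = 0 → b = 1) := by
    rintro ⟨x, t⟩ (h | h | h)
    · exact ⟨1, by rw [f4 x h, map_one], fun _ => (hAY x h).symm, fun _ => rfl, fun _ => rfl⟩
    · simp only at h; subst h
      exact ⟨1, by rw [f2, map_one], fun h => absurd h zero_ne_one, fun _ => rfl, fun _ => rfl⟩
    · simp only at h; subst h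
      exact ⟨A x, by rw [f3], fun _ => rfl, fun h => hAY x h, fun h => absurd h one_ne_zero⟩
  obtain ⟨B, hB, H, h1, h2, h3, h4⟩ := exists_reduction (fun p : X × I => (j p.1, (p.2 : ℝ)))
    (by fun_prop) (by
      rintro ⟨x, t⟩ ⟨x', t'⟩ h
      simp only [Prod.mk.injEq] at h
      exact Prod.ext (hinj h.1) (Subtype.ext h.2)) (by
      rw [Module.finrank_prod, Module.finrank_self]; omega) (bd Y) F f1 (fun p hp => by
        obtain ⟨b, hb, -⟩ := hval p hp; exact ⟨b, hb⟩)
  have hBb : ∀ p ∈ bd Y, (p.2 = 1 → B p = A p.1) ∧ (p.1 ∈ Y → B p = 1) ∧ (p.2 = 0 → B p = 1) := by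
    intro p hp
    obtain ⟨b, hb, hb'⟩ := hval p hp
    have : B p = b := by
      apply st_injective Function.Embedding.some
      rw [← h3, h4 p hp, hb]
    rwa [this]
  exact ⟨B, hB, fun x => (hBb (x, 0) (Or.inr (Or.inl rfl))).2.2 rfl,
    fun x => (hBb (x, 1) (Or.inr (Or.inr rfl))).1 rfl,
    fun y hy t => (hBb (y, t) (Or.inl hy)).2.1 hy, fun _ => trivial⟩

theorem StabSurj.trans {Y : Set X} {α β γ : Type} [Fintype α] [DecidableEq α] [Fintype β]
    [DecidableEq β] [Fintype γ] [DecidableEq γ] {e : α ↪ β} {e' : β ↪ γ} (h : StabSurj Y e)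
    (h' : StabSurj Y e') : StabSurj Y (e.trans e') := by
  intro M hM
  obtain ⟨B, hB, h1⟩ := h' M hM
  obtain ⟨C, hC, h2⟩ := h B hB
  refine ⟨C, hC, ?_⟩
  have h3 := h1.mul (h2.map (H' := ⊤) (st e') (continuous_st e') fun _ _ => trivial)
  convert h3 using 1
  ext x : 1
  simp [st_trans]

theorem StabInj.trans {Y : Set X} {α β γ : Type} [Fintype α] [DecidableEq α] [Fintype β]
    [DecidableEq β] [Fintype γ] [DecidableEq γ] {e : α ↪ β} {e' : β ↪ γ} (h : StabInj Y e)
    (h' : StabInj Y e') : StabInj Y (e.trans e') := by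
  intro B hB hn
  refine h B hB (h' _ ⟨(continuous_st e).comp hB.1, fun y hy => ?_⟩ ?_)
  · simp [hB.2 y hy]
  · simpa only [st_trans] using hn

theorem stabSurj_equiv (Y : Set X) {α β : Type} [Fintype α] [DecidableEq α] [Fintype β]
    [DecidableEq β] (e : α ≃ β) : StabSurj Y e.toEmbedding := by
  intro M hM
  refine ⟨fun x => st e.symm.toEmbedding (M x), ⟨(continuous_st _).comp hM.1, fun y hy => ?_⟩, ?_⟩
  · simp [hM.2 y hy]
  · have h : e.symm.toEmbedding.trans e.toEmbedding = Function.Embedding.refl β := by ext; simp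
    have : (M * fun x => (st e.toEmbedding (st e.symm.toEmbedding (M x)))⁻¹) = 1 := by
      ext x : 1
      simp only [Pi.mul_apply, ← st_trans, h, st_refl, mul_inv_cancel, Pi.one_apply]
    rw [this]
    exact Null.one _ _

theorem stabInj_equiv (Y : Set X) {α β : Type} [Fintype α] [DecidableEq α] [Fintype β]
    [DecidableEq β] (e : α ≃ β) : StabInj Y e.toEmbedding := by
  intro M hM hn
  have := hn.map (H' := ⊤) (st e.symm.toEmbedding) (continuous_st _) fun _ _ => trivial
  have h : e.toEmbedding.trans e.symm.toEmbedding = Function.Embedding.refl α := by ext; simp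
  simpa only [← st_trans, h, st_refl] using this

/-- Every injection of finite types factors through adding one element at a time. -/
theorem embedding_induction (P : ∀ {α β : Type} [Fintype α] [DecidableEq α] [Fintype β]
    [DecidableEq β], (α ↪ β) → Prop) {α : Type} [Fintype α] [DecidableEq α]
    (htrans : ∀ {β γ : Type} [Fintype β] [DecidableEq β] [Fintype γ] [DecidableEq γ]
      (e : α ↪ β) (e' : β ↪ γ), P e → P e' → P (e.trans e'))
    (hequiv : ∀ {β γ : Type} [Fintype β] [DecidableEq β] [Fintype γ] [DecidableEq γ] (e : β ≃ γ),
      P e.toEmbedding)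
    (hsome : ∀ {β : Type} [Fintype β] [DecidableEq β], Fintype.card α ≤ Fintype.card β →
      P (Function.Embedding.some (α := β)))
    {β : Type} [Fintype β] [DecidableEq β] (e : α ↪ β) : P e := by
  obtain ⟨n, hn⟩ : ∃ n, n = Fintype.card β := ⟨_, rfl⟩
  induction n using Nat.strong_induction_on generalizing β with
  | _ n ih =>
    by_cases hs : Function.Surjective e
    · exact hequiv (Equiv.ofBijective e ⟨e.injective, hs⟩)
    · simp only [Function.Surjective, not_forall, not_exists] at hs
      obtain ⟨b, hb⟩ := hs
      let γ := {y // y ≠ b}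
      let e₁ : α ↪ γ := ⟨fun a => ⟨e a, hb a⟩, fun a a' h => e.injective (congrArg Subtype.val h)⟩
      have hc : Fintype.card γ < n := by
        rw [hn]; exact Fintype.card_subtype_lt (x := b) (by simp)
      have h1 := ih _ hc e₁ rfl
      have h2 := hsome (β := γ) (Fintype.card_le_of_embedding e₁)
      have h3 := hequiv (Equiv.optionSubtypeNe b)
      have : e = (e₁.trans Function.Embedding.some).trans (Equiv.optionSubtypeNe b).toEmbedding := by
        ext a; rfl
      rw [this]
      exact htrans _ _ (htrans _ _ h1 h2) h3

/-- Surjectivity of stabilization along `GL m → GL m'` in dimensions `< 2 m + 1`. -/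
theorem stabSurj (j : X → E) (hj : Continuous j) (hinj : Function.Injective j)
    (hdim : Module.finrank ℝ E + 1 < 2 * (Fintype.card α + 1)) (Y : Set X)
    {β : Type} [Fintype β] [DecidableEq β] (e : α ↪ β) : StabSurj Y e :=
  embedding_induction (fun e => StabSurj Y e) (fun _ _ h h' => h.trans h')
    (fun e => stabSurj_equiv Y e)
    (fun h => stabSurj_some j hj hinj (by omega) Y) e

/-- Injectivity of stabilization along `GL m → GL m'` in dimensions `< 2 m`. -/
theorem stabInj (j : X → E) (hj : Continuous j) (hinj : Function.Injective j)
    (hdim : Module.finrank ℝ E + 2 < 2 * (Fintype.card α + 1)) (Y : Set X)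
    {β : Type} [Fintype β] [DecidableEq β] (e : α ↪ β) : StabInj Y e :=
  embedding_induction (fun e => StabInj Y e) (fun _ _ h h' => h.trans h')
    (fun e => stabInj_equiv Y e)
    (fun h => stabInj_some j hj hinj (by omega) Y) e

end Reduction
end BottP

/-! ### ℓ¹ algebras of monoids -/

namespace BottP
open Set unitInterval

section MonoidL1

variable {M : Type} [Monoid M]

/-- The `ℓ¹` norm on the monoid algebra. -/
noncomputable def l1 (f : MonoidAlgebra ℂ M) : ℝ := f.coeff.sum fun _ c => ‖c‖

theorem l1_eq_sum (f : MonoidAlgebra ℂ M) (s : Finset M) (hs : f.coeff.support ⊆ s) :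
    l1 f = ∑ m ∈ s, ‖f.coeff m‖ :=
  Finsupp.sum_of_support_subset _ hs _ fun _ _ => norm_zero

theorem l1_nonneg (f : MonoidAlgebra ℂ M) : 0 ≤ l1 f :=
  Finset.sum_nonneg fun _ _ => norm_nonneg _

theorem l1_add (f g : MonoidAlgebra ℂ M) : l1 (f + g) ≤ l1 f + l1 g := by
  classical
  rw [l1_eq_sum f (f.coeff.support ∪ g.coeff.support) Finset.subset_union_left,
    l1_eq_sum g (f.coeff.support ∪ g.coeff.support) Finset.subset_union_right,
    l1_eq_sum (f + g) (f.coeff.support ∪ g.coeff.support) (by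
      rw [MonoidAlgebra.coeff_add]; exact Finsupp.support_add),
    ← Finset.sum_add_distrib]
  exact Finset.sum_le_sum fun m _ => norm_add_le _ _

theorem l1_smul (c : ℂ) (f : MonoidAlgebra ℂ M) : l1 (c • f) = ‖c‖ * l1 f := by
  rw [l1_eq_sum (c • f) f.coeff.support (by
    rw [MonoidAlgebra.coeff_smul]; exact Finsupp.support_smul), l1, Finsupp.sum, Finset.mul_sum]
  exact Finset.sum_congr rfl fun m _ => by rw [MonoidAlgebra.coeff_smul_apply, smul_eq_mul, norm_mul]

theorem l1_single (m : M) (c : ℂ) : l1 (MonoidAlgebra.single m c) = ‖c‖ := by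
  rw [l1, MonoidAlgebra.coeff_single]
  exact Finsupp.sum_single_index (h := fun _ c => ‖c‖) norm_zero

theorem l1_sum {ι : Type*} (s : Finset ι) (f : ι → MonoidAlgebra ℂ M) :
    l1 (∑ i ∈ s, f i) ≤ ∑ i ∈ s, l1 (f i) :=
  Finset.le_sum_of_subadditive l1 (by simp [l1]) l1_add s f

theorem l1_mul (f g : MonoidAlgebra ℂ M) : l1 (f * g) ≤ l1 f * l1 g := by
  rw [MonoidAlgebra.mul_def, Finsupp.sum]
  refine (l1_sum _ _).trans ?_
  rw [l1, Finsupp.sum, Finset.sum_mul]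
  refine Finset.sum_le_sum fun m _ => ?_
  rw [Finsupp.sum]
  refine (l1_sum _ _).trans ?_
  rw [l1, Finsupp.sum, Finset.mul_sum]
  exact Finset.sum_le_sum fun m' _ => by rw [l1_single, norm_mul]

theorem l1_eq_zero (f : MonoidAlgebra ℂ M) (h : l1 f = 0) : f = 0 := by
  rw [l1, Finsupp.sum, Finset.sum_eq_zero_iff_of_nonneg fun _ _ => norm_nonneg _] at h
  rw [← MonoidAlgebra.coeff_eq_zero]
  ext m
  by_contra hm
  exact hm (norm_eq_zero.1 (h m (Finsupp.mem_support_iff.2 hm)))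

noncomputable instance : NormedAddCommGroup (MonoidAlgebra ℂ M) :=
  AddGroupNorm.toNormedAddCommGroup
    { toFun := l1
      map_zero' := by simp [l1]
      add_le' := l1_add
      neg' := fun f => by
        have := l1_smul (-1) f
        rwa [neg_one_smul, norm_neg, norm_one, one_mul] at this
      eq_zero_of_map_eq_zero' := l1_eq_zero }

theorem norm_eq_l1 (f : MonoidAlgebra ℂ M) : ‖f‖ = l1 f := rfl

noncomputable instance : NormedRing (MonoidAlgebra ℂ M) :=
  { (inferInstance : NormedAddCommGroup (MonoidAlgebra ℂ M)),
    (inferInstance : Ring (MonoidAlgebra ℂ M)) with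
    norm_mul_le := l1_mul }

noncomputable instance : NormedAlgebra ℂ (MonoidAlgebra ℂ M) where
  norm_smul_le c f := (l1_smul c f).le

variable (M) in
/-- The convolution Banach algebra `ℓ¹(M)` of a monoid. -/
def A1 : Type := UniformSpace.Completion (MonoidAlgebra ℂ M)

noncomputable instance : NormedRing (A1 M) :=
  inferInstanceAs (NormedRing (UniformSpace.Completion (MonoidAlgebra ℂ M)))

instance : CompleteSpace (A1 M) :=
  inferInstanceAs (CompleteSpace (UniformSpace.Completion (MonoidAlgebra ℂ M)))

noncomputable instance : NormedSpace ℂ (A1 M) :=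
  inferInstanceAs (NormedSpace ℂ (UniformSpace.Completion (MonoidAlgebra ℂ M)))

/-- The canonical dense inclusion. -/
noncomputable def toA1 : MonoidAlgebra ℂ M →L[ℂ] A1 M :=
  (UniformSpace.Completion.toComplL (𝕜 := ℂ) (E := MonoidAlgebra ℂ M))

theorem denseRange_toA1 : DenseRange (toA1 (M := M)) :=
  UniformSpace.Completion.denseRange_coe

theorem norm_toA1 (f : MonoidAlgebra ℂ M) : ‖toA1 f‖ = l1 f :=
  UniformSpace.Completion.norm_coe f

theorem toA1_mul (f g : MonoidAlgebra ℂ M) : toA1 (f * g) = toA1 f * toA1 g :=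
  UniformSpace.Completion.coe_mul f g

theorem toA1_one : toA1 (1 : MonoidAlgebra ℂ M) = 1 := rfl

theorem A1.smul_mul (r : ℂ) (x y : A1 M) : r • x * y = r • (x * y) := by
  have hc : IsClosed {p : A1 M × A1 M | r • p.1 * p.2 = r • (p.1 * p.2)} :=
    isClosed_eq ((continuous_fst.const_smul r).mul continuous_snd)
      ((continuous_fst.mul continuous_snd).const_smul r)
  refine denseRange_toA1.induction_on₂ hc (fun f g => ?_) x y
  rw [← map_smul, ← toA1_mul, ← toA1_mul, ← map_smul, smul_mul_assoc]

theorem A1.mul_smul (r : ℂ) (x y : A1 M) : x * r • y = r • (x * y) := by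
  have hc : IsClosed {p : A1 M × A1 M | p.1 * r • p.2 = r • (p.1 * p.2)} :=
    isClosed_eq (continuous_fst.mul (continuous_snd.const_smul r))
      ((continuous_fst.mul continuous_snd).const_smul r)
  refine denseRange_toA1.induction_on₂ hc (fun f g => ?_) x y
  rw [← map_smul, ← toA1_mul, ← toA1_mul, ← map_smul, mul_smul_comm]

noncomputable instance : NormedAlgebra ℂ (A1 M) where
  __ := Algebra.ofModule (R := ℂ) (A := A1 M) A1.smul_mul A1.mul_smul
  norm_smul_le := norm_smul_le

/-- The generators of `ℓ¹(M)`. -/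
noncomputable def mono (m : M) : A1 M := toA1 (MonoidAlgebra.single m 1)

theorem mono_one : mono (1 : M) = 1 := rfl

theorem mono_mul (m m' : M) : mono (m * m') = mono m * mono m' := by
  rw [mono, mono, mono, ← toA1_mul, MonoidAlgebra.single_mul_single, one_mul]

theorem norm_mono (m : M) : ‖mono m‖ = 1 := by
  rw [mono, norm_toA1, l1_single, norm_one]

/-- Closed induction on `ℓ¹(M)`. -/
theorem A1.induction {p : A1 M → Prop} (hc : IsClosed {x | p x}) (h0 : p 0)
    (hadd : ∀ x y, p x → p y → p (x + y)) (hs : ∀ (c : ℂ) m, p (c • mono m)) (x : A1 M) : p x := by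
  refine denseRange_toA1.induction_on x hc fun f => ?_
  induction f using MonoidAlgebra.induction_linear with
  | zero => rwa [map_zero]
  | add f g hf hg => rw [map_add]; exact hadd _ _ hf hg
  | single m c =>
    have : MonoidAlgebra.single m c = c • MonoidAlgebra.single m (1 : ℂ) := by
      rw [MonoidAlgebra.smul_single, smul_eq_mul, mul_one]
    rw [this, map_smul]; exact hs c m

variable {V : Type*} [NormedAddCommGroup V] [NormedSpace ℂ V]

/-- Continuous linear maps out of `ℓ¹(M)` are determined by their values on the generators. -/
theorem A1.hom_ext {f g : A1 M →L[ℂ] V} (h : ∀ m, f (mono m) = g (mono m)) : f = g := by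
  ext x
  refine A1.induction (p := fun x => f x = g x) (isClosed_eq f.continuous g.continuous) ?_ ?_ ?_ x
  · simp
  · intro x y hx hy; simp [hx, hy]
  · intro c m; simp [h]

variable [CompleteSpace V]

/-- The linear extension of a bounded function `M → V` to finitely supported functions. -/
noncomputable def preLin (v : M → V) (C : ℝ) (hv : ∀ m, ‖v m‖ ≤ C) : MonoidAlgebra ℂ M →L[ℂ] V :=
  LinearMap.mkContinuous
    { toFun := fun f => f.coeff.sum fun m c => c • v m
      map_add' := fun f g => by
        rw [MonoidAlgebra.coeff_add]
        exact Finsupp.sum_add_index' (fun _ => zero_smul _ _) fun _ _ _ => add_smul _ _ _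
      map_smul' := fun c f => by
        have := Finsupp.sum_smul_index' (g := f.coeff) (b := c) (h := fun m c => c • v m)
          fun _ => zero_smul _ _
        rw [MonoidAlgebra.coeff_smul, this, Finsupp.smul_sum]
        simp [mul_smul] } C fun f => by
      rw [norm_eq_l1, l1, Finsupp.sum, Finset.mul_sum]
      refine (norm_sum_le _ _).trans (Finset.sum_le_sum fun m _ => ?_)
      rw [norm_smul, mul_comm]
      exact mul_le_mul_of_nonneg_right (hv m) (norm_nonneg _)

theorem preLin_single (v : M → V) (C : ℝ) (hv : ∀ m, ‖v m‖ ≤ C) (m : M) (c : ℂ) :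
    preLin v C hv (MonoidAlgebra.single m c) = c • v m := by
  change (MonoidAlgebra.single m c).coeff.sum (fun m c => c • v m) = _
  rw [MonoidAlgebra.coeff_single]
  exact Finsupp.sum_single_index (h := fun m c => c • v m) (zero_smul _ _)

/-- The continuous linear map on `ℓ¹(M)` given by a bounded function on `M`. -/
noncomputable def lin (v : M → V) (C : ℝ) (hv : ∀ m, ‖v m‖ ≤ C) : A1 M →L[ℂ] V :=
  (preLin v C hv).extend (toA1 (M := M))

theorem lin_mono (v : M → V) (C : ℝ) (hv : ∀ m, ‖v m‖ ≤ C) (m : M) :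
    lin v C hv (mono m) = v m := by
  rw [lin, mono, ContinuousLinearMap.extend_eq, preLin_single, one_smul]
  · exact denseRange_toA1
  · exact UniformSpace.Completion.isUniformInducing_coe _

variable {𝓐 : Type*} [NormedRing 𝓐] [NormedAlgebra ℂ 𝓐] [CompleteSpace 𝓐]

/-- The continuous algebra homomorphism on `ℓ¹(M)` given by a bounded representation of `M`. -/
noncomputable def hom (ρ : M →* 𝓐) (C : ℝ) (hρ : ∀ m, ‖ρ m‖ ≤ C) : A1 M →+* 𝓐 where
  toFun := lin ρ C hρ
  map_one' := by rw [← mono_one, lin_mono, map_one]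
  map_zero' := map_zero _
  map_add' := map_add _
  map_mul' x y := by
    refine A1.induction (p := fun x => lin ρ C hρ (x * y) = lin ρ C hρ x * lin ρ C hρ y)
      (isClosed_eq (by fun_prop) (by fun_prop)) (by simp) ?_ ?_ x
    · intro x x' hx hx'; rw [add_mul, map_add, map_add, hx, hx', add_mul]
    · intro c m
      refine A1.induction
        (p := fun y => lin ρ C hρ (c • mono m * y) = lin ρ C hρ (c • mono m) * lin ρ C hρ y)
        (isClosed_eq (by fun_prop) (by fun_prop)) (by simp) ?_ ?_ y
      · intro x x' hx hx'; rw [mul_add, map_add, map_add, hx, hx', mul_add]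
      · intro c' m'
        rw [smul_mul_smul_comm, ← mono_mul, map_smul, map_smul, map_smul, lin_mono, lin_mono,
          lin_mono, map_mul, smul_mul_smul_comm]

theorem hom_mono (ρ : M →* 𝓐) (C : ℝ) (hρ : ∀ m, ‖ρ m‖ ≤ C) (m : M) :
    hom ρ C hρ (mono m) = ρ m := lin_mono _ _ _ _

theorem hom_smul (ρ : M →* 𝓐) (C : ℝ) (hρ : ∀ m, ‖ρ m‖ ≤ C) (c : ℂ) (x : A1 M) :
    hom ρ C hρ (c • x) = c • hom ρ C hρ x := map_smul (lin ρ C hρ) _ _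

theorem continuous_hom (ρ : M →* 𝓐) (C : ℝ) (hρ : ∀ m, ‖ρ m‖ ≤ C) : Continuous (hom ρ C hρ) :=
  (lin ρ C hρ).continuous

end MonoidL1

end BottP

/-! ### The Toeplitz and Laurent algebras -/

namespace BottP
open Set unitInterval

/-- The bicyclic monoid: `⟨a, b⟩` stands for the word `S ^ a * S* ^ b` where `S* * S = 1`. -/
@[ext] structure Bic where
  a : ℕ
  b : ℕ

instance : Monoid Bic where
  one := ⟨0, 0⟩
  mul x y := ⟨x.a + (y.a - x.b), y.b + (x.b - y.a)⟩
  mul_assoc x y z := by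
    ext
    · change x.a + (y.a - x.b) + (z.a - (y.b + (x.b - y.a))) = x.a + (y.a + (z.a - y.b) - x.b)
      omega
    · change z.b + (y.b + (x.b - y.a) - z.a) = z.b + (y.b - z.a) + (x.b - (y.a + (z.a - y.b)))
      omega
  one_mul x := by
    ext
    · change 0 + (x.a - 0) = x.a; omega
    · change x.b + (0 - x.a) = x.b; omega
  mul_one x := by
    ext
    · change x.a + (0 - x.b) = x.a; omega
    · change 0 + (x.b - 0) = x.b; omega

theorem Bic.mul_def (x y : Bic) : x * y = ⟨x.a + (y.a - x.b), y.b + (x.b - y.a)⟩ := rfl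
theorem Bic.one_def : (1 : Bic) = ⟨0, 0⟩ := rfl

theorem Bic.pow_S (n : ℕ) : (⟨1, 0⟩ : Bic) ^ n = ⟨n, 0⟩ := by
  induction n with
  | zero => rfl
  | succ n ih => rw [pow_succ, ih, Bic.mul_def]; ext <;> simp

theorem Bic.pow_Sd (n : ℕ) : (⟨0, 1⟩ : Bic) ^ n = ⟨0, n⟩ := by
  induction n with
  | zero => rfl
  | succ n ih => rw [pow_succ, ih, Bic.mul_def]; ext <;> simp [add_comm]

theorem Bic.eq_pow_mul_pow (x : Bic) : x = ⟨1, 0⟩ ^ x.a * ⟨0, 1⟩ ^ x.b := by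
  rw [Bic.pow_S, Bic.pow_Sd, Bic.mul_def]; ext <;> simp

/-- The bicyclic relation `W ^ b * V ^ c`, which makes `bicRep` multiplicative; one of the two
truncated differences vanishes. -/
theorem pow_mul_pow_of_mul_eq_one {A : Type*} [Monoid A] {V W : A} (h : W * V = 1) (b c : ℕ) :
    W ^ b * V ^ c = V ^ (c - b) * W ^ (b - c) := by
  induction b generalizing c with
  | zero => simp
  | succ b ih =>
    cases c with
    | zero => simp
    | succ c =>
      rw [pow_succ, pow_succ', mul_assoc, ← mul_assoc W, h, one_mul, ih]
      congr 2 <;> omega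

/-- The representation of the bicyclic monoid given by a one-sided inverse pair. -/
def bicRep {A : Type*} [Monoid A] (V W : A) (h : W * V = 1) : Bic →* A where
  toFun x := V ^ x.a * W ^ x.b
  map_one' := by simp [Bic.one_def]
  map_mul' x y := by
    rw [Bic.mul_def]
    simp only
    rw [pow_add, add_comm, pow_add W, mul_assoc, mul_assoc]
    congr 1
    rw [← mul_assoc, ← mul_assoc (W ^ x.b), pow_mul_pow_of_mul_eq_one h]

/-- The (`ℓ¹`) Toeplitz algebra. -/
abbrev Toe : Type := A1 Bic

/-- The (`ℓ¹`) Laurent (Wiener) algebra. -/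
abbrev Lau : Type := A1 (Multiplicative ℤ)

/-- The generating isometry. -/
noncomputable def tS : Toe := mono ⟨1, 0⟩
/-- Its left inverse. -/
noncomputable def tSd : Toe := mono ⟨0, 1⟩

theorem tSd_mul_tS : tSd * tS = 1 := by
  rw [tSd, tS, ← mono_mul, Bic.mul_def, ← mono_one, Bic.one_def]
  rfl

/-- `mono` as a monoid homomorphism. -/
noncomputable def monoHom (M : Type) [Monoid M] : M →* A1 M where
  toFun := mono
  map_one' := mono_one
  map_mul' := mono_mul

theorem mono_bic (x : Bic) : mono x = tS ^ x.a * tSd ^ x.b := by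
  conv_lhs => rw [x.eq_pow_mul_pow]
  rw [mono_mul, ← show monoHom Bic _ = mono _ from rfl, ← show monoHom Bic _ = mono _ from rfl,
    map_pow, map_pow]
  rfl

/-- Functoriality of `ℓ¹(M)`. -/
noncomputable def mapA {M N : Type} [Monoid M] [Monoid N] (f : M →* N) : A1 M →+* A1 N :=
  hom ((monoHom N).comp f) 1 fun _ => (norm_mono _).le

theorem mapA_mono {M N : Type} [Monoid M] [Monoid N] (f : M →* N) (m : M) :
    mapA f (mono m) = mono (f m) := hom_mono _ _ _ _

theorem mapA_smul {M N : Type} [Monoid M] [Monoid N] (f : M →* N) (c : ℂ) (x : A1 M) :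
    mapA f (c • x) = c • mapA f x := hom_smul _ _ _ _ _

theorem continuous_mapA {M N : Type} [Monoid M] [Monoid N] (f : M →* N) : Continuous (mapA f) :=
  continuous_hom _ _ _

/-- The augmentation character `m ↦ 1`. -/
noncomputable def aug (M : Type) [Monoid M] : A1 M →+* ℂ :=
  hom (1 : M →* ℂ) 1 fun _ => by simp

theorem aug_mono {M : Type} [Monoid M] (m : M) : aug M (mono m) = 1 := hom_mono _ _ _ _

theorem continuous_aug (M : Type) [Monoid M] : Continuous (aug M) := continuous_hom _ _ _

theorem aug_smul {M : Type} [Monoid M] (c : ℂ) (x : A1 M) : aug M (c • x) = c * aug M x :=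
  hom_smul _ _ _ _ _

theorem aug_mapA {M N : Type} [Monoid M] [Monoid N] (f : M →* N) (x : A1 M) :
    aug N (mapA f x) = aug M x := by
  refine A1.induction (p := fun x => aug N (mapA f x) = aug M x)
    (isClosed_eq ((continuous_aug N).comp (continuous_mapA f)) (continuous_aug M)) (by simp)
    (fun x y hx hy => by simp [hx, hy]) (fun c m => ?_) x
  rw [mapA_smul, aug_smul, aug_smul, aug_mono, mapA_mono, aug_mono]

/-- The degree homomorphism of the bicyclic monoid. -/
def bicDeg : Bic →* Multiplicative ℤ where
  toFun x := Multiplicative.ofAdd ((x.a : ℤ) - x.b)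
  map_one' := by simp [Bic.one_def]
  map_mul' x y := by
    rw [← ofAdd_add, Bic.mul_def]
    congr 1
    simp only
    omega

/-- The symbol map from the Toeplitz algebra to the Laurent algebra. -/
noncomputable def sym : Toe →+* Lau := mapA bicDeg

theorem continuous_sym : Continuous sym := continuous_mapA _

theorem sym_smul (c : ℂ) (x : Toe) : sym (c • x) = c • sym x := mapA_smul _ _ _

/-- The standard bicyclic word of a given degree. -/
def degSec (n : Multiplicative ℤ) : Bic := ⟨n.toAdd.toNat, (-n.toAdd).toNat⟩

/-- The continuous linear section of the symbol map. -/
noncomputable def sec : Lau →L[ℂ] Toe := lin (fun n => mono (degSec n)) 1 fun _ => (norm_mono _).le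

theorem sec_mono (n : Multiplicative ℤ) : sec (mono n) = mono (degSec n) := lin_mono _ _ _ _

theorem sec_one : sec 1 = 1 := by
  rw [← mono_one, sec_mono]; rfl

theorem sym_sec (x : Lau) : sym (sec x) = x := by
  refine A1.induction (p := fun x => sym (sec x) = x)
    (isClosed_eq (continuous_sym.comp sec.continuous) continuous_id) (by simp)
    (fun x y hx hy => by rw [map_add, map_add, hx, hy]) (fun c n => ?_) x
  rw [map_smul, sym_smul, sec_mono, sym, mapA_mono]
  congr 2
  change Multiplicative.ofAdd ((n.toAdd.toNat : ℤ) - (-n.toAdd).toNat) = n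
  apply Multiplicative.toAdd.injective
  rw [toAdd_ofAdd]
  omega

end BottP

/-! ### Frames and the ideal of finite corners -/

namespace BottP
open Set unitInterval Filter

/-- A Banach algebra `𝓑` containing a one-sided shift `S` commuting with a copy of `R`, such that
the corner cut out by the projection `e = 1 - S S*` is a copy of `R`. Here `S*` is the field `Sd`,
an algebraic left inverse of `S`; `lam` is the copy of `R`, and `om` reads off the corner entry of an
element, `e b e = lam (om b) e`. -/
structure Frame (R 𝓑 : Type) [NormedRing R] [NormedRing 𝓑] where
  S : 𝓑
  Sd : 𝓑
  Sd_mul_S : Sd * S = 1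
  lam : R →+* 𝓑
  continuous_lam : Continuous lam
  lam_S : ∀ a, lam a * S = S * lam a
  lam_Sd : ∀ a, lam a * Sd = Sd * lam a
  om : 𝓑 →+ R
  continuous_om : Continuous om
  corner : ∀ b, (1 - S * Sd) * b * (1 - S * Sd) = lam (om b) * (1 - S * Sd)
  om_lam : ∀ a, om (lam a * (1 - S * Sd)) = a
  C : ℝ
  bdd : ∀ r : ℕ, ‖S ^ r * Sd ^ r‖ ≤ C

namespace Frame

variable {R 𝓑 : Type} [NormedRing R] [NormedRing 𝓑] (F : Frame R 𝓑)

/-- The corner projection. -/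
def e : 𝓑 := 1 - F.S * F.Sd

/-- The projections `S ^ r S* ^ r`. -/
def er (r : ℕ) : 𝓑 := F.S ^ r * F.Sd ^ r

theorem norm_er (r : ℕ) : ‖F.er r‖ ≤ F.C := F.bdd r

theorem C_nonneg : 0 ≤ F.C := (norm_nonneg _).trans (F.norm_er 0)

theorem e_S : F.e * F.S = 0 := by
  rw [e, sub_mul, mul_assoc, F.Sd_mul_S]; simp

theorem Sd_e : F.Sd * F.e = 0 := by
  rw [e, mul_sub, ← mul_assoc, F.Sd_mul_S]; simp

theorem e_e : F.e * F.e = F.e := by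
  conv_lhs => rw [e, mul_sub, ← mul_assoc]
  rw [← e, F.e_S]; simp

theorem lam_e (a : R) : F.lam a * F.e = F.e * F.lam a := by
  rw [e, mul_sub, sub_mul, ← mul_assoc, F.lam_S, mul_assoc, F.lam_Sd, mul_assoc]; simp

theorem S_er (r : ℕ) : F.S * F.er r = F.er (r + 1) * F.S := by
  rw [er, er, pow_succ, pow_succ, mul_assoc, mul_assoc (F.Sd ^ r), F.Sd_mul_S, mul_one,
    ← mul_assoc, ← pow_succ', pow_succ]

theorem er_Sd (r : ℕ) : F.er r * F.Sd = F.Sd * F.er (r + 1) := by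
  rw [er, er, pow_succ', ← mul_assoc, ← mul_assoc, F.Sd_mul_S, one_mul, mul_assoc, ← pow_succ]

theorem lam_er (a : R) (r : ℕ) : F.lam a * F.er r = F.er r * F.lam a := by
  have h1 : Commute (F.lam a) F.S := F.lam_S a
  have h2 : Commute (F.lam a) F.Sd := F.lam_Sd a
  exact (h1.pow_right r).mul_right (h2.pow_right r)

/-- The elements `k` with `er r * k → 0` and `k * er r → 0`. They are the analogue of the compact
operators: `k` is the limit of its finite corners `(1 - er r) k (1 - er r)`. -/
def IsK (k : 𝓑) : Prop :=
  Tendsto (fun r => F.er r * k) atTop (𝓝 0) ∧ Tendsto (fun r => k * F.er r) atTop (𝓝 0)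

variable {F}

theorem IsK.add {k l : 𝓑} (hk : F.IsK k) (hl : F.IsK l) : F.IsK (k + l) := by
  constructor
  · simpa [mul_add] using hk.1.add hl.1
  · simpa [add_mul] using hk.2.add hl.2

theorem IsK.neg {k : 𝓑} (hk : F.IsK k) : F.IsK (-k) := by
  constructor
  · simpa using hk.1.neg
  · simpa using hk.2.neg

theorem IsK.zero : F.IsK 0 := by constructor <;> simp

theorem IsK.sub {k l : 𝓑} (hk : F.IsK k) (hl : F.IsK l) : F.IsK (k - l) := by
  rw [sub_eq_add_neg]; exact hk.add hl.neg

theorem IsK.sum {ι : Type*} (s : Finset ι) (k : ι → 𝓑) (hk : ∀ i ∈ s, F.IsK (k i)) :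
    F.IsK (∑ i ∈ s, k i) := by
  classical
  induction s using Finset.induction_on with
  | empty => simpa using IsK.zero
  | insert i s hi ih =>
    rw [Finset.sum_insert hi]
    exact (hk i (by simp)).add (ih fun j hj => hk j (by simp [hj]))

theorem IsK.mul {k l : 𝓑} (hk : F.IsK k) (hl : F.IsK l) : F.IsK (k * l) := by
  constructor
  · simpa [mul_assoc] using hk.1.mul_const l
  · simpa [mul_assoc] using hl.2.const_mul k

theorem IsK.smul [NormedAlgebra ℂ 𝓑] {k : 𝓑} (c : ℂ) (hk : F.IsK k) : F.IsK (c • k) := by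
  constructor
  · simpa using hk.1.const_smul c
  · simpa using hk.2.const_smul c

theorem tendsto_er_mul {Z : Type*} {l : Filter (ℕ × Z)} (hl : Tendsto Prod.fst l atTop) {k : 𝓑}
    {f : ℕ × Z → 𝓑} (hf : Tendsto f l (𝓝 k)) (h : Tendsto (fun r => F.er r * k) atTop (𝓝 0)) :
    Tendsto (fun p => F.er p.1 * f p) l (𝓝 0) := by
  have h1 : Tendsto (fun p => F.C * ‖f p - k‖ + ‖F.er p.1 * k‖) l (𝓝 0) := by
    have := ((hf.sub_const k).norm.const_mul F.C).add (h.comp hl).norm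
    simpa using this
  refine squeeze_zero_norm (fun p => ?_) h1
  calc ‖F.er p.1 * f p‖ = ‖F.er p.1 * (f p - k) + F.er p.1 * k‖ := by rw [← mul_add]; simp
    _ ≤ ‖F.er p.1 * (f p - k)‖ + ‖F.er p.1 * k‖ := norm_add_le _ _
    _ ≤ _ := by
      gcongr
      exact (norm_mul_le _ _).trans (mul_le_mul_of_nonneg_right (F.norm_er _) (norm_nonneg _))

theorem tendsto_mul_er {Z : Type*} {l : Filter (ℕ × Z)} (hl : Tendsto Prod.fst l atTop) {k : 𝓑}
    {f : ℕ × Z → 𝓑} (hf : Tendsto f l (𝓝 k)) (h : Tendsto (fun r => k * F.er r) atTop (𝓝 0)) :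
    Tendsto (fun p => f p * F.er p.1) l (𝓝 0) := by
  have h1 : Tendsto (fun p => ‖f p - k‖ * F.C + ‖k * F.er p.1‖) l (𝓝 0) := by
    have := ((hf.sub_const k).norm.mul_const F.C).add (h.comp hl).norm
    simpa using this
  refine squeeze_zero_norm (fun p => ?_) h1
  calc ‖f p * F.er p.1‖ = ‖(f p - k) * F.er p.1 + k * F.er p.1‖ := by rw [← add_mul]; simp
    _ ≤ ‖(f p - k) * F.er p.1‖ + ‖k * F.er p.1‖ := norm_add_le _ _
    _ ≤ _ := by
      gcongr
      exact (norm_mul_le _ _).trans (mul_le_mul_of_nonneg_left (F.norm_er _) (norm_nonneg _))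

variable (F) in
theorem isClosed_isK : IsClosed {k | F.IsK k} := by
  have key : ∀ (k : 𝓑), (∀ ε > 0, ∃ k', F.IsK k' ∧ ‖k - k'‖ < ε) → F.IsK k := by
    intro k hk
    have hC := F.C_nonneg
    constructor
    · rw [Metric.tendsto_atTop]
      intro ε hε
      obtain ⟨k', hk', hd⟩ := hk (ε / 2 / (F.C + 1)) (by positivity)
      obtain ⟨N, hN⟩ := Metric.tendsto_atTop.1 hk'.1 (ε / 2) (by positivity)
      refine ⟨N, fun n hn => ?_⟩
      have h1 := hN n hn
      rw [dist_zero_right] at h1 ⊢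
      rw [lt_div_iff₀ (by positivity)] at hd
      calc ‖F.er n * k‖ = ‖F.er n * (k - k') + F.er n * k'‖ := by rw [← mul_add]; simp
        _ ≤ ‖F.er n‖ * ‖k - k'‖ + ‖F.er n * k'‖ :=
          (norm_add_le _ _).trans (by gcongr; exact norm_mul_le _ _)
        _ ≤ ‖k - k'‖ * (F.C + 1) + ‖F.er n * k'‖ := by
          have := F.norm_er n
          nlinarith [norm_nonneg (k - k')]
        _ < ε := by linarith
    · rw [Metric.tendsto_atTop]
      intro ε hε
      obtain ⟨k', hk', hd⟩ := hk (ε / 2 / (F.C + 1)) (by positivity)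
      obtain ⟨N, hN⟩ := Metric.tendsto_atTop.1 hk'.2 (ε / 2) (by positivity)
      refine ⟨N, fun n hn => ?_⟩
      have h1 := hN n hn
      rw [dist_zero_right] at h1 ⊢
      rw [lt_div_iff₀ (by positivity)] at hd
      calc ‖k * F.er n‖ = ‖(k - k') * F.er n + k' * F.er n‖ := by rw [← add_mul]; simp
        _ ≤ ‖k - k'‖ * ‖F.er n‖ + ‖k' * F.er n‖ :=
          (norm_add_le _ _).trans (by gcongr; exact norm_mul_le _ _)
        _ ≤ ‖k - k'‖ * (F.C + 1) + ‖k' * F.er n‖ := by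
          have := F.norm_er n
          nlinarith [norm_nonneg (k - k')]
        _ < ε := by linarith
  refine isClosed_of_closure_subset fun k hk => key k fun ε hε => ?_
  obtain ⟨k', hk', hd⟩ := Metric.mem_closure_iff.1 hk ε hε
  exact ⟨k', hk', by rwa [dist_eq_norm] at hd⟩

variable (F) in
/-- Multipliers of the ideal `IsK`. -/
def IsMult (b : 𝓑) : Prop := ∀ k, F.IsK k → F.IsK (b * k) ∧ F.IsK (k * b)

theorem IsMult.add {b c : 𝓑} (hb : F.IsMult b) (hc : F.IsMult c) : F.IsMult (b + c) := fun k hk => by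
  rw [add_mul, mul_add]
  exact ⟨(hb k hk).1.add (hc k hk).1, (hb k hk).2.add (hc k hk).2⟩

theorem IsMult.mul {b c : 𝓑} (hb : F.IsMult b) (hc : F.IsMult c) : F.IsMult (b * c) := fun k hk => by
  rw [mul_assoc, ← mul_assoc k]
  exact ⟨(hb _ (hc k hk).1).1, (hc _ (hb k hk).2).2⟩

theorem IsMult.smul [NormedAlgebra ℂ 𝓑] {b : 𝓑} (c : ℂ) (hb : F.IsMult b) : F.IsMult (c • b) :=
  fun k hk => by
    rw [smul_mul_assoc, mul_smul_comm]
    exact ⟨(hb k hk).1.smul c, (hb k hk).2.smul c⟩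

theorem IsMult.one : F.IsMult 1 := fun k hk => by simpa using hk

theorem IsMult.pow {b : 𝓑} (hb : F.IsMult b) (n : ℕ) : F.IsMult (b ^ n) := by
  induction n with
  | zero => rw [pow_zero]; exact IsMult.one
  | succ n ih => rw [pow_succ]; exact ih.mul hb

theorem IsK.isMult {b : 𝓑} (hb : F.IsK b) : F.IsMult b := fun _ hk => ⟨hb.mul hk, hk.mul hb⟩

variable (F) in
theorem isClosed_isMult : IsClosed {b | F.IsMult b} := by
  have : {b | F.IsMult b} = ⋂ k, ⋂ (_ : F.IsK k), {b | F.IsK (b * k)} ∩ {b | F.IsK (k * b)} := by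
    ext b; simp [IsMult]
  rw [this]
  refine isClosed_iInter fun k => isClosed_iInter fun _ => ?_
  exact (F.isClosed_isK.preimage (continuous_id.mul continuous_const)).inter
    (F.isClosed_isK.preimage (continuous_const.mul continuous_id))

variable (F)

/-- The shift multiplies `IsK` into itself because it intertwines `er r` and `er (r + 1)`. -/
theorem isMult_S : F.IsMult F.S := fun k hk => by
  refine ⟨⟨?_, ?_⟩, ⟨?_, ?_⟩⟩
  · rw [← tendsto_add_atTop_iff_nat 1]
    simpa only [← mul_assoc, ← S_er, mul_zero] using
      (show Tendsto (fun r => F.S * F.er r * k) atTop (𝓝 (F.S * 0)) by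
        simpa only [mul_assoc] using hk.1.const_mul F.S)
  · simpa [mul_assoc] using hk.2.const_mul F.S
  · simpa [mul_assoc] using hk.1.mul_const F.S
  · simp only [mul_assoc, S_er]
    simpa [mul_assoc] using (((tendsto_add_atTop_iff_nat 1).2 hk.2).mul_const F.S)

theorem isMult_Sd : F.IsMult F.Sd := fun k hk => by
  refine ⟨⟨?_, ?_⟩, ⟨?_, ?_⟩⟩
  · simp only [← mul_assoc, er_Sd]
    simpa [mul_assoc] using (((tendsto_add_atTop_iff_nat 1).2 hk.1).const_mul F.Sd)
  · simpa [mul_assoc] using hk.2.const_mul F.Sd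
  · simpa [mul_assoc] using hk.1.mul_const F.Sd
  · rw [← tendsto_add_atTop_iff_nat 1]
    simp only [mul_assoc, ← er_Sd]
    simpa [mul_assoc] using hk.2.mul_const F.Sd

theorem isMult_lam (a : R) : F.IsMult (F.lam a) := fun k hk => by
  refine ⟨⟨?_, ?_⟩, ⟨?_, ?_⟩⟩
  · simp only [← mul_assoc, ← lam_er]
    simpa [mul_assoc] using hk.1.const_mul (F.lam a)
  · simpa [mul_assoc] using hk.2.const_mul (F.lam a)
  · simpa [mul_assoc] using hk.1.mul_const (F.lam a)
  · simp only [mul_assoc, lam_er]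
    simpa [mul_assoc] using hk.2.mul_const (F.lam a)

theorem isK_e : F.IsK F.e := by
  constructor
  · refine tendsto_const_nhds.congr' ?_
    filter_upwards [eventually_ge_atTop 1] with r hr
    obtain ⟨r, rfl⟩ := Nat.exists_eq_add_of_le' hr
    rw [er, pow_succ F.Sd, mul_assoc, mul_assoc, F.Sd_e]; simp
  · refine tendsto_const_nhds.congr' ?_
    filter_upwards [eventually_ge_atTop 1] with r hr
    obtain ⟨r, rfl⟩ := Nat.exists_eq_add_of_le' hr
    rw [er, pow_succ', ← mul_assoc, ← mul_assoc, F.e_S]; simp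

end Frame

end BottP

/-! ### Matrix corners of a frame -/

namespace BottP
open Set unitInterval Filter

namespace Frame

variable {R 𝓑 : Type} [NormedRing R] [NormedRing 𝓑] (F : Frame R 𝓑)
variable {α β : Type} [Fintype α] [DecidableEq α] [Fintype β] [DecidableEq β]

/-- Entrywise inclusion `λ` on matrices. -/
def L (β : Type) [Fintype β] [DecidableEq β] : Matrix β β R →+* Matrix β β 𝓑 := F.lam.mapMatrix

theorem L_apply (a : Matrix β β R) (i j : β) : F.L β a i j = F.lam (a i j) := rfl

/-- The scalar matrix with the corner projection on the diagonal. -/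
def E (β : Type) [Fintype β] [DecidableEq β] : Matrix β β 𝓑 := Matrix.diagonal fun _ => F.e

theorem L_E (a : Matrix β β R) : F.L β a * F.E β = F.E β * F.L β a := by
  ext i j
  rw [E, Matrix.mul_diagonal, Matrix.diagonal_mul, L_apply, F.lam_e]

theorem E_E : F.E β * F.E β = F.E β := by
  rw [E, Matrix.diagonal_mul_diagonal]
  simp only [F.e_e]

theorem L_E_injective {a b : Matrix β β R} (h : F.L β a * F.E β = F.L β b * F.E β) : a = b := by
  ext i j
  have := congrFun (congrFun h i) j
  rw [E, Matrix.mul_diagonal, Matrix.mul_diagonal, L_apply, L_apply] at this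
  rw [← F.om_lam (a i j), ← F.om_lam (b i j)]
  exact congrArg F.om this

variable (r : ℕ)

/-- The row of isometries `S ^ i e`. -/
def P (α : Type) [Fintype α] [DecidableEq α] : Matrix α (Fin r × α) 𝓑 :=
  Matrix.of fun k p => if k = p.2 then F.S ^ (p.1 : ℕ) * F.e else 0

/-- The column of coisometries `e S* ^ i`. -/
def Q (α : Type) [Fintype α] [DecidableEq α] : Matrix (Fin r × α) α 𝓑 :=
  Matrix.of fun p k => if p.2 = k then F.e * F.Sd ^ (p.1 : ℕ) else 0

theorem e_Sd_S_e (i j : ℕ) : F.e * F.Sd ^ i * (F.S ^ j * F.e) = if i = j then F.e else 0 := by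
  rw [mul_assoc, ← mul_assoc (F.Sd ^ i), pow_mul_pow_of_mul_eq_one F.Sd_mul_S]
  rcases lt_trichotomy i j with h | h | h
  · obtain ⟨k, rfl⟩ := Nat.exists_eq_add_of_lt h
    rw [if_neg (by omega), show i + k + 1 - i = k + 1 by omega, pow_succ', ← mul_assoc, ← mul_assoc,
      ← mul_assoc, F.e_S]
    simp
  · subst h; simp [F.e_e]
  · obtain ⟨k, rfl⟩ := Nat.exists_eq_add_of_lt h
    rw [if_neg (by omega), show j + k + 1 - j = k + 1 by omega, pow_succ, mul_assoc, mul_assoc,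
      F.Sd_e]
    simp

theorem Q_mul_P : F.Q r α * F.P r α = F.E (Fin r × α) := by
  ext ⟨i, k⟩ ⟨j, l⟩
  simp only [Matrix.mul_apply, Q, P, Matrix.of_apply, ite_mul, zero_mul, mul_ite, mul_zero, E,
    Matrix.diagonal_apply, Prod.mk.injEq, e_Sd_S_e,
    Fin.val_inj]
  by_cases h : k = l <;> simp [h]

theorem E_mul_Q : F.E (Fin r × α) * F.Q r α = F.Q r α := by
  ext ⟨i, k⟩ l
  simp only [E, Matrix.diagonal_mul, Q, Matrix.of_apply, mul_ite, ← mul_assoc, F.e_e, mul_zero]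

theorem sum_proj : ∑ i : Fin r, F.S ^ (i : ℕ) * F.e * (F.e * F.Sd ^ (i : ℕ)) = 1 - F.er r := by
  have h : ∀ i : ℕ, F.S ^ i * F.e * (F.e * F.Sd ^ i) = F.er i - F.er (i + 1) := fun i => by
    rw [mul_assoc, ← mul_assoc F.e, F.e_e, e, er, er, sub_mul, mul_sub, one_mul, pow_succ,
      pow_succ' F.Sd]
    simp only [mul_assoc]
  simp only [h]
  rw [Fin.sum_univ_eq_sum_range (fun i => F.er i - F.er (i + 1)) r, Finset.sum_range_sub']
  simp [er]

/-- Together with `Q_mul_P` this exhibits `(1 - er r) 𝓑 (1 - er r)` as the `r × r` matrices over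
`e 𝓑 e`. -/
theorem P_mul_Q : F.P r α * F.Q r α = Matrix.diagonal fun _ => 1 - F.er r := by
  ext k l
  simp only [Matrix.mul_apply, Q, P, Matrix.of_apply, ite_mul, zero_mul, mul_ite, mul_zero,
    Matrix.diagonal_apply]
  rw [Fintype.sum_prod_type]
  by_cases h : k = l
  · subst h
    rw [if_pos rfl, ← F.sum_proj r]
    refine Finset.sum_congr rfl fun i _ => ?_
    rw [Finset.sum_eq_single k (fun b _ hb => if_neg hb) (fun h => absurd (Finset.mem_univ _) h)]
    simp
  · rw [if_neg h]
    refine Finset.sum_eq_zero fun i _ => Finset.sum_eq_zero fun x _ => ?_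
    split_ifs with h1 h2
    · exact absurd (h2.trans h1) h
    · rfl
    · rfl

/-- Matrices over `R` of size `r · α` as a corner of the matrices over `𝓑` of size `α`. -/
def iM (α : Type) [Fintype α] [DecidableEq α] :
    Matrix (Fin r × α) (Fin r × α) R →ₙ+* Matrix α α 𝓑 where
  toFun a := F.P r α * F.L _ a * F.Q r α
  map_zero' := by simp
  map_add' a b := by rw [map_add, Matrix.mul_add, Matrix.add_mul]
  map_mul' a b := by
    have h1 : F.Q r α * (F.P r α * (F.L _ b * F.Q r α)) = F.L _ b * F.Q r α := by
      rw [← Matrix.mul_assoc, Q_mul_P, ← Matrix.mul_assoc, ← L_E, Matrix.mul_assoc, E_mul_Q]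
    simp only [Matrix.mul_assoc, map_mul, h1]

theorem iM_apply (a : Matrix (Fin r × α) (Fin r × α) R) :
    F.iM r α a = F.P r α * F.L _ a * F.Q r α := rfl

/-- The compression onto the corner. -/
def cM (α : Type) [Fintype α] [DecidableEq α] :
    Matrix α α 𝓑 →+ Matrix (Fin r × α) (Fin r × α) R where
  toFun b := Matrix.of fun p q => F.om (F.Sd ^ (p.1 : ℕ) * b p.2 q.2 * F.S ^ (q.1 : ℕ))
  map_zero' := by ext; simp
  map_add' a b := by ext; simp [mul_add, add_mul]

theorem Q_mul_mul_P (b : Matrix α α 𝓑) :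
    F.Q r α * b * F.P r α = F.L _ (F.cM r α b) * F.E _ := by
  ext ⟨i, k⟩ ⟨j, l⟩
  rw [E, Matrix.mul_diagonal, L_apply, Matrix.mul_apply]
  simp only [Matrix.mul_apply, Q, P, Matrix.of_apply, ite_mul, zero_mul, mul_ite, mul_zero,
    Finset.sum_ite_eq, Finset.sum_ite_eq', Finset.mem_univ, if_true]
  change _ = F.lam (F.om (F.Sd ^ (i : ℕ) * b k l * F.S ^ (j : ℕ))) * F.e
  rw [e, ← F.corner]
  simp only [mul_assoc]

theorem cM_iM (a : Matrix (Fin r × α) (Fin r × α) R) : F.cM r α (F.iM r α a) = a := by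
  apply F.L_E_injective
  rw [← Q_mul_mul_P, iM_apply]
  calc _ = (F.Q r α * F.P r α) * F.L _ a * (F.Q r α * F.P r α) := by simp only [Matrix.mul_assoc]
    _ = _ := by rw [Q_mul_P, ← L_E, Matrix.mul_assoc, E_E]

theorem iM_corner (a : Matrix (Fin r × α) (Fin r × α) R) (b : Matrix α α 𝓑)
    (a' : Matrix (Fin r × α) (Fin r × α) R) :
    F.iM r α a * b * F.iM r α a' = F.iM r α (a * F.cM r α b * a') := by
  rw [iM_apply, iM_apply, iM_apply]
  have h1 : F.Q r α * (b * (F.P r α * (F.L _ a' * F.Q r α))) =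
      F.L _ (F.cM r α b) * (F.L _ a' * F.Q r α) := by
    rw [← Matrix.mul_assoc, ← Matrix.mul_assoc, Q_mul_mul_P, Matrix.mul_assoc,
      ← Matrix.mul_assoc (F.E _), ← L_E, Matrix.mul_assoc, E_mul_Q]
  simp only [Matrix.mul_assoc, map_mul, h1]

theorem iM_cM (b : Matrix α α 𝓑) (k l : α) :
    F.iM r α (F.cM r α b) k l = (1 - F.er r) * b k l * (1 - F.er r) := by
  have : F.iM r α (F.cM r α b) = F.P r α * F.Q r α * b * (F.P r α * F.Q r α) := by
    rw [iM_apply]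
    have h1 : F.L _ (F.cM r α b) * F.Q r α = F.Q r α * (b * (F.P r α * F.Q r α)) := by
      rw [← Matrix.mul_assoc, ← Matrix.mul_assoc, Q_mul_mul_P, Matrix.mul_assoc, E_mul_Q]
    simp only [Matrix.mul_assoc, h1]
  rw [this, P_mul_Q, Matrix.mul_diagonal, Matrix.diagonal_mul]

theorem continuous_L : Continuous (F.L β) := continuous_id.matrix_map F.continuous_lam

theorem continuous_iM : Continuous (F.iM r α) := by
  change Continuous fun a : Matrix (Fin r × α) (Fin r × α) R =>
    (F.P r α * F.L (Fin r × α) a * F.Q r α : Matrix α α 𝓑)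
  exact (continuous_const.matrix_mul F.continuous_L).matrix_mul continuous_const

theorem continuous_cM : Continuous (F.cM r α) := by
  refine continuous_pi fun p => continuous_pi fun q => ?_
  exact F.continuous_om.comp ((continuous_const.mul
    (continuous_id.matrix_elem p.2 q.2)).mul continuous_const)

/-- The corner inclusion `a ↦ λ(a) e`. -/
def kM (α : Type) [Fintype α] [DecidableEq α] : Matrix α α R →ₙ+* Matrix α α 𝓑 where
  toFun a := F.L α a * F.E α
  map_zero' := by simp
  map_add' a b := by rw [map_add, Matrix.add_mul]
  map_mul' a b := by
    rw [map_mul, Matrix.mul_assoc (F.L α a) (F.E α), ← Matrix.mul_assoc (F.E α), ← L_E,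
      Matrix.mul_assoc (F.L α b), E_E, Matrix.mul_assoc]

theorem kM_apply (a : Matrix α α R) (i j : α) : F.kM α a i j = F.lam (a i j) * F.e := by
  change (F.L α a * F.E α) i j = _
  rw [E, Matrix.mul_diagonal, L_apply]

/-- The corner inclusion on general linear groups. -/
def kap (α : Type) [Fintype α] [DecidableEq α] : GLR α R →* GLR α 𝓑 := unitsOne (F.kM α)

theorem continuous_kap : Continuous (F.kap α) :=
  continuous_unitsOne _ (F.continuous_L.matrix_mul continuous_const)

/-- The inclusion of the first block. -/
def zeroEmb (r : ℕ) (α : Type) : α ↪ Fin (r + 1) × α := ⟨fun a => (0, a), fun _ _ h => (Prod.mk.inj h).2⟩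

theorem cM_kM (a : Matrix α α R) : F.cM (r + 1) α (F.kM α a) = pad (zeroEmb r α) a := by
  have h0 : ∀ (x : R) (i j : ℕ), F.om (F.Sd ^ i * (F.lam x * F.e) * F.S ^ j) =
      if i = 0 ∧ j = 0 then x else 0 := by
    intro x i j
    rcases i with _ | i
    · rcases j with _ | j
      · have := F.om_lam x
        simpa [e] using this
      · rw [pow_succ', mul_assoc, mul_assoc, ← mul_assoc F.e, F.e_S]
        simp
    · rw [F.lam_e, pow_succ, mul_assoc (F.Sd ^ i), ← mul_assoc F.Sd, F.Sd_e]
      simp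
  ext ⟨i, k⟩ ⟨j, l⟩
  change F.om (F.Sd ^ (i : ℕ) * F.kM α a k l * F.S ^ (j : ℕ)) = _
  rw [kM_apply, h0]
  by_cases hi : i = 0
  · by_cases hj : j = 0
    · subst hi hj
      rw [if_pos (by simp)]
      exact (pad_apply_self (zeroEmb r α) a k l).symm
    · rw [pad_apply_right _ _ _ _ fun k h => hj (Prod.mk.inj h).1, if_neg fun h => hj (Fin.ext h.2)]
  · rw [pad_apply_left _ _ _ _ fun k h => hi (Prod.mk.inj h).1, if_neg fun h => hi (Fin.ext h.1)]

theorem iM_pad (a : Matrix α α R) : F.iM (r + 1) α (pad (zeroEmb r α) a) = F.kM α a := by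
  ext k l
  rw [← F.cM_kM, iM_cM, kM_apply]
  have h1 : F.er (r + 1) * F.e = 0 := by rw [er, pow_succ F.Sd, mul_assoc, mul_assoc, F.Sd_e]; simp
  have h2 : F.e * F.er (r + 1) = 0 := by rw [er, pow_succ', ← mul_assoc, ← mul_assoc, F.e_S]; simp
  generalize a k l = x
  have h3 : F.er (r + 1) * (F.lam x * F.e) = 0 := by rw [F.lam_e, ← mul_assoc, h1, zero_mul]
  have h4 : F.lam x * F.e * F.er (r + 1) = 0 := by rw [mul_assoc, h2, mul_zero]
  rw [sub_mul, h3, one_mul, sub_zero, mul_sub, h4, mul_one, sub_zero]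

/-- The corner inclusion `kap` is the composite of stabilization and the inclusion of the finite
corner of size `r + 1`. -/
theorem unitsOne_iM_st (u : GLR α R) :
    unitsOne (F.iM (r + 1) α) (st (zeroEmb r α) u) = F.kap α u := by
  ext1
  rw [kap, val_unitsOne, val_unitsOne, st, val_unitsOne, add_sub_cancel_left, iM_pad]

end Frame

end BottP

/-! ### Truncation -/

namespace BottP
open Set unitInterval Filter

/-- A property holding locally for all large indices holds uniformly over a compact space. -/
theorem eventually_forall_of_compact {Z : Type*} [TopologicalSpace Z] [CompactSpace Z]
    {P : ℕ × Z → Prop} (h : ∀ z, ∀ᶠ p in atTop ×ˢ 𝓝 z, P p) : ∃ N, ∀ r ≥ N, ∀ z, P (r, z) := by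
  have := isCompact_univ.mem_prod_nhdsSet_of_forall (s := {p | P p}) fun z _ => h z
  rw [nhdsSet_univ, mem_prod_top] at this
  exact eventually_atTop.1 this

namespace Frame

variable {R 𝓑 : Type} [NormedRing R] [NormedRing 𝓑] [NormedAlgebra ℂ 𝓑] (F : Frame R 𝓑)
variable {α : Type} [Fintype α] [DecidableEq α]

theorem isMult_er (r : ℕ) : F.IsMult (F.er r) := (F.isMult_S.pow r).mul (F.isMult_Sd.pow r)

/-- The linear path from `f` to `1 + (1 - er r) (f - 1) (1 - er r)`, which lies in a finite corner. -/
def trunc {X : Type*} (f : X → Matrix α α 𝓑) (r : ℕ) (p : X × I) : Matrix α α 𝓑 :=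
  Matrix.of fun i j => f p.1 i j - ((p.2 : ℝ) : ℂ) •
    (F.er r * (f p.1 - 1) i j + (f p.1 - 1) i j * F.er r - F.er r * (f p.1 - 1) i j * F.er r)

theorem trunc_zero {X : Type*} (f : X → Matrix α α 𝓑) (r : ℕ) (x : X) :
    F.trunc f r (x, 0) = f x := by
  ext i j; simp [trunc]

theorem trunc_one {X : Type*} (f : X → Matrix α α 𝓑) (r : ℕ) (x : X) :
    F.trunc f r (x, 1) = 1 + F.iM r α (F.cM r α (f x - 1)) := by
  ext i j
  rw [Matrix.add_apply, iM_cM]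
  have : f x i j = (1 : Matrix α α 𝓑) i j + (f x - 1) i j := by simp
  simp only [trunc, Matrix.of_apply, Icc.coe_one, Complex.ofReal_one, one_smul, this]
  noncomm_ring

theorem continuous_trunc {X : Type*} [TopologicalSpace X] {f : X → Matrix α α 𝓑}
    (hf : Continuous f) (r : ℕ) : Continuous (F.trunc f r) := by
  refine continuous_matrix fun i j => ?_
  have h1 : Continuous fun p : X × I => f p.1 i j := (hf.comp continuous_fst).matrix_elem i j
  have h2 : Continuous fun p : X × I => (f p.1 - 1) i j :=
    ((hf.comp continuous_fst).sub continuous_const).matrix_elem i j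
  have h3 : Continuous fun p : X × I => ((p.2 : ℝ) : ℂ) :=
    Complex.continuous_ofReal.comp (continuous_subtype_val.comp continuous_snd)
  exact h1.sub (h3.smul (((continuous_const.mul h2).add (h2.mul continuous_const)).sub
    ((continuous_const.mul h2).mul continuous_const)))

/-- Truncation converges to the identity locally uniformly, so for large `r` it stays among the
invertible matrices. -/
theorem tendsto_trunc {X : Type*} [TopologicalSpace X] {f : X → Matrix α α 𝓑}
    (hf : Continuous f) (hK : ∀ x i j, F.IsK ((f x - 1) i j)) (z : X × I) :
    Tendsto (fun p : ℕ × (X × I) => F.trunc f p.1 p.2) (atTop ×ˢ 𝓝 z) (𝓝 (f z.1)) := by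
  refine tendsto_pi_nhds.2 fun i => tendsto_pi_nhds.2 fun j => ?_
  have hs : Tendsto (fun p : ℕ × (X × I) => p.2) (atTop ×ˢ 𝓝 z) (𝓝 z) := tendsto_snd
  have h1 : Tendsto (fun p : ℕ × (X × I) => f p.2.1 i j) (atTop ×ˢ 𝓝 z) (𝓝 (f z.1 i j)) :=
    (((hf.comp continuous_fst).matrix_elem i j).tendsto z).comp hs
  have h2 : Tendsto (fun p : ℕ × (X × I) => (f p.2.1 - 1) i j) (atTop ×ˢ 𝓝 z)
      (𝓝 ((f z.1 - 1) i j)) :=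
    ((((hf.comp continuous_fst).sub continuous_const).matrix_elem i j).tendsto z).comp hs
  have h3 : Tendsto (fun p : ℕ × (X × I) => ((p.2.2 : ℝ) : ℂ)) (atTop ×ˢ 𝓝 z)
      (𝓝 ((z.2 : ℝ) : ℂ)) :=
    ((Complex.continuous_ofReal.comp (continuous_subtype_val.comp continuous_snd)).tendsto z).comp hs
  have h4 := tendsto_er_mul (F := F) tendsto_fst h2 (hK z.1 i j).1
  have h5 := tendsto_mul_er (F := F) tendsto_fst h2 (hK z.1 i j).2
  have h6 := tendsto_mul_er (F := F) tendsto_fst h4 (by simp)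
  have := h1.sub (h3.smul ((h4.add h5).sub h6))
  rw [add_zero, sub_zero, smul_zero, sub_zero] at this
  exact this

/-- Invertible families congruent to `1` modulo the ideal of the frame deform to families coming
from finite corners. -/
theorem exists_truncation [CompleteSpace R] [CompleteSpace 𝓑] {X : Type*} [TopologicalSpace X]
    [CompactSpace X] (f : X → GLR α 𝓑) (hf : Continuous f)
    (hK : ∀ x i j, F.IsK (((f x : Matrix α α 𝓑) - 1) i j)) :
    ∃ (r : ℕ) (g : X → GLR (Fin (r + 1) × α) R) (H : X × I → GLR α 𝓑), Continuous g ∧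
      Continuous H ∧ (∀ x, H (x, 0) = f x) ∧ (∀ x, H (x, 1) = unitsOne (F.iM (r + 1) α) (g x)) ∧
      (∀ p i j, F.IsK (((H p : Matrix α α 𝓑) - 1) i j)) ∧ (∀ x, f x = 1 → ∀ t, H (x, t) = 1) ∧
      ∀ x u, f x = F.kap α u → g x = st (zeroEmb r α) u := by
  have hv : Continuous fun x => (f x : Matrix α α 𝓑) := Units.continuous_val.comp hf
  obtain ⟨N, hN⟩ := eventually_forall_of_compact (Z := X × I)
    (P := fun p => IsUnit (F.trunc (fun x => (f x : Matrix α α 𝓑)) p.1 p.2)) fun z => by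
      refine (F.tendsto_trunc hv hK z).eventually (IsOpen.mem_nhds (s := {a | IsUnit a}) ?_ ?_)
      · exact (isOpenEmbedding_val_GLR α 𝓑).isOpen_range
      · exact (f z.1).isUnit
  obtain ⟨H, hH, hHv⟩ := exists_units_lift _ (F.continuous_trunc hv (N + 1)) (hN (N + 1) (by omega))
  have hiM : ∀ a b, F.iM (N + 1) α a = F.iM (N + 1) α b → a = b := fun a b h => by
    rw [← F.cM_iM (N + 1) a, h, F.cM_iM]
  obtain ⟨g, hg, hgv⟩ := exists_corner_lift (A := Matrix (Fin (N + 1) × α) (Fin (N + 1) × α) R)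
    (B := Matrix α α 𝓑) (F.iM (N + 1) α) (F.cM (N + 1) α) (F.cM_iM (N + 1))
    (F.continuous_cM (N + 1)) (F.iM_corner (N + 1)) (fun x => H (x, 1))
    (hH.comp (by fun_prop)) fun x => ⟨_, by rw [hHv, trunc_one]⟩
  refine ⟨N, g, H, hg, hH, ?_, fun x => (hgv x).symm, ?_, ?_, ?_⟩
  · intro x; ext1; rw [hHv, trunc_zero]
  · rintro ⟨x, t⟩ i j
    rw [hHv]
    have hk := hK x i j
    have h1 := (F.isMult_er (N + 1) _ hk).1
    have h2 := (F.isMult_er (N + 1) _ hk).2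
    have h3 := (F.isMult_er (N + 1) _ h1).2
    have := hk.sub (((h1.add h2).sub h3).smul ((t : ℝ) : ℂ))
    convert this using 1
    simp only [trunc, Matrix.sub_apply, Matrix.of_apply]
    abel
  · intro x hx t
    ext1
    rw [hHv]
    ext i j
    simp [trunc, hx]
  · intro x u hx
    apply unitsOne_injective (F.iM (N + 1) α) (fun a b => hiM a b)
    rw [hgv, unitsOne_iM_st]
    ext1
    rw [hHv, trunc_one, hx, kap, val_unitsOne, add_sub_cancel_left, cM_kM, iM_pad]

end Frame

/-- The `(0, 0)` coefficient on the Toeplitz algebra. -/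
noncomputable def toeOm : Toe →L[ℂ] ℂ :=
  lin (fun x : Bic => if x.a + x.b = 0 then (1 : ℂ) else 0) 1 (fun x => by split_ifs <;> simp)

theorem toeOm_mono (x : Bic) : toeOm (mono x) = if x.a + x.b = 0 then (1 : ℂ) else 0 :=
  lin_mono _ _ _ _

theorem toe_e_tS : (1 - tS * tSd) * tS = 0 := by
  rw [sub_mul, mul_assoc, tSd_mul_tS]; simp

theorem toe_tSd_e : tSd * (1 - tS * tSd) = 0 := by
  rw [mul_sub, ← mul_assoc, tSd_mul_tS]; simp

theorem toe_corner (b : Toe) :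
    (1 - tS * tSd) * b * (1 - tS * tSd) = algebraMap ℂ Toe (toeOm b) * (1 - tS * tSd) := by
  refine A1.induction (p := fun b => (1 - tS * tSd) * b * (1 - tS * tSd) =
    algebraMap ℂ Toe (toeOm b) * (1 - tS * tSd)) ?_ ?_ ?_ ?_ b
  · exact isClosed_eq ((continuous_const.mul continuous_id).mul continuous_const)
      (((continuous_algebraMap ℂ Toe).comp toeOm.continuous).mul continuous_const)
  · simp
  · intro x y hx hy
    rw [mul_add, add_mul, hx, hy, map_add, map_add, add_mul]
  · intro c x
    rw [map_smul, toeOm_mono, mul_smul_comm, smul_mul_assoc]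
    rcases x with ⟨a, b⟩
    rw [mono_bic]
    rcases a with _ | a
    · rcases b with _ | b
      · have : (1 - tS * tSd) * (1 - tS * tSd) = 1 - tS * tSd := by
          rw [mul_sub (1 - tS * tSd) 1, ← mul_assoc, toe_e_tS]; simp
        simp [this, Algebra.smul_def]
      · rw [if_neg (by simp), pow_zero, one_mul, pow_succ, ← mul_assoc, mul_assoc _ tSd, toe_tSd_e]
        simp
    · rw [if_neg (by simp), pow_succ', ← mul_assoc, ← mul_assoc, toe_e_tS]
      simp

/-- The frame of the Toeplitz algebra over the scalars. -/
noncomputable def toeFrame : Frame ℂ Toe where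
  S := tS
  Sd := tSd
  Sd_mul_S := tSd_mul_tS
  lam := algebraMap ℂ Toe
  continuous_lam := continuous_algebraMap ℂ Toe
  lam_S a := Algebra.commutes a _
  lam_Sd a := Algebra.commutes a _
  om := toeOm.toLinearMap.toAddMonoidHom
  continuous_om := toeOm.continuous
  corner b := toe_corner b
  om_lam a := by
    have h1 : (1 : Toe) = mono 1 := mono_one.symm
    have h2 : tS * tSd = mono ⟨1, 1⟩ := by rw [mono_bic]; simp
    change toeOm (algebraMap ℂ Toe a * (1 - tS * tSd)) = a
    rw [← Algebra.smul_def, map_smul, map_sub, h2, h1, toeOm_mono, toeOm_mono]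
    simp [Bic.one_def]
  C := 1
  bdd r := by
    have := mono_bic ⟨r, r⟩
    rw [← this, norm_mono]

theorem sym_tS_tSd : sym tS * sym tSd = 1 := by
  rw [tS, tSd, sym, mapA_mono, mapA_mono, ← mono_mul, ← map_mul]
  simp [bicDeg, Bic.mul_def, mono_one]

theorem sym_of_isK {k : Toe} (hk : toeFrame.IsK k) : sym k = 0 := by
  have h1 : ∀ r, sym (k * toeFrame.er r) = sym k := fun r => by
    have h : Commute (sym tS) (sym tSd) := by
      rw [Commute, SemiconjBy, sym_tS_tSd, ← map_mul, tSd_mul_tS, map_one]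
    have : sym (toeFrame.er r) = 1 := by
      change sym (tS ^ r * tSd ^ r) = 1
      rw [map_mul, map_pow, map_pow, ← h.mul_pow, sym_tS_tSd, one_pow]
    rw [map_mul, this, mul_one]
  have h2 := (continuous_sym.tendsto 0).comp hk.2
  simp only [Function.comp_def, h1, map_zero] at h2
  exact tendsto_nhds_unique tendsto_const_nhds h2

/-- Modulo the ideal, every word of the bicyclic monoid equals the standard word of its degree. -/
theorem isK_sub_sec (x : Toe) : toeFrame.IsK (x - sec (sym x)) := by
  refine A1.induction (p := fun x => toeFrame.IsK (x - sec (sym x))) ?_ ?_ ?_ ?_ x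
  · exact toeFrame.isClosed_isK.preimage
      (continuous_id.sub (sec.continuous.comp continuous_sym))
  · simpa using Frame.IsK.zero
  · intro x y hx hy
    convert hx.add hy using 1
    rw [map_add, map_add]; abel
  · intro c x
    rw [sym_smul, map_smul, ← smul_sub]
    refine Frame.IsK.smul c ?_
    have he : ∀ r, toeFrame.IsK (1 - toeFrame.er r) := fun r => by
      rw [← toeFrame.sum_proj]
      exact Frame.IsK.sum _ _ fun i _ =>
        ((toeFrame.isMult_S.pow i) _ toeFrame.isK_e).1.mul
          ((toeFrame.isMult_Sd.pow i) _ toeFrame.isK_e).2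
    have h3 : ∀ r, mono (⟨r, r⟩ : Bic) = toeFrame.er r := fun r => mono_bic _
    -- deleting a factor `S ^ r S* ^ r` inside a word changes it by an element of the ideal
    have key : ∀ y z : Bic, ∀ r, x = y * ⟨r, r⟩ * z → degSec (bicDeg x) = y * z →
        toeFrame.IsK (mono x - mono (degSec (bicDeg x))) := by
      intro y z r h1 h2
      rw [h2, h1, mono_mul, mono_mul, mono_mul, h3, show mono y * toeFrame.er r * mono z -
        mono y * mono z = - (mono y * (1 - toeFrame.er r) * mono z) by noncomm_ring]
      have hm : ∀ y : Bic, toeFrame.IsMult (mono y) := fun y => by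
        rw [mono_bic]; exact (toeFrame.isMult_S.pow _).mul (toeFrame.isMult_Sd.pow _)
      exact ((hm z _ (hm y _ (he r)).1).2).neg
    rw [show sym (mono x) = mono (bicDeg x) from mapA_mono _ _, sec_mono]
    refine key ⟨x.a - x.b, 0⟩ ⟨0, x.b - x.a⟩ (min x.a x.b) ?_ ?_
    · rw [Bic.mul_def, Bic.mul_def]; ext <;> simp; omega
    · rw [Bic.mul_def]; ext <;> simp [degSec, bicDeg]

/-- With `sym_of_isK`: the kernel of the symbol is the ideal `IsK`. -/
theorem isK_of_sym {x : Toe} (h : sym x = 0) : toeFrame.IsK x := by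
  have := isK_sub_sec x
  rwa [h, map_zero, sub_zero] at this

end BottP

/-! ### Operators on bounded sequences -/

set_option linter.unusedVariables false

namespace BottP
open Set unitInterval Filter
open scoped BoundedContinuousFunction

section Op

variable (R : Type) [NormedRing R] [NormedAlgebra ℂ R] [NormOneClass R]

/-- Operators on `ℓ^∞(ℕ, R)` from linear maps on sequences. -/
noncomputable def mkOp (A : (ℕ → R) →ₗ[ℂ] (ℕ → R)) (C : ℝ)
    (hA : ∀ f M, 0 ≤ M → (∀ n, ‖f n‖ ≤ M) → ∀ n, ‖A f n‖ ≤ C * M) : (ℕ →ᵇ R) →L[ℂ] (ℕ →ᵇ R) :=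
  LinearMap.mkContinuousOfExistsBound
    { toFun := fun f => BoundedContinuousFunction.ofNormedAddCommGroupDiscrete (A f) (C * ‖f‖)
        (hA f ‖f‖ (norm_nonneg _) f.norm_coe_le_norm)
      map_add' := fun f g => by
        ext n
        change A (f + g : ℕ →ᵇ R) n = A f n + A g n
        rw [BoundedContinuousFunction.coe_add, map_add]; rfl
      map_smul' := fun c f => by
        ext n
        change A (c • f : ℕ →ᵇ R) n = c • A f n
        rw [BoundedContinuousFunction.coe_smul]
        exact congrFun (A.map_smul c f) n }
    ⟨|C|, fun f => (BoundedContinuousFunction.norm_le (by positivity)).2 fun n =>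
      (hA f ‖f‖ (norm_nonneg _) f.norm_coe_le_norm n).trans (by gcongr; exact le_abs_self C)⟩

theorem mkOp_apply (A : (ℕ → R) →ₗ[ℂ] (ℕ → R)) (C : ℝ) (hA) (f : ℕ →ᵇ R) (n : ℕ) :
    mkOp R A C hA f n = A f n := rfl

/-- Coordinatewise right multiplication. -/
noncomputable def rOp (a : R) : (ℕ →ᵇ R) →L[ℂ] (ℕ →ᵇ R) :=
  mkOp R { toFun := fun f n => f n * a
           map_add' := fun f g => by ext n; simp [add_mul]
           map_smul' := fun c f => by ext n; simp } ‖a‖ fun f M hM h n => by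
    refine (norm_mul_le _ _).trans ?_
    rw [mul_comm]; exact mul_le_mul_of_nonneg_left (h n) (norm_nonneg _)

/-- The bounded right `R`-linear operators on `ℓ^∞(ℕ, R)`. -/
noncomputable abbrev OpAlg : Subalgebra ℂ ((ℕ →ᵇ R) →L[ℂ] (ℕ →ᵇ R)) :=
  Subalgebra.centralizer ℂ (Set.range (rOp R))

/-- The algebra of bounded right `R`-linear operators as a type. -/
def Op : Type := OpAlg R

noncomputable instance : NormedRing (Op R) := inferInstanceAs (NormedRing (OpAlg R))

noncomputable instance : NormedAlgebra ℂ (Op R) := inferInstanceAs (NormedAlgebra ℂ (OpAlg R))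


theorem mem_opAlg {T : (ℕ →ᵇ R) →L[ℂ] (ℕ →ᵇ R)} :
    T ∈ OpAlg R ↔ ∀ a f n, T (rOp R a f) n = T f n * a := by
  rw [Subalgebra.mem_centralizer_iff]
  constructor
  · intro h a f n
    have := h _ ⟨a, rfl⟩
    exact (congrArg (fun T : (ℕ →ᵇ R) →L[ℂ] (ℕ →ᵇ R) => T f n) this).symm
  · rintro h _ ⟨a, rfl⟩
    ext f n
    exact (h a f n).symm

theorem continuous_op_eval (f : ℕ →ᵇ R) (n : ℕ) :
    Continuous fun T : (ℕ →ᵇ R) →L[ℂ] (ℕ →ᵇ R) => T f n :=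
  (continuous_eval_const n).comp (ContinuousLinearMap.apply ℂ (ℕ →ᵇ R) f).continuous

instance [CompleteSpace R] : CompleteSpace (Op R) := by
  have : IsClosed ((OpAlg R : Subalgebra ℂ _) : Set ((ℕ →ᵇ R) →L[ℂ] (ℕ →ᵇ R))) := by
    have h : ((OpAlg R : Subalgebra ℂ _) : Set ((ℕ →ᵇ R) →L[ℂ] (ℕ →ᵇ R))) =
        ⋂ a, ⋂ f, ⋂ n, {T | T (rOp R a f) n = T f n * a} := by
      ext T; simp only [SetLike.mem_coe, mem_opAlg, mem_iInter, mem_ofPred_eq]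
    rw [h]
    exact isClosed_iInter fun a => isClosed_iInter fun f => isClosed_iInter fun n =>
      isClosed_eq (continuous_op_eval R _ n) ((continuous_op_eval R _ n).mul continuous_const)
  have h2 : CompleteSpace (OpAlg R) := this.completeSpace_coe
  exact h2

variable {R}

theorem Op.ext' {T U : Op R} (h : ∀ f n, T.1 f n = U.1 f n) : T = U := by
  apply Subtype.ext
  ext f n
  exact h f n

/-- The shift of sequences. -/
def seqS : (ℕ → R) →ₗ[ℂ] (ℕ → R) where
  toFun f n := Nat.casesOn n 0 f
  map_add' f g := by ext n; cases n <;> simp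
  map_smul' c f := by ext n; cases n <;> simp

/-- The backward shift of sequences. -/
def seqSd : (ℕ → R) →ₗ[ℂ] (ℕ → R) where
  toFun f n := f (n + 1)
  map_add' f g := rfl
  map_smul' c f := rfl

/-- Left multiplication of sequences. -/
def seqL (a : R) : (ℕ → R) →ₗ[ℂ] (ℕ → R) where
  toFun f n := a * f n
  map_add' f g := by ext n; simp [mul_add]
  map_smul' c f := by ext n; simp

/-- The unilateral shift. -/
noncomputable def opS : Op R :=
  Subtype.mk (mkOp R seqS 1 fun f M hM h n => by cases n <;> simp [seqS, hM, h])
    ((mem_opAlg R).2 fun a f n => by cases n <;> simp [mkOp_apply, rOp, seqS])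

/-- The backward shift. -/
noncomputable def opSd : Op R :=
  Subtype.mk (mkOp R seqSd 1 fun f M hM h n => by simp [h, seqSd])
    ((mem_opAlg R).2 fun a f n => rfl)

theorem opS_zero (f : ℕ →ᵇ R) : (opS : Op R).1 f 0 = 0 := rfl
theorem opS_succ (f : ℕ →ᵇ R) (n : ℕ) : (opS : Op R).1 f (n + 1) = f n := rfl
theorem opSd_apply (f : ℕ →ᵇ R) (n : ℕ) : (opSd : Op R).1 f n = f (n + 1) := rfl

/-- Coordinatewise left multiplication. -/
noncomputable def opLam : R →+* Op R where
  toFun a := Subtype.mk (mkOp R (seqL a) ‖a‖ fun f M hM h n =>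
      (norm_mul_le _ _).trans (mul_le_mul_of_nonneg_left (h n) (norm_nonneg _)))
    ((mem_opAlg R).2 fun b f n => (mul_assoc _ _ _).symm)
  map_one' := Op.ext' fun f n => one_mul _
  map_zero' := Op.ext' fun f n => zero_mul _
  map_add' a b := Op.ext' fun f n => add_mul _ _ _
  map_mul' a b := Op.ext' fun f n => mul_assoc _ _ _

theorem opLam_apply (a : R) (f : ℕ →ᵇ R) (n : ℕ) : (opLam a).1 f n = a * f n := rfl

theorem norm_op_le {T : Op R} {C : ℝ} (hC : 0 ≤ C)
    (h : ∀ (f : ℕ →ᵇ R) (n : ℕ), ‖T.1 f n‖ ≤ C * ‖f‖) : ‖T‖ ≤ C :=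
  ContinuousLinearMap.opNorm_le_bound _ hC fun f =>
    (BoundedContinuousFunction.norm_le (by positivity)).2 (h f)

theorem norm_opLam (a : R) : ‖opLam a‖ ≤ ‖a‖ := norm_op_le (norm_nonneg _) fun f n =>
  (norm_mul_le _ _).trans (mul_le_mul_of_nonneg_left (f.norm_coe_le_norm n) (norm_nonneg _))

theorem norm_opS : ‖(opS : Op R)‖ ≤ 1 := norm_op_le zero_le_one fun f n => by
  rw [one_mul]
  rcases n with _ | n
  · rw [opS_zero, norm_zero]; exact norm_nonneg _
  · exact f.norm_coe_le_norm n

theorem norm_opSd : ‖(opSd : Op R)‖ ≤ 1 := norm_op_le zero_le_one fun f n => by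
  rw [one_mul]; exact f.norm_coe_le_norm _

theorem op_mul_apply (T U : Op R) (f : ℕ →ᵇ R) (n : ℕ) : (T * U).1 f n = T.1 (U.1 f) n := rfl

/-- The sequence `(1, 0, 0, …)`. -/
noncomputable def delta : ℕ →ᵇ R :=
  BoundedContinuousFunction.ofNormedAddCommGroupDiscrete (fun n => if n = 0 then (1 : R) else 0) 1
    fun n => by split_ifs <;> simp

theorem op_e_apply (f : ℕ →ᵇ R) (n : ℕ) :
    (1 - opS * opSd : Op R).1 f n = if n = 0 then f 0 else 0 := by
  change f n - (opS : Op R).1 ((opSd : Op R).1 f) n = _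
  rcases n with _ | n
  · rw [opS_zero]; simp
  · rw [opS_succ, opSd_apply]; simp

theorem op_e_eq (f : ℕ →ᵇ R) : (1 - opS * opSd : Op R).1 f = rOp R (f 0) delta := by
  ext n
  rw [op_e_apply]
  change _ = (if n = 0 then (1 : R) else 0) * f 0
  split_ifs <;> simp

/-- The frame of the algebra of right `R`-linear operators. -/
noncomputable def opFrame (R : Type) [NormedRing R] [NormedAlgebra ℂ R] [NormOneClass R] :
    Frame R (Op R) where
  S := opS
  Sd := opSd
  Sd_mul_S := Op.ext' fun f n => rfl
  lam := opLam
  continuous_lam := AddMonoidHomClass.continuous_of_bound (opLam : R →+* Op R) 1 fun a => by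
    rw [one_mul]; exact norm_opLam a
  lam_S a := Op.ext' fun f n => by
    rw [op_mul_apply, op_mul_apply, opLam_apply]
    rcases n with _ | n
    · rw [opS_zero, opS_zero, mul_zero]
    · rfl
  lam_Sd a := Op.ext' fun f n => rfl
  om := { toFun := fun T => T.1 delta 0
          map_zero' := rfl
          map_add' := fun T U => rfl }
  continuous_om := by
    change Continuous fun T : Op R => T.1 delta 0
    exact (continuous_op_eval R delta 0).comp continuous_subtype_val
  corner b := Op.ext' fun f n => by
    rw [op_mul_apply, op_mul_apply, op_mul_apply, op_e_apply, opLam_apply, op_e_apply, op_e_eq,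
      (mem_opAlg R).1 b.2]
    split_ifs
    · rfl
    · simp
  om_lam a := by
    change (opLam a * (1 - opS * opSd) : Op R).1 delta 0 = a
    rw [op_mul_apply, opLam_apply, op_e_apply]
    simp [delta]
  C := 1
  bdd r := by
    have h1 : ∀ T : Op R, ‖T‖ ≤ 1 → ‖T ^ r‖ ≤ 1 := fun T hT => by
      induction r with
      | zero =>
        rw [pow_zero]
        exact norm_op_le zero_le_one fun f n => by rw [one_mul]; exact f.norm_coe_le_norm _
      | succ r ih =>
        rw [pow_succ]
        exact (norm_mul_le (T ^ r) T).trans (mul_le_one₀ ih (norm_nonneg T) hT)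
    exact (norm_mul_le ((opS : Op R) ^ r) (opSd ^ r)).trans
      (mul_le_one₀ (h1 _ norm_opS) (norm_nonneg ((opSd : Op R) ^ r)) (h1 _ norm_opSd))

end Op

end BottP

/-! ### Rotating isometries -/

namespace BottP
open Set unitInterval Filter
open scoped BoundedContinuousFunction

namespace Frame

section Abstract

variable {R 𝓑 : Type} [NormedRing R] [NormedRing 𝓑] [NormedAlgebra ℂ 𝓑] (F : Frame R 𝓑)

/-- The isometries interpolating between `S` and `λ(d) e + S (1 - e)`. -/
noncomputable def rotV (d : R) (s c : ℂ) : 𝓑 :=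
  s • (F.lam d * F.e) + c • (F.S * F.e) + F.S * (1 - F.e)

/-- The left inverses of the interpolating isometries. -/
noncomputable def rotW (d : R) (β α : ℂ) : 𝓑 :=
  β • (F.lam d * F.e) + α • (F.e * F.Sd) + (1 - F.e) * F.Sd

theorem rotW_mul_rotV {d d' : R} (h : d' * d = 1) {s c β α : ℂ} (hc : β * s + α * c = 1) :
    F.rotW d' β α * F.rotV d s c = 1 := by
  have h1 : ∀ x, F.Sd * (F.S * x) = x := fun x => by rw [← mul_assoc, F.Sd_mul_S, one_mul]
  have h2 : ∀ x, F.e * (F.S * x) = 0 := fun x => by rw [← mul_assoc, F.e_S, zero_mul]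
  have h3 : F.Sd * F.e = 0 := F.Sd_e
  have h4 : F.e * F.e = F.e := F.e_e
  have h5 : F.lam d' * (F.e * (F.lam d * F.e)) = F.e := by
    rw [← mul_assoc F.e, ← F.lam_e, mul_assoc, h4, ← mul_assoc, ← map_mul, h, map_one, one_mul]
  have h6 : F.Sd * (F.lam d * F.e) = 0 := by
    rw [← mul_assoc, ← F.lam_Sd, mul_assoc, h3, mul_zero]
  have h7 : F.Sd * F.S = 1 := F.Sd_mul_S
  have h8 : F.e * F.S = 0 := F.e_S
  simp only [rotW, rotV, add_mul, mul_add, sub_mul, mul_sub, one_mul, mul_one, smul_mul_assoc,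
    mul_smul_comm, mul_assoc, h1, h2, h4, h5, h6, h7, h8, mul_zero, smul_zero, add_zero,
    zero_add, sub_self, smul_smul]
  rw [add_sub_cancel_left, ← add_smul, mul_comm s, mul_comm c, hc, one_smul]
  abel

end Abstract

end Frame

theorem opFrame_e_apply {R : Type} [NormedRing R] [NormedAlgebra ℂ R] [NormOneClass R]
    (f : ℕ →ᵇ R) (n : ℕ) : (opFrame R).e.1 f n = if n = 0 then f 0 else 0 := op_e_apply f n

section Norms

variable {R : Type} [NormedRing R] [NormedAlgebra ℂ R] [NormOneClass R]

theorem norm_rotV {d : R} (hd : ‖d‖ ≤ 1) {s c : ℂ} (hs : ‖s‖ ≤ 1) (hc : ‖c‖ ≤ 1) :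
    ‖(opFrame R).rotV d s c‖ ≤ 1 := norm_op_le zero_le_one fun f n => by
  rw [one_mul]
  have h : ((opFrame R).rotV d s c).1 f n = s • (d * (opFrame R).e.1 f n) +
    c • (opS : Op R).1 ((opFrame R).e.1 f) n + (opS : Op R).1 (f - (opFrame R).e.1 f) n := rfl
  rw [h]
  rcases n with _ | _ | n
  · rw [opS_zero, opS_zero, opFrame_e_apply, if_pos rfl, smul_zero, add_zero, add_zero, norm_smul]
    calc ‖s‖ * ‖d * f 0‖ ≤ 1 * (1 * ‖f‖) := by
          gcongr
          exact (norm_mul_le _ _).trans (by gcongr; exact f.norm_coe_le_norm 0)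
      _ = ‖f‖ := by ring
  · rw [opS_succ, opS_succ, BoundedContinuousFunction.sub_apply, opFrame_e_apply, opFrame_e_apply]
    simp only [zero_add, one_ne_zero, if_false, if_true, mul_zero, smul_zero, sub_self, add_zero,
      norm_smul]
    calc ‖c‖ * ‖f 0‖ ≤ 1 * ‖f‖ := by gcongr; exact f.norm_coe_le_norm 0
      _ = ‖f‖ := by ring
  · rw [opS_succ, opS_succ, BoundedContinuousFunction.sub_apply, opFrame_e_apply, opFrame_e_apply]
    simpa using f.norm_coe_le_norm (n + 1)

theorem norm_rotW {d : R} (hd : ‖d‖ ≤ 1) {β α : ℂ} (hs : ‖β‖ + ‖α‖ ≤ 1) :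
    ‖(opFrame R).rotW d β α‖ ≤ 1 := norm_op_le zero_le_one fun f n => by
  rw [one_mul]
  have h : ((opFrame R).rotW d β α).1 f n = β • (d * (opFrame R).e.1 f n) +
    α • (opFrame R).e.1 ((opSd : Op R).1 f) n +
    ((opSd : Op R).1 f n - (opFrame R).e.1 ((opSd : Op R).1 f) n) := rfl
  rw [h, opFrame_e_apply, opFrame_e_apply, opSd_apply, opSd_apply]
  rcases n with _ | n
  · simp only [if_true, zero_add, sub_self, add_zero]
    calc ‖β • (d * f 0) + α • f 1‖ ≤ ‖β • (d * f 0)‖ + ‖α • f 1‖ := norm_add_le _ _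
      _ ≤ ‖β‖ * (1 * ‖f‖) + ‖α‖ * ‖f‖ := by
        rw [norm_smul, norm_smul]
        gcongr
        · exact (norm_mul_le _ _).trans (by gcongr; exact f.norm_coe_le_norm 0)
        · exact f.norm_coe_le_norm 1
      _ = (‖β‖ + ‖α‖) * ‖f‖ := by ring
      _ ≤ 1 * ‖f‖ := by gcongr
      _ = ‖f‖ := one_mul _
  · simpa using f.norm_coe_le_norm (n + 1 + 1)

end Norms

/-- Clamped affine function. -/
noncomputable def clamp (x : ℝ) : ℝ := max 0 (min 1 x)

theorem clamp_mem (x : ℝ) : 0 ≤ clamp x ∧ clamp x ≤ 1 := by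
  simp [clamp]

theorem continuous_clamp : Continuous clamp := by unfold clamp; fun_prop

/-- The coefficient `s` of the rotation, rising from `0` to `1` during the first third. The
three coefficients satisfy `β s + (1 - β) c = 1`, and all stay in `[0, 1]`, so that both the path of
isometries and its path of left inverses are contractive. -/
noncomputable def rs (t : I) : ℂ := (clamp (3 * t) : ℝ)
/-- The coefficient `β` of the rotation, rising from `0` to `1` during the second third. -/
noncomputable def rb (t : I) : ℂ := (clamp (3 * t - 1) : ℝ)
/-- The coefficient `c` of the rotation, falling from `1` to `0` during the last third. -/
noncomputable def rc (t : I) : ℂ := (clamp (3 - 3 * t) : ℝ)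

theorem continuous_rs : Continuous rs :=
  Complex.continuous_ofReal.comp (continuous_clamp.comp (by fun_prop))
theorem continuous_rb : Continuous rb :=
  Complex.continuous_ofReal.comp (continuous_clamp.comp (by fun_prop))
theorem continuous_rc : Continuous rc :=
  Complex.continuous_ofReal.comp (continuous_clamp.comp (by fun_prop))

theorem norm_clamp (x : ℝ) : ‖((clamp x : ℝ) : ℂ)‖ ≤ 1 := by
  rw [Complex.norm_real, Real.norm_of_nonneg (clamp_mem x).1]; exact (clamp_mem x).2

theorem clamp_rel (t : I) :
    clamp (3 * t - 1) * clamp (3 * t) + (1 - clamp (3 * t - 1)) * clamp (3 - 3 * t) = 1 := by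
  have h0 := t.2.1
  have h1 := t.2.2
  have c0 : ∀ x : ℝ, x ≤ 0 → clamp x = 0 := fun x hx => by simp [clamp, hx]
  have c1 : ∀ x : ℝ, 1 ≤ x → clamp x = 1 := fun x hx => by simp [clamp, hx]
  rcases le_total (3 * (t : ℝ)) 1 with h | h
  · rw [c0 (3 * t - 1) (by linarith), c1 (3 - 3 * t) (by linarith)]; ring
  · rcases le_total (3 * (t : ℝ)) 2 with h' | h'
    · rw [c1 (3 * t) (by linarith), c1 (3 - 3 * t) (by linarith)]; ring
    · rw [c1 (3 * t - 1) (by linarith), c1 (3 * t) (by linarith)]; ring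

theorem r_rel (t : I) : rb t * rs t + (1 - rb t) * rc t = 1 := by
  have := congrArg (fun x : ℝ => (x : ℂ)) (clamp_rel t)
  simpa [rb, rs, rc] using this

theorem rs_zero : rs 0 = 0 := by simp [rs, clamp]
theorem rb_zero : rb 0 = 0 := by simp [rb, clamp]
theorem rc_zero : rc 0 = 1 := by simp [rc, clamp]
theorem rs_one : rs 1 = 1 := by simp [rs, clamp]
theorem rb_one : rb 1 = 1 := by norm_num [rb, clamp]
theorem rc_one : rc 1 = 0 := by simp [rc, clamp]

instance (M : Type) [Monoid M] : NormOneClass (A1 M) := ⟨by rw [← mono_one, norm_mono]⟩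

/-- A pair consisting of an element of norm at most one and a left inverse of norm at most one. -/
structure IsoPair where
  d : Toe
  d' : Toe
  rel : d' * d = 1
  hd : ‖d‖ ≤ 1
  hd' : ‖d'‖ ≤ 1

namespace IsoPair

/-- The tautological pair. -/
noncomputable def shift : IsoPair :=
  ⟨tS, tSd, tSd_mul_tS, (norm_mono _).le, (norm_mono _).le⟩

/-- The trivial pair. -/
noncomputable def triv : IsoPair := ⟨1, 1, one_mul 1, norm_one.le, norm_one.le⟩

variable (p : IsoPair)

/-- The path of isometries from `S` to `λ(d) e + S (1 - e)`. -/
noncomputable def V : C(I, Op Toe) where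
  toFun t := (opFrame Toe).rotV p.d (rs t) (rc t)
  continuous_toFun := ((continuous_rs.smul continuous_const).add
    (continuous_rc.smul continuous_const)).add continuous_const

/-- The path of left inverses. -/
noncomputable def W : C(I, Op Toe) where
  toFun t := (opFrame Toe).rotW p.d' (rb t) (1 - rb t)
  continuous_toFun := ((continuous_rb.smul continuous_const).add
    ((continuous_const.sub continuous_rb).smul continuous_const)).add continuous_const

theorem W_mul_V : p.W * p.V = 1 := by
  ext1 t
  exact (opFrame Toe).rotW_mul_rotV p.rel (r_rel t)

theorem norm_V (t : I) : ‖p.V t‖ ≤ 1 := norm_rotV p.hd (norm_clamp _) (norm_clamp _)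

theorem norm_W (t : I) : ‖p.W t‖ ≤ 1 := norm_rotW p.hd' (by
  have h : (1 : ℂ) - rb t = ((1 - clamp (3 * t - 1) : ℝ) : ℂ) := by simp [rb]
  rw [h, rb, Complex.norm_real, Complex.norm_real, Real.norm_of_nonneg (clamp_mem _).1,
    Real.norm_of_nonneg (by linarith [(clamp_mem (3 * t - 1)).2])]
  linarith)

theorem norm_pow_le {A : Type*} [NormedRing A] [NormOneClass A] {x : A} (hx : ‖x‖ ≤ 1) (n : ℕ) :
    ‖x ^ n‖ ≤ 1 := (_root_.norm_pow_le x n).trans (pow_le_one₀ (norm_nonneg _) hx)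

instance : NormOneClass (Op Toe) := ⟨by
  refine le_antisymm (norm_op_le zero_le_one fun f n => by
    rw [one_mul]; exact f.norm_coe_le_norm _) ?_
  have h := norm_mul_le (1 : Op Toe) 1
  rw [one_mul] at h
  have h0 : ‖(1 : Op Toe)‖ ≠ 0 := by
    rw [norm_ne_zero_iff]
    intro h
    have := congrArg (fun T : Op Toe => T.1 delta 0) h
    change (1 : Toe) = 0 at this
    simpa using congrArg (aug Bic) this
  nlinarith [norm_nonneg (1 : Op Toe), h0.symm.lt_of_le (norm_nonneg _)]⟩

/-- The path of representations of the Toeplitz algebra sending the generators to `V t` and `W t`. -/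
noncomputable def Φ : Toe →+* C(I, Op Toe) :=
  hom (bicRep p.V p.W p.W_mul_V) 1 fun x => by
    refine (ContinuousMap.norm_le _ zero_le_one).2 fun t => ?_
    change ‖p.V t ^ x.a * p.W t ^ x.b‖ ≤ 1
    exact (norm_mul_le _ _).trans (mul_le_one₀ (norm_pow_le (p.norm_V t) _) (norm_nonneg _)
      (norm_pow_le (p.norm_W t) _))

theorem continuous_Φ : Continuous p.Φ := continuous_hom _ _ _

theorem Φ_smul (c : ℂ) (x : Toe) : p.Φ (c • x) = c • p.Φ x := hom_smul _ _ _ _ _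

theorem Φ_mono (x : Bic) (t : I) : p.Φ (mono x) t = p.V t ^ x.a * p.W t ^ x.b := by
  rw [Φ, hom_mono]; rfl

theorem continuous_Φ_apply (t : I) : Continuous fun x => p.Φ x t :=
  (continuous_eval_const t).comp p.continuous_Φ

end IsoPair

end BottP

/-! ### Comparison of the rotated representations -/

namespace BottP
open Set unitInterval Filter

local notation "OF" => opFrame Toe

theorem isMult_rotV (d : Toe) (s c : ℂ) : (OF).IsMult ((OF).rotV d s c) :=
  ((((OF).isMult_lam d).mul (OF).isK_e.isMult).smul s).add
    (((OF).isMult_S.mul (OF).isK_e.isMult).smul c) |>.add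
      (by
        have : (OF).S * (1 - (OF).e) = (OF).S + (-1 : ℂ) • ((OF).S * (OF).e) := by
          rw [mul_sub, mul_one, neg_one_smul, sub_eq_add_neg]
        rw [this]
        exact (OF).isMult_S.add (((OF).isMult_S.mul (OF).isK_e.isMult).smul _))

theorem isMult_rotW (d : Toe) (s c : ℂ) : (OF).IsMult ((OF).rotW d s c) :=
  ((((OF).isMult_lam d).mul (OF).isK_e.isMult).smul s).add
    (((OF).isK_e.isMult.mul (OF).isMult_Sd).smul c) |>.add
      (by
        have : (1 - (OF).e) * (OF).Sd = (OF).Sd + (-1 : ℂ) • ((OF).e * (OF).Sd) := by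
          rw [sub_mul, one_mul, neg_one_smul, sub_eq_add_neg]
        rw [this]
        exact (OF).isMult_Sd.add (((OF).isK_e.isMult.mul (OF).isMult_Sd).smul _))

theorem isK_rotV_sub (d d' : Toe) (s c : ℂ) : (OF).IsK ((OF).rotV d s c - (OF).rotV d' s c) := by
  have : (OF).rotV d s c - (OF).rotV d' s c =
      s • ((OF).lam d * (OF).e) - s • ((OF).lam d' * (OF).e) := by
    unfold Frame.rotV; abel
  rw [this]
  exact (((OF).isMult_lam d _ (OF).isK_e).1.smul s).sub (((OF).isMult_lam d' _ (OF).isK_e).1.smul s)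

theorem isK_rotW_sub (d d' : Toe) (s c : ℂ) : (OF).IsK ((OF).rotW d s c - (OF).rotW d' s c) := by
  have : (OF).rotW d s c - (OF).rotW d' s c =
      s • ((OF).lam d * (OF).e) - s • ((OF).lam d' * (OF).e) := by
    unfold Frame.rotW; abel
  rw [this]
  exact (((OF).isMult_lam d _ (OF).isK_e).1.smul s).sub (((OF).isMult_lam d' _ (OF).isK_e).1.smul s)

/-- Congruence of multipliers modulo the ideal. -/
def Frame.Cong {R 𝓑 : Type} [NormedRing R] [NormedRing 𝓑] (F : Frame R 𝓑) (x y : 𝓑) : Prop :=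
  F.IsMult x ∧ F.IsMult y ∧ F.IsK (x - y)

section Cong

variable {R 𝓑 : Type} [NormedRing R] [NormedRing 𝓑] {F : Frame R 𝓑}

theorem Frame.Cong.mul {x y x' y' : 𝓑} (h : F.Cong x y) (h' : F.Cong x' y') :
    F.Cong (x * x') (y * y') := by
  refine ⟨h.1.mul h'.1, h.2.1.mul h'.2.1, ?_⟩
  have : x * x' - y * y' = x * (x' - y') + (x - y) * y' := by noncomm_ring
  rw [this]
  exact (h.1 _ h'.2.2).1.add (h'.2.1 _ h.2.2).2

theorem Frame.Cong.one : F.Cong 1 1 := ⟨.one, .one, by rw [sub_self]; exact .zero⟩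

theorem Frame.Cong.pow {x y : 𝓑} (h : F.Cong x y) (n : ℕ) : F.Cong (x ^ n) (y ^ n) := by
  induction n with
  | zero => rw [pow_zero, pow_zero]; exact .one
  | succ n ih => rw [pow_succ, pow_succ]; exact ih.mul h

theorem Frame.Cong.add {x y x' y' : 𝓑} (h : F.Cong x y) (h' : F.Cong x' y') :
    F.Cong (x + x') (y + y') :=
  ⟨h.1.add h'.1, h.2.1.add h'.2.1, by rw [add_sub_add_comm]; exact h.2.2.add h'.2.2⟩

theorem Frame.Cong.smul [NormedAlgebra ℂ 𝓑] {x y : 𝓑} (c : ℂ) (h : F.Cong x y) :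
    F.Cong (c • x) (c • y) :=
  ⟨h.1.smul c, h.2.1.smul c, by rw [← smul_sub]; exact h.2.2.smul c⟩

end Cong

/-- The rotations attached to two pairs differ only in the corner, hence agree modulo the ideal. -/
theorem cong_Φ (p q : IsoPair) (x : Toe) (t : I) : (OF).Cong (p.Φ x t) (q.Φ x t) := by
  refine A1.induction (p := fun x => (OF).Cong (p.Φ x t) (q.Φ x t)) ?_ ?_ ?_ ?_ x
  · exact ((OF).isClosed_isMult.preimage (p.continuous_Φ_apply t)).inter
      (((OF).isClosed_isMult.preimage (q.continuous_Φ_apply t)).inter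
        ((OF).isClosed_isK.preimage ((p.continuous_Φ_apply t).sub (q.continuous_Φ_apply t))))
  · rw [map_zero, map_zero]
    exact ⟨Frame.IsK.zero.isMult, Frame.IsK.zero.isMult, by rw [sub_self]; exact .zero⟩
  · intro x y hx hy
    rw [map_add, map_add]; exact hx.add hy
  · intro c m
    rw [p.Φ_smul, q.Φ_smul, ContinuousMap.smul_apply, ContinuousMap.smul_apply, p.Φ_mono, q.Φ_mono]
    have hV : (OF).Cong (p.V t) (q.V t) :=
      ⟨isMult_rotV _ _ _, isMult_rotV _ _ _, isK_rotV_sub _ _ _ _⟩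
    have hW : (OF).Cong (p.W t) (q.W t) :=
      ⟨isMult_rotW _ _ _, isMult_rotW _ _ _, isK_rotW_sub _ _ _ _⟩
    exact ((hV.pow _).mul (hW.pow _)).smul c

/-- All paths of representations start at the same one, given by the shift. -/
theorem Φ_zero (p q : IsoPair) (x : Toe) : p.Φ x 0 = q.Φ x 0 := by
  refine A1.induction (p := fun x => p.Φ x 0 = q.Φ x 0) ?_ ?_ ?_ ?_ x
  · exact isClosed_eq (p.continuous_Φ_apply 0) (q.continuous_Φ_apply 0)
  · rw [map_zero p.Φ, map_zero q.Φ]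
  · intro x y hx hy
    rw [map_add, map_add, ContinuousMap.add_apply, ContinuousMap.add_apply, hx, hy]
  · intro c m
    rw [p.Φ_smul, q.Φ_smul, ContinuousMap.smul_apply, ContinuousMap.smul_apply, p.Φ_mono, q.Φ_mono]
    have hV : p.V 0 = q.V 0 := by
      change (OF).rotV _ _ _ = (OF).rotV _ _ _
      simp only [Frame.rotV, rs_zero, zero_smul]
    have hW : p.W 0 = q.W 0 := by
      change (OF).rotW _ _ _ = (OF).rotW _ _ _
      simp only [Frame.rotW, rb_zero, zero_smul]
    rw [hV, hW]

theorem V_one (p : IsoPair) :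
    p.V 1 = (OF).lam p.d * (OF).e + (1 - (OF).e) * ((OF).S * (1 - (OF).e)) := by
  change (OF).rotV _ _ _ = _
  rw [Frame.rotV, rs_one, rc_one, one_smul, zero_smul, add_zero, sub_mul, one_mul, ← mul_assoc,
    (OF).e_S, zero_mul, sub_zero]

theorem W_one (p : IsoPair) :
    p.W 1 = (OF).lam p.d' * (OF).e + (1 - (OF).e) * ((OF).Sd * (1 - (OF).e)) := by
  change (OF).rotW _ _ _ = _
  rw [Frame.rotW, rb_one, sub_self, one_smul, zero_smul, add_zero, mul_sub, mul_one, (OF).Sd_e,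
    sub_zero]

/-- Multiplication of block diagonal elements with respect to the idempotent `e`. -/
theorem diag_mul {A : Type*} [Ring A] {e a b a' b' : A} (he : e * e = e) (h : a' * e = e * a') :
    (a * e + (1 - e) * (b * (1 - e))) * (a' * e + (1 - e) * (b' * (1 - e))) =
      (a * a') * e + (1 - e) * ((b * (1 - e) * b') * (1 - e)) := by
  have h1 : e * (a' * e) = a' * e := by rw [h, ← mul_assoc, he]
  have h2 : (1 - e) * (a' * e) = 0 := by rw [sub_mul, one_mul, h1, sub_self]
  have h3 : e * (1 - e) = 0 := by rw [mul_sub, he, mul_one, sub_self]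
  have h4 : (1 - e) * (1 - e) = 1 - e := by rw [mul_sub, mul_one, sub_mul, one_mul, he]; simp
  have h5 : ∀ x, e * ((1 - e) * x) = 0 := fun x => by rw [← mul_assoc, h3, zero_mul]
  have h6 : ∀ x, (1 - e) * ((1 - e) * x) = (1 - e) * x := fun x => by rw [← mul_assoc, h4]
  rw [add_mul, mul_add, mul_add]
  simp only [mul_assoc, h1, h2, h5, h6, mul_zero, add_zero, zero_add]

theorem pow_diag {A : Type*} [Ring A] {e b : A} (he : e * e = e) (n : ℕ) :
    ∃ c, ∀ a, a * e = e * a →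
      (a * e + (1 - e) * (b * (1 - e))) ^ n = a ^ n * e + (1 - e) * (c * (1 - e)) := by
  induction n with
  | zero =>
    refine ⟨1, fun a _ => ?_⟩
    rw [pow_zero, pow_zero, one_mul, one_mul, mul_sub (1 - e), mul_one, sub_mul, he, one_mul]
    simp
  | succ n ih =>
    obtain ⟨c, hc⟩ := ih
    exact ⟨c * (1 - e) * b, fun a ha => by rw [pow_succ, hc a ha, diag_mul he ha, pow_succ]⟩

end BottP

/-! ### The end points of the rotation -/

namespace BottP
open Set unitInterval Filter

local notation "OF" => opFrame Toe

theorem lam_smul' (c : ℂ) (x : Toe) : (OF).lam (c • x) = c • (OF).lam x := by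
  apply Subtype.ext
  ext f n
  exact smul_mul_assoc c x (f n)

/-- At time `1` the representation is block diagonal, and its block on `1 - e` is the same for every
pair. -/
theorem exists_Φ_one_mono (x : Bic) : ∃ c : Op Toe, ∀ p : IsoPair, p.Φ (mono x) 1 =
    (OF).lam (p.d ^ x.a * p.d' ^ x.b) * (OF).e + (1 - (OF).e) * (c * (1 - (OF).e)) := by
  obtain ⟨c, hc⟩ := pow_diag (b := (OF).S) (OF).e_e x.a
  obtain ⟨c', hc'⟩ := pow_diag (b := (OF).Sd) (OF).e_e x.b
  refine ⟨c * (1 - (OF).e) * c', fun p => ?_⟩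
  rw [p.Φ_mono, V_one, W_one, hc _ ((OF).lam_e _), hc' _ ((OF).lam_e _), ← map_pow, ← map_pow,
    diag_mul (OF).e_e ((OF).lam_e _), map_mul]

theorem e_triv_one (y : Toe) : (OF).e * IsoPair.triv.Φ y 1 = aug Bic y • (OF).e := by
  refine A1.induction (p := fun y => (OF).e * IsoPair.triv.Φ y 1 = aug Bic y • (OF).e) ?_ ?_ ?_ ?_ y
  · exact isClosed_eq (continuous_const.mul (IsoPair.triv.continuous_Φ_apply 1))
      ((continuous_aug Bic).smul continuous_const)
  · rw [map_zero IsoPair.triv.Φ, map_zero, zero_smul]; exact mul_zero _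
  · intro x y hx hy
    rw [map_add, map_add, ContinuousMap.add_apply, mul_add, hx, hy, add_smul]
  · intro c m
    obtain ⟨b, hb⟩ := exists_Φ_one_mono m
    rw [IsoPair.triv.Φ_smul, ContinuousMap.smul_apply, hb, aug_smul, aug_mono]
    have h0 : (OF).e * (1 - (OF).e) = 0 := by rw [mul_sub, (OF).e_e, mul_one, sub_self]
    have h1 : (OF).lam (IsoPair.triv.d ^ m.a * IsoPair.triv.d' ^ m.b) = 1 := by
      change (OF).lam ((1 : Toe) ^ m.a * 1 ^ m.b) = 1
      rw [one_pow, one_pow, one_mul, map_one]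
    rw [h1, mul_smul_comm, mul_add, ← mul_assoc _ (1 - (OF).e), h0, zero_mul, add_zero, one_mul,
      (OF).e_e, mul_one]

/-- The end points of the paths attached to `(S, S*)` and `(1, 1)` differ only in the corner `e`, by
the tautological representation against the augmentation. -/
theorem shift_one (y : Toe) : IsoPair.shift.Φ y 1 =
    IsoPair.triv.Φ y 1 + ((OF).lam y * (OF).e - aug Bic y • (OF).e) := by
  refine A1.induction (p := fun y => IsoPair.shift.Φ y 1 =
    IsoPair.triv.Φ y 1 + ((OF).lam y * (OF).e - aug Bic y • (OF).e)) ?_ ?_ ?_ ?_ y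
  · exact isClosed_eq (IsoPair.shift.continuous_Φ_apply 1) ((IsoPair.triv.continuous_Φ_apply 1).add
      (((OF).continuous_lam.mul continuous_const).sub ((continuous_aug Bic).smul continuous_const)))
  · rw [map_zero IsoPair.shift.Φ, map_zero IsoPair.triv.Φ, map_zero, map_zero, zero_smul, zero_mul,
      sub_zero, add_zero]
  · intro x y hx hy
    rw [map_add, map_add, map_add, map_add, ContinuousMap.add_apply, ContinuousMap.add_apply, hx, hy,
      add_smul, add_mul]
    abel
  · intro c m
    obtain ⟨b, hb⟩ := exists_Φ_one_mono m
    rw [IsoPair.shift.Φ_smul, IsoPair.triv.Φ_smul, ContinuousMap.smul_apply,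
      ContinuousMap.smul_apply, hb, hb, aug_smul, aug_mono, lam_smul']
    have h1 : (OF).lam (IsoPair.triv.d ^ m.a * IsoPair.triv.d' ^ m.b) = 1 := by
      change (OF).lam ((1 : Toe) ^ m.a * 1 ^ m.b) = 1
      rw [one_pow, one_pow, one_mul, map_one]
    have h2 : IsoPair.shift.d ^ m.a * IsoPair.shift.d' ^ m.b = mono m := (mono_bic m).symm
    rw [h1, h2, mul_one, smul_mul_assoc, smul_add, smul_add, one_mul]
    abel

/-- Evaluation at a point of a compact space. -/
def evC {K R : Type} [TopologicalSpace K] [NormedRing R] (t : K) : C(K, R) →+* R :=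
  Pi.evalRingHom _ t |>.comp ContinuousMap.coeFnRingHom

theorem evC_apply {K R : Type} [TopologicalSpace K] [NormedRing R] (t : K) (f : C(K, R)) :
    evC t f = f t := rfl

section
variable {α : Type} [Fintype α] [DecidableEq α]

theorem continuous_evGL {K R X : Type} [TopologicalSpace K] [LocallyCompactSpace K] [NormedRing R]
    [TopologicalSpace X] {g : X → GLR α C(K, R)} (hg : Continuous g) :
    Continuous fun p : X × K => mapGL (α := α) (evC p.2) (g p.1) := by
  rw [Units.continuous_iff] at hg ⊢
  refine ⟨continuous_matrix fun i j => ?_, continuous_matrix fun i j => ?_⟩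
  · have h : Continuous fun x => (g x : Matrix α α C(K, R)) i j := hg.1.matrix_elem i j
    exact (continuous_eval (F := C(K, R)) (X := K) (Y := R)).comp ((h.comp continuous_fst).prodMk continuous_snd)
  · have h : Continuous fun x => ((g x)⁻¹ : GLR α C(K, R)).1 i j := hg.2.matrix_elem i j
    exact (continuous_eval (F := C(K, R)) (X := K) (Y := R)).comp ((h.comp continuous_fst).prodMk continuous_snd)

/-- The path of representations on general linear groups. -/
noncomputable def IsoPair.ΦG (p : IsoPair) (t : I) : GLR α Toe →* GLR α (Op Toe) :=
  mapGL ((evC t).comp p.Φ)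

theorem IsoPair.continuous_ΦG (p : IsoPair) {X : Type} [TopologicalSpace X] {f : X → GLR α Toe}
    (hf : Continuous f) : Continuous fun q : X × I => p.ΦG q.2 (f q.1) := by
  have := continuous_evGL (K := I) ((continuous_mapGL (α := α) p.Φ p.continuous_Φ).comp hf)
  exact this

theorem ΦG_zero (p q : IsoPair) (f : GLR α Toe) : p.ΦG 0 f = q.ΦG 0 f := by
  ext i j : 2
  exact Φ_zero p q _

/-- On matrices of trivial augmentation the discrepancy at time `1` is the corner inclusion of the
matrix itself. -/
theorem shift_ΦG_one (f : GLR α Toe) (hf : mapGL (aug Bic) f = 1) :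
    IsoPair.shift.ΦG 1 f = (OF).kap α f * IsoPair.triv.ΦG 1 f := by
  have hf' : ∀ i j, aug Bic (f.1 i j) = (1 : Matrix α α ℂ) i j := fun i j => by
    have := congrArg (fun u : GLR α ℂ => u.1 i j) hf
    simpa [val_mapGL] using this
  ext i k : 2
  rw [Units.val_mul]
  have hk : ((OF).kap α f).1 = 1 + (OF).kM α (f.1 - 1) := by
    rw [Frame.kap, val_unitsOne]
  rw [hk, Matrix.add_mul, Matrix.one_mul, Matrix.add_apply, Matrix.mul_apply]
  have h1 : ∀ j, (IsoPair.triv.ΦG 1 f).1 j k = IsoPair.triv.Φ (f.1 j k) 1 := fun j => rfl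
  have h2 : (IsoPair.shift.ΦG 1 f).1 i k = IsoPair.shift.Φ (f.1 i k) 1 := rfl
  rw [h1, h2, shift_one]
  congr 1
  have h3 : ∀ j, (OF).kM α (f.1 - 1) i j * (IsoPair.triv.ΦG 1 f).1 j k =
      if j = k then (OF).lam ((f.1 - 1) i k) * (OF).e else 0 := fun j => by
    rw [h1, Frame.kM_apply, mul_assoc, e_triv_one, hf', Matrix.one_apply]
    split_ifs with h
    · rw [one_smul, h]
    · rw [zero_smul, mul_zero]
  rw [Finset.sum_congr rfl fun j _ => h3 j, Finset.sum_ite_eq' Finset.univ k]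
  simp only [Finset.mem_univ, if_true, Matrix.sub_apply, map_sub, sub_mul, hf']
  congr 1
  rw [Matrix.one_apply, Matrix.one_apply]
  split_ifs <;> simp

end

end BottP

/-! ### Triviality of the Toeplitz algebra -/

namespace BottP
open Set unitInterval Filter _root_.BottP.Frame

local notation "OF" => opFrame Toe

section
variable {α : Type} [Fintype α] [DecidableEq α]

theorem aug_algebraMap (M : Type) [Monoid M] (c : ℂ) : aug M (algebraMap ℂ (A1 M) c) = c := by
  rw [Algebra.algebraMap_eq_smul_one, aug_smul, map_one, mul_one]

theorem mapGL_comp {R R' R'' : Type} [Ring R] [Ring R'] [Ring R''] (φ : R →+* R') (ψ : R' →+* R'')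
    (a : GLR α R) : mapGL ψ (mapGL φ a) = mapGL (ψ.comp φ) a := rfl

theorem mapGL_id {R : Type} [Ring R] (φ : R →+* R) (h : ∀ x, φ x = x)
    (a : GLR α R) : mapGL φ a = a := by
  ext i j : 2
  exact h _

theorem mapGL_aug_algebraMap (M : Type) [Monoid M] (a : GLR α ℂ) :
    mapGL (aug M) (mapGL (algebraMap ℂ (A1 M)) a) = a := by
  rw [mapGL_comp, mapGL_id]
  exact aug_algebraMap M

theorem isK_shift_triv (f : GLR α Toe) (t : I) (i j : α) :
    (OF).IsK ((((IsoPair.shift.ΦG t f * (IsoPair.triv.ΦG t f)⁻¹ : GLR α (Op Toe)) :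
      Matrix α α (Op Toe)) - 1) i j) := by
  have h : ((IsoPair.shift.ΦG t f * (IsoPair.triv.ΦG t f)⁻¹ : GLR α (Op Toe)) :
      Matrix α α (Op Toe)) - 1 = ((IsoPair.shift.ΦG t f).1 - (IsoPair.triv.ΦG t f).1) *
        (IsoPair.triv.ΦG t f⁻¹).1 := by
    rw [Matrix.sub_mul, ← Units.val_mul, ← Units.val_mul, ← map_mul (IsoPair.triv.ΦG t),
      mul_inv_cancel, map_one, Units.val_one, map_inv]
  rw [h, Matrix.mul_apply]
  refine Frame.IsK.sum _ _ fun k _ => ?_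
  rw [Matrix.sub_apply]
  have h1 := cong_Φ IsoPair.shift IsoPair.triv (f.1 i k) t
  have h2 := cong_Φ IsoPair.triv IsoPair.triv ((f⁻¹ : GLR α Toe).1 k j) t
  exact (h2.1 _ h1.2.2).2

/-- The Toeplitz algebra has trivial reduced `K`-theory: a map into its general linear group with
trivial augmentation becomes null after stabilization. The quotient of the two representations
`shift` and `triv` is a path from `1` to the corner inclusion of `f` which is `1` modulo the ideal,
and truncation moves this path from `Op Toe` into matrices over `Toe`. -/
theorem toe_null {X : Type} [TopologicalSpace X] [CompactSpace X] {Y : Set X} (f : X → GLR α Toe)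
    (hf : Continuous f) (haug : ∀ x, mapGL (aug Bic) (f x) = 1) (hY : ∀ y ∈ Y, f y = 1) :
    ∃ r, Null (mapGL (α := Fin (r + 1) × α) (aug Bic)).ker Y fun x => st (zeroEmb r α) (f x) := by
  obtain ⟨r, g, H, hg, -, -, -, -, -, hgk⟩ := (OF).exists_truncation (X := X × I)
    (fun p => IsoPair.shift.ΦG p.2 (f p.1) * (IsoPair.triv.ΦG p.2 (f p.1))⁻¹)
    ((IsoPair.shift.continuous_ΦG hf).mul (IsoPair.triv.continuous_ΦG hf).inv)
    (fun p i j => isK_shift_triv _ _ i j)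
  -- divide by the augmentation, which the truncated path need not preserve
  refine ⟨r, fun p => g p * (mapGL (algebraMap ℂ Toe) (mapGL (aug Bic) (g p)))⁻¹, ?_, ?_, ?_, ?_, ?_⟩
  · exact hg.mul ((continuous_mapGL _ (continuous_algebraMap ℂ Toe)).comp
      ((continuous_mapGL _ (continuous_aug Bic)).comp hg)).inv
  · intro x
    have : g (x, 0) = 1 := by
      rw [hgk _ 1 _, map_one]
      rw [map_one]
      change IsoPair.shift.ΦG 0 (f x) * (IsoPair.triv.ΦG 0 (f x))⁻¹ = 1
      rw [ΦG_zero _ IsoPair.triv, mul_inv_cancel]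
    simp only [this, map_one, inv_one, mul_one]
  · intro x
    have : g (x, 1) = st (zeroEmb r α) (f x) := by
      refine hgk _ _ ?_
      change IsoPair.shift.ΦG 1 (f x) * (IsoPair.triv.ΦG 1 (f x))⁻¹ = _
      rw [shift_ΦG_one _ (haug x), mul_inv_cancel_right]
    simp only [this, mapGL_st, haug, map_one, inv_one, mul_one]
  · intro y hy t
    have : g (y, t) = 1 := by
      rw [hgk _ 1 _, map_one]
      rw [map_one]
      change IsoPair.shift.ΦG t (f y) * (IsoPair.triv.ΦG t (f y))⁻¹ = 1
      rw [hY y hy, map_one, map_one, mul_inv_cancel]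
    simp only [this, map_one, inv_one, mul_one]
  · intro p
    rw [MonoidHom.mem_ker, map_mul, map_inv, mapGL_aug_algebraMap, mul_inv_cancel]

end
end BottP

/-! ### Lifting along the symbol map -/

namespace BottP
open Set unitInterval Filter

section
variable {α : Type} [Fintype α] [DecidableEq α]

/-- Entrywise application of the linear section of the symbol map. -/
noncomputable def secM (z : GLR α Lau × GLR α Lau) : Matrix α α Toe :=
  ((z.2 * z.1⁻¹ : GLR α Lau) : Matrix α α Lau).map sec

theorem continuous_secM : Continuous (secM (α := α)) :=
  (Units.continuous_val.comp (continuous_snd.mul continuous_fst.inv)).matrix_map sec.continuous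

open Classical in
/-- The partial section of the symbol map on general linear groups. -/
noncomputable def secG (z : GLR α Lau × GLR α Lau) : GLR α Toe :=
  if h : IsUnit (secM z) then h.unit else 1

theorem val_secG {z : GLR α Lau × GLR α Lau} (h : IsUnit (secM z)) :
    (secG z : Matrix α α Toe) = secM z := by
  rw [secG, dif_pos h, IsUnit.unit_spec]

theorem secM_diag (z : GLR α Lau) : secM (z, z) = 1 := by
  unfold secM
  rw [mul_inv_cancel, Units.val_one, Matrix.map_one _ (map_zero sec) sec_one]

/-- Homotopies of invertible matrices of constant augmentation lift along the symbol map: the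
Toeplitz group acts on matrices over the Laurent algebra through the symbol, with local sections
`secG`, so `exists_lift_homotopy` applies. -/
theorem exists_toe_lift {X : Type} [TopologicalSpace X] [CompactSpace X] (h : X × I → GLR α Lau)
    (hh : Continuous h) (haug : ∀ x t, mapGL (aug _) (h (x, t)) = mapGL (aug _) (h (x, 0))) :
    ∃ g : X × I → GLR α Toe, Continuous g ∧ (∀ x, g (x, 0) = 1) ∧
      (∀ x t, mapGL sym (g (x, t)) * h (x, 0) = h (x, t)) ∧
      (∀ p, mapGL (aug Bic) (g p) = 1) ∧
      ∀ x, (∀ t, h (x, t) = h (x, 0)) → ∀ t, g (x, t) = 1 := by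
  obtain ⟨g, hg, h0, hact, hc⟩ := exists_lift_homotopy (G := GLR α Toe)
    (fun g z => mapGL sym g * z) (fun g h z => by rw [map_mul, mul_assoc])
    (fun z => by rw [map_one, one_mul]) {z | IsUnit (secM z)}
    (((isOpenEmbedding_val_GLR α Toe).isOpen_range).preimage continuous_secM)
    (fun z => by
      change IsUnit (secM (z, z))
      rw [secM_diag]; exact isUnit_one)
    secG
    ((isOpenEmbedding_val_GLR α Toe).isEmbedding.continuousOn_iff.2
      (continuous_secM.continuousOn.congr fun z hz => val_secG hz))
    (fun z => Units.ext (by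
      rw [val_secG (by rw [secM_diag]; exact isUnit_one), secM_diag, Units.val_one]))
    (fun z w hzw => by
      have : mapGL sym (secG (z, w)) = w * z⁻¹ := by
        ext1
        rw [val_mapGL, val_secG hzw]
        ext i j
        exact sym_sec _
      rw [this, inv_mul_cancel_right]) h hh
  refine ⟨g, hg, h0, hact, fun p => ?_, hc⟩
  have h1 := congrArg (mapGL (aug _)) (hact p.1 p.2)
  rw [map_mul, haug p.1 p.2, mul_eq_right] at h1
  rw [← h1]
  ext i j : 2
  exact (aug_mapA _ _).symm

end

end BottP

/-! ### Wiener's lemma -/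

namespace BottP
open Set unitInterval Filter

theorem lau_comm (x y : Lau) : x * y = y * x := by
  refine A1.induction (p := fun x => x * y = y * x) ?_ ?_ ?_ ?_ x
  · exact isClosed_eq (by fun_prop) (by fun_prop)
  · rw [zero_mul, mul_zero]
  · intro a b ha hb; rw [add_mul, mul_add, ha, hb]
  · intro c m
    refine A1.induction (p := fun y => (c • mono m) * y = y * (c • mono m)) ?_ ?_ ?_ ?_ y
    · exact isClosed_eq (by fun_prop) (by fun_prop)
    · rw [zero_mul, mul_zero]
    · intro a b ha hb; rw [add_mul, mul_add, ha, hb]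
    · intro c' m'
      rw [smul_mul_smul_comm, smul_mul_smul_comm, ← mono_mul, ← mono_mul, mul_comm c, mul_comm m]

noncomputable instance : NormedCommRing Lau :=
  { (inferInstance : NormedRing Lau) with mul_comm := lau_comm }

/-- The representation of `ℤ` on the circle. -/
noncomputable def fourierRep : Multiplicative ℤ →* C(UnitAddCircle, ℂ) where
  toFun n := fourier n.toAdd
  map_one' := by ext x; exact fourier_zero
  map_mul' a b := by ext x; exact fourier_add

/-- Laurent series as functions on the circle. -/
noncomputable def Ev : Lau →+* C(UnitAddCircle, ℂ) := hom fourierRep 1 fun _ => (fourier_norm _).le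

theorem continuous_Ev : Continuous Ev := continuous_hom _ _ _

theorem Ev_smul (c : ℂ) (x : Lau) : Ev (c • x) = c • Ev x := hom_smul _ _ _ _ _

theorem Ev_mono (n : Multiplicative ℤ) : Ev (mono n) = fourier n.toAdd := hom_mono _ _ _ _

theorem Ev_apply_zero (x : Lau) : Ev x 0 = aug _ x := by
  refine A1.induction (p := fun x => Ev x 0 = aug _ x) ?_ ?_ ?_ ?_ x
  · exact isClosed_eq ((continuous_eval_const 0).comp continuous_Ev) (continuous_aug _)
  · rw [map_zero Ev, map_zero (aug _)]; rfl
  · intro x y hx hy; rw [map_add, map_add, ContinuousMap.add_apply, hx, hy]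
  · intro c m
    rw [Ev_smul, aug_smul, aug_mono, ContinuousMap.smul_apply, Ev_mono, fourier_eval_zero]; rfl

/-- Every character of the algebra of absolutely convergent Fourier series is a point evaluation. -/
theorem exists_eq_Ev (φ : WeakDual.characterSpace ℂ Lau) : ∃ z : UnitAddCircle, ∀ x, φ x = Ev x z := by
  have hle : ∀ x, ‖φ x‖ ≤ ‖x‖ := fun x => AlgHom.norm_apply_le_self φ x
  set w := φ (mono (Multiplicative.ofAdd (1 : ℤ))) with hw
  set w' := φ (mono (Multiplicative.ofAdd (-1 : ℤ))) with hw'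
  have hww : w * w' = 1 := by
    rw [hw, hw', ← map_mul, ← mono_mul, ← ofAdd_add, add_neg_cancel, ofAdd_zero, mono_one, map_one]
  have h1 : ‖w‖ ≤ 1 := (hle _).trans (norm_mono _).le
  have h2 : ‖w'‖ ≤ 1 := (hle _).trans (norm_mono _).le
  have h3 : ‖w‖ * ‖w'‖ = 1 := by rw [← norm_mul, hww, norm_one]
  have h4 : ‖w‖ = 1 := by nlinarith [norm_nonneg w, norm_nonneg w']
  obtain ⟨z, hz⟩ := (AddCircle.homeomorphCircle (T := 1) one_ne_zero).surjective
    ⟨w, mem_sphere_zero_iff_norm.2 h4⟩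
  rw [AddCircle.homeomorphCircle_apply] at hz
  have hz' : ((AddCircle.toCircle z : Circle) : ℂ) = w := congrArg Subtype.val hz
  refine ⟨z, fun x => ?_⟩
  have hw0 : w ≠ 0 := left_ne_zero_of_mul_eq_one hww
  have hwn : ∀ n : Multiplicative ℤ, φ (mono n) = w ^ n.toAdd := by
    intro n
    have e1 : ∀ n : ℕ, φ (mono (Multiplicative.ofAdd (n : ℤ))) = w ^ n := fun n => by
      induction n with
      | zero => simp [mono_one]
      | succ n ih =>
        rw [Nat.cast_succ, ofAdd_add, mono_mul, map_mul, ih, pow_succ]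
    have e2 : ∀ n : ℕ, φ (mono (Multiplicative.ofAdd (-n : ℤ))) = w' ^ n := fun n => by
      induction n with
      | zero => simp [mono_one]
      | succ n ih =>
        rw [Nat.cast_succ, neg_add, ofAdd_add, mono_mul, map_mul, ih, pow_succ]
    obtain ⟨k, hk | hk⟩ := n.toAdd.eq_nat_or_neg
    · have : n = Multiplicative.ofAdd (k : ℤ) := by rw [← hk]; rfl
      rw [this, e1]; simp
    · have : n = Multiplicative.ofAdd (-k : ℤ) := by rw [← hk]; rfl
      rw [this, e2, toAdd_ofAdd, zpow_neg, zpow_natCast, ← inv_pow, eq_inv_of_mul_eq_one_right hww]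
  refine A1.induction (p := fun x => φ x = Ev x z) ?_ ?_ ?_ ?_ x
  · exact isClosed_eq (map_continuous φ) ((continuous_eval_const z).comp continuous_Ev)
  · rw [map_zero φ, map_zero Ev]; rfl
  · intro x y hx hy; rw [map_add, map_add, ContinuousMap.add_apply, hx, hy]
  · intro c m
    rw [map_smul, Ev_smul, ContinuousMap.smul_apply, Ev_mono, hwn, fourier_apply,
      AddCircle.toCircle_zsmul, Circle.coe_zpow, hz']

/-- Wiener's lemma for matrices: a matrix of absolutely convergent Fourier series which is
invertible at every point of the circle is invertible over the Laurent algebra. -/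
theorem isUnit_matrix_lau {α : Type} [Fintype α] [DecidableEq α] (M : Matrix α α Lau)
    (h : ∀ z, IsUnit (M.map fun x => Ev x z)) : IsUnit M := by
  rw [Matrix.isUnit_iff_isUnit_det]
  by_contra hc
  obtain ⟨φ, hφ⟩ := WeakDual.CharacterSpace.exists_apply_eq_zero hc
  obtain ⟨z, hz⟩ := exists_eq_Ev φ
  have h1 := (Matrix.isUnit_iff_isUnit_det _).1 (h z)
  have h2 : (M.map fun x => Ev x z).det = Ev M.det z :=
    (RingHom.map_det ((evC z).comp Ev) M).symm
  rw [h2, ← hz, hφ] at h1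
  exact not_isUnit_zero h1

end BottP

/-! ### Approximation of loops by Fourier series -/

namespace BottP
open Set unitInterval Filter

theorem denseRange_Ev : DenseRange Ev := by
  let T : Lau →ₗ[ℂ] C(UnitAddCircle, ℂ) :=
    { toFun := Ev, map_add' := map_add Ev, map_smul' := Ev_smul }
  have h1 : Submodule.span ℂ (range <| @fourier 1) ≤ LinearMap.range T := by
    rw [Submodule.span_le]
    rintro _ ⟨n, rfl⟩
    exact ⟨mono (Multiplicative.ofAdd n), Ev_mono _⟩
  intro f
  have h2 : f ∈ (Submodule.span ℂ (range <| @fourier 1)).topologicalClosure := by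
    rw [span_fourier_closure_eq_top]; trivial
  exact closure_mono h1 h2

/-- Absolutely convergent Fourier series are dense among continuous functions with a prescribed
value at the base point. -/
theorem exists_Ev_near (f : C(UnitAddCircle, ℂ)) {ε : ℝ} (hε : 0 < ε) :
    ∃ x, aug _ x = f 0 ∧ ∀ z, ‖Ev x z - f z‖ < ε := by
  obtain ⟨x, hx⟩ := denseRange_Ev.exists_dist_lt f (half_pos hε)
  rw [dist_comm, dist_eq_norm] at hx
  have hx' : ∀ z, ‖Ev x z - f z‖ < ε / 2 := fun z =>
    (ContinuousMap.norm_coe_le_norm (Ev x - f) z).trans_lt hx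
  refine ⟨x + (f 0 - aug _ x) • 1, by rw [map_add, aug_smul, map_one]; ring, fun z => ?_⟩
  have : Ev (x + (f 0 - aug _ x) • 1) z - f z = (Ev x z - f z) - (Ev x 0 - f 0) := by
    rw [map_add, Ev_smul, map_one, ContinuousMap.add_apply, ContinuousMap.smul_apply,
      ContinuousMap.one_apply, smul_eq_mul, mul_one, Ev_apply_zero]
    ring
  rw [this]
  linarith [norm_sub_le (Ev x z - f z) (Ev x 0 - f 0), hx' z, hx' 0]

/-- The version of `exists_Ev_near` for loops. -/
theorem exists_Ev_near_loop (f : I → ℂ) (hf : Continuous f) (h01 : f 0 = f 1) {ε : ℝ} (hε : 0 < ε) :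
    ∃ x, aug _ x = f 0 ∧ ∀ s : I, ‖Ev x ((s : ℝ) : UnitAddCircle) - f s‖ < ε := by
  let f' : ℝ → ℂ := fun s => f (projIcc 0 1 zero_le_one s)
  have hf' : Continuous f' := hf.comp continuous_projIcc
  have hv : ∀ s : I, f' s = f s := fun s => by simp only [f', projIcc_val]
  have h01' : f' 0 = f' 1 := by
    have h0 := hv 0; have h1 := hv 1
    rw [Icc.coe_zero] at h0; rw [Icc.coe_one] at h1
    rw [h0, h1, h01]
  let F : C(UnitAddCircle, ℂ) := ⟨AddCircle.liftIco 1 0 f',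
    AddCircle.liftIco_zero_continuous h01' hf'.continuousOn⟩
  have hF : ∀ s : I, F ((s : ℝ) : UnitAddCircle) = f s := fun s => by
    change AddCircle.liftIco 1 0 f' _ = _
    rcases s.2.2.lt_or_eq with h | h
    · rw [AddCircle.liftIco_zero_coe_apply ⟨s.2.1, h⟩, hv]
    · rw [h, AddCircle.coe_period, ← AddCircle.coe_zero,
        AddCircle.liftIco_zero_coe_apply ⟨le_rfl, zero_lt_one⟩, h01', ← h, hv]
  obtain ⟨x, hx0, hx⟩ := exists_Ev_near F hε
  refine ⟨x, ?_, fun s => ?_⟩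
  · have := hF 0
    rw [Icc.coe_zero, AddCircle.coe_zero] at this
    rw [hx0, this]
  · rw [← hF]; exact hx _

section
variable {α : Type} [Fintype α] [DecidableEq α]

/-- Evaluation of a matrix of Fourier series at a point of the circle. -/
noncomputable def evG (z : UnitAddCircle) : GLR α Lau →* GLR α ℂ := mapGL ((evC z).comp Ev)

theorem evG_zero (a : GLR α Lau) : evG 0 a = mapGL (aug _) a := by
  ext i j : 2
  exact Ev_apply_zero _

theorem evG_apply (z : UnitAddCircle) (a : GLR α Lau) (i j : α) : (evG z a).1 i j = Ev (a.1 i j) z :=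
  rfl

theorem continuous_evG : Continuous fun p : GLR α Lau × UnitAddCircle => evG p.2 p.1 :=
  continuous_evGL (K := UnitAddCircle) (continuous_mapGL (α := α) Ev continuous_Ev)

/-- The family of loops attached to a family of matrices of Fourier series. -/
noncomputable def evl {X : Type} (ℓ : X → GLR α Lau) (p : X × I) : GLR α ℂ :=
  evG ((p.2 : ℝ) : UnitAddCircle) (ℓ p.1)

theorem continuous_coe_circle : Continuous fun s : I => ((s : ℝ) : UnitAddCircle) :=
  (AddCircle.continuous_mk' 1).comp continuous_subtype_val

theorem continuous_evl {X : Type} [TopologicalSpace X] {ℓ : X → GLR α Lau} (h : Continuous ℓ) :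
    Continuous (evl ℓ) :=
  continuous_evG.comp ((h.comp continuous_fst).prodMk (continuous_coe_circle.comp continuous_snd))

theorem evl_mul {X : Type} (ℓ ℓ' : X → GLR α Lau) : evl (ℓ * ℓ') = evl ℓ * evl ℓ' := by
  ext1 p; exact map_mul _ _ _

theorem evl_inv {X : Type} (ℓ : X → GLR α Lau) : evl ℓ⁻¹ = (evl ℓ)⁻¹ := by
  ext1 p; exact map_inv _ _

theorem evl_one {X : Type} : evl (1 : X → GLR α Lau) = 1 := by
  ext1 p; exact map_one _

theorem evl_eq_one {X : Type} {Y : Set X} {ℓ : X → GLR α Lau} (haug : ∀ x, mapGL (aug _) (ℓ x) = 1)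
    (hY : ∀ y ∈ Y, ℓ y = 1) : ∀ p ∈ bd Y, evl ℓ p = 1 := by
  rintro ⟨x, t⟩ (h | h | h)
  · simp only [evl, hY x h, map_one]
  · simp only at h
    simp only [evl, h, Icc.coe_zero, AddCircle.coe_zero, evG_zero, haug]
  · simp only at h
    simp only [evl, h, Icc.coe_one, AddCircle.coe_period, evG_zero, haug]

theorem evl_mem_maps {X : Type} [TopologicalSpace X] {Y : Set X} {ℓ : X → GLR α Lau}
    (hc : Continuous ℓ) (haug : ∀ x, mapGL (aug _) (ℓ x) = 1) (hY : ∀ y ∈ Y, ℓ y = 1) :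
    evl ℓ ∈ maps (bd Y) (GLR α ℂ) :=
  mem_maps.2 ⟨continuous_evl hc, evl_eq_one haug hY⟩

/-- Matrices uniformly close to a compact family of invertible matrices are invertible. -/
theorem exists_unit_radius {K : Type} [TopologicalSpace K] [CompactSpace K] (z : K → GLR α ℂ)
    (hz : Continuous z) : ∃ ε > 0, ∀ p, ∀ m : Matrix α α ℂ,
      (∀ i j, ‖m i j - (z p).1 i j‖ < ε) → IsUnit m := by
  let O : Set (K × (α → α → ℂ)) := {q | IsUnit ((z q.1).1 + Matrix.of q.2)}
  have hO : IsOpen O := (isOpenEmbedding_val_GLR α ℂ).isOpen_range.preimage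
    (((Units.continuous_val.comp hz).comp continuous_fst).add continuous_snd)
  obtain ⟨u, v, -, hv, hu, h0, huv⟩ := generalized_tube_lemma (isCompact_univ (X := K))
    (isCompact_singleton (x := (0 : α → α → ℂ))) hO (by
      rintro ⟨p, m⟩ ⟨-, hm⟩
      rw [mem_singleton_iff] at hm
      simp only at hm
      subst hm
      change IsUnit ((z p).1 + Matrix.of 0)
      rw [Matrix.of_zero, add_zero]
      exact (z p).isUnit)
  obtain ⟨ε, hε, hb⟩ := Metric.isOpen_iff.1 hv 0 (h0 rfl)
  refine ⟨ε, hε, fun p m hm => ?_⟩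
  have h1 : (p, fun i j => m i j - (z p).1 i j) ∈ O := by
    refine huv ⟨hu trivial, hb ?_⟩
    rw [mem_ball_zero_iff, pi_norm_lt_iff hε]
    exact fun i => (pi_norm_lt_iff hε).2 fun j => hm i j
  have h2 : (z p).1 + Matrix.of (fun i j => m i j - (z p).1 i j) = m := by
    ext i j; simp
  rw [← h2]; exact h1

theorem exists_coe_circle (w : UnitAddCircle) : ∃ s : I, ((s : ℝ) : UnitAddCircle) = w := by
  have : w ∈ ((↑) : ℝ → UnitAddCircle) '' Icc 0 (0 + 1) := by
    rw [AddCircle.coe_image_Icc_eq]; trivial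
  obtain ⟨s, hs, rfl⟩ := this
  exact ⟨⟨s, by simpa using hs⟩, rfl⟩

/-- A matrix of Fourier series close to a loop of invertible matrices is invertible. -/
theorem isUnit_of_close {X : Type} {z : X × I → GLR α ℂ} {ε : ℝ}
    (hε : ∀ p, ∀ m : Matrix α α ℂ, (∀ i j, ‖m i j - (z p).1 i j‖ < ε) → IsUnit m) (x : X)
    (m : Matrix α α Lau)
    (hm : ∀ (s : I) i j, ‖Ev (m i j) ((s : ℝ) : UnitAddCircle) - (z (x, s)).1 i j‖ < ε) :
    IsUnit m := by
  refine isUnit_matrix_lau _ fun w => ?_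
  obtain ⟨s, rfl⟩ := exists_coe_circle w
  exact hε (x, s) _ (hm s)

/-- Approximation of families of loops by families of Fourier series, keeping the value `1` on `Y`
and at the base point of the circle. The conditions are convex and locally solvable by constants, so
a partition of unity applies. -/
theorem exists_approx {X : Type} [TopologicalSpace X] [CompactSpace X] [T2Space X] {Y : Set X}
    (hY : IsClosed Y) (z : X × I → GLR α ℂ) (hz : Continuous z) (hzY : ∀ p ∈ bd Y, z p = 1)
    {ε : ℝ} (hε : 0 < ε)
    (hu : ∀ p, ∀ m : Matrix α α ℂ, (∀ i j, ‖m i j - (z p).1 i j‖ < ε) → IsUnit m) :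
    ∃ ℓ : X → GLR α Lau, Continuous ℓ ∧ (∀ y ∈ Y, ℓ y = 1) ∧ (∀ x, mapGL (aug _) (ℓ x) = 1) ∧
      ∀ x (s : I) i j, ‖Ev ((ℓ x).1 i j) ((s : ℝ) : UnitAddCircle) - (z (x, s)).1 i j‖ < ε := by
  let t : X → Set (α → α → Lau) := fun x => {m | (∀ i j, aug _ (m i j) = (1 : Matrix α α ℂ) i j) ∧
    (x ∈ Y → m = (1 : Matrix α α Lau)) ∧
    ∀ (s : I) i j, ‖Ev (m i j) ((s : ℝ) : UnitAddCircle) - (z (x, s)).1 i j‖ < ε}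
  have hzc : ∀ i j, Continuous fun p => (z p).1 i j := fun i j =>
    (Units.continuous_val.comp hz).matrix_elem i j
  have hsm : ∀ (c : ℝ) (x : Lau), c • x = (c : ℂ) • x := fun c x => (Complex.coe_smul c x).symm
  have htc : ∀ x, Convex ℝ (t x) := by
    rintro x m ⟨h1, h2, h3⟩ m' ⟨h1', h2', h3'⟩ a b ha hb hab
    have habc : (a : ℂ) + b = 1 := by rw [← Complex.ofReal_add, hab, Complex.ofReal_one]
    refine ⟨fun i j => ?_, fun hx => ?_, fun s i j => ?_⟩
    · change aug _ (a • m i j + b • m' i j) = _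
      rw [hsm, hsm, map_add, aug_smul, aug_smul, h1, h1', ← add_mul, habc, one_mul]
    · ext i j
      change a • m i j + b • m' i j = _
      rw [congrFun (congrFun (h2 hx) i) j, congrFun (congrFun (h2' hx) i) j]
      rw [← add_smul, hab, one_smul]
    · change ‖Ev (a • m i j + b • m' i j) _ - _‖ < ε
      have : Ev (a • m i j + b • m' i j) ((s : ℝ) : UnitAddCircle) - (z (x, s)).1 i j =
          (a : ℂ) * (Ev (m i j) ((s : ℝ) : UnitAddCircle) - (z (x, s)).1 i j) +
          (b : ℂ) * (Ev (m' i j) ((s : ℝ) : UnitAddCircle) - (z (x, s)).1 i j) := by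
        rw [hsm, hsm, map_add, Ev_smul, Ev_smul, ContinuousMap.add_apply, ContinuousMap.smul_apply,
          ContinuousMap.smul_apply, smul_eq_mul, smul_eq_mul]
        linear_combination (z (x, s)).1 i j * habc
      rw [this]
      refine (norm_add_le _ _).trans_lt ?_
      rw [norm_mul, norm_mul, Complex.norm_of_nonneg ha, Complex.norm_of_nonneg hb]
      have h3 := h3 s i j
      have h3' := h3' s i j
      rcases ha.eq_or_lt with h | h
      · subst h
        rw [zero_add] at hab
        rw [hab, zero_mul, zero_add, one_mul]; exact h3'
      · nlinarith
  have htl : ∀ x, ∃ c, ∀ᶠ y in 𝓝 x, c ∈ t y := by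
    intro x
    by_cases hx : x ∈ Y
    · refine ⟨(1 : Matrix α α Lau), ?_⟩
      have hO : IsOpen {p : X × I | ∀ i j, ‖(1 : Matrix α α ℂ) i j - (z p).1 i j‖ < ε} := by
        simp only [ofPred_forall]
        exact isOpen_iInter_of_finite fun i => isOpen_iInter_of_finite fun j =>
          isOpen_lt ((continuous_const.sub (hzc i j)).norm) continuous_const
      obtain ⟨u, v, hu', -, hxu, hv, huv⟩ := generalized_tube_lemma (isCompact_singleton (x := x))
        (isCompact_univ (X := I)) hO (by
          rintro ⟨p, s⟩ ⟨hp, -⟩ i j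
          rw [mem_singleton_iff] at hp
          simp only at hp
          subst hp
          rw [hzY (p, s) (Or.inl hx), Units.val_one, sub_self, norm_zero]
          exact hε)
      filter_upwards [hu'.mem_nhds (hxu rfl)] with y hy
      refine ⟨fun i j => ?_, fun _ => rfl, fun s i j => ?_⟩
      · rw [Matrix.one_apply, Matrix.one_apply]; split_ifs <;> simp
      · have h1 : Ev ((1 : Matrix α α Lau) i j) ((s : ℝ) : UnitAddCircle) =
            (1 : Matrix α α ℂ) i j := by
          rw [Matrix.one_apply, Matrix.one_apply]; split_ifs
          · rw [map_one]; rfl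
          · rw [map_zero]; rfl
        rw [h1]
        exact huv (⟨hy, hv trivial⟩ : (y, s) ∈ u ×ˢ v) i j
    · have h1 : ∀ i j, ∃ c, aug _ c = (z (x, 0)).1 i j ∧
          ∀ s : I, ‖Ev c ((s : ℝ) : UnitAddCircle) - (z (x, s)).1 i j‖ < ε := fun i j =>
        exists_Ev_near_loop (fun s => (z (x, s)).1 i j) ((hzc i j).comp (by fun_prop))
          (by simp only [hzY (x, 0) (Or.inr (Or.inl rfl)), hzY (x, 1) (Or.inr (Or.inr rfl))]) hε
      choose c hc1 hc2 using h1
      refine ⟨c, ?_⟩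
      have hO : IsOpen {p : X × I | ∀ i j,
          ‖Ev (c i j) ((p.2 : ℝ) : UnitAddCircle) - (z p).1 i j‖ < ε} := by
        simp only [ofPred_forall]
        exact isOpen_iInter_of_finite fun i => isOpen_iInter_of_finite fun j =>
          isOpen_lt ((((map_continuous (Ev (c i j))).comp
            (continuous_coe_circle.comp continuous_snd)).sub (hzc i j)).norm) continuous_const
      obtain ⟨u, v, hu', -, hxu, hv, huv⟩ := generalized_tube_lemma (isCompact_singleton (x := x))
        (isCompact_univ (X := I)) hO (by
          rintro ⟨p, s⟩ ⟨hp, -⟩ i j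
          rw [mem_singleton_iff] at hp
          simp only at hp
          subst hp
          exact hc2 i j s)
      filter_upwards [hu'.mem_nhds (hxu rfl), hY.isOpen_compl.mem_nhds hx] with y hy hyY
      refine ⟨fun i j => ?_, fun h => absurd h hyY, fun s i j =>
        huv (⟨hy, hv trivial⟩ : (y, s) ∈ u ×ˢ v) i j⟩
      rw [hc1, hzY (x, 0) (Or.inr (Or.inl rfl)), Units.val_one]
  obtain ⟨g, hg⟩ := exists_continuous_forall_mem_convex_of_local_const htc htl
  obtain ⟨ℓ, hℓ, hℓg⟩ := exists_units_lift (α := α) (R := Lau) (fun x => Matrix.of (g x))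
    (map_continuous g) fun x => isUnit_of_close hu x _ (hg x).2.2
  refine ⟨ℓ, hℓ, fun y hy => Units.ext ?_, fun x => ?_, fun x s i j => ?_⟩
  · rw [hℓg, (hg y).2.1 hy]; rfl
  · ext i j : 2
    rw [val_mapGL, hℓg]
    exact (hg x).1 i j
  · rw [hℓg]; exact (hg x).2.2 s i j

end

end BottP

/-! ### Loops and the Laurent algebra -/

namespace BottP
open Set unitInterval Filter

section
variable {α : Type} [Fintype α] [DecidableEq α]

theorem norm_mul_lt_of_le_one {u x : ℂ} {ε : ℝ} (hu : ‖u‖ ≤ 1) (hx : ‖x‖ < ε) : ‖u * x‖ < ε := by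
  rw [norm_mul]
  exact (mul_le_of_le_one_left (norm_nonneg _) hu).trans_lt hx

theorem norm_coe_le (u : I) : ‖((u : ℝ) : ℂ)‖ ≤ 1 := by
  rw [Complex.norm_of_nonneg u.2.1]; exact u.2.2

theorem norm_one_sub_coe_le (u : I) : ‖(1 - (u : ℝ) : ℂ)‖ ≤ 1 := by
  have := norm_coe_le (σ u)
  simpa using this

/-- Uniformly close families of invertible matrices are joined by the straight-line homotopy. -/
theorem null_segment {K : Type} [TopologicalSpace K] {Z : Set K} {z w : K → GLR α ℂ}
    (hz : Continuous z) (hw : Continuous w) {ε : ℝ}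
    (hu : ∀ p, ∀ m : Matrix α α ℂ, (∀ i j, ‖m i j - (z p).1 i j‖ < ε) → IsUnit m)
    (hzw : ∀ p i j, ‖(w p).1 i j - (z p).1 i j‖ < ε) (hZ : ∀ p ∈ Z, w p = z p) :
    Null ⊤ Z (w * z⁻¹) := by
  have hc : Continuous fun q : K × I => (z q.1).1 + ((q.2 : ℝ) : ℂ) • ((w q.1).1 - (z q.1).1) := by
    have h1 : Continuous fun q : K × I => (z q.1).1 :=
      Units.continuous_val.comp (hz.comp continuous_fst)
    have h2 : Continuous fun q : K × I => (w q.1).1 :=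
      Units.continuous_val.comp (hw.comp continuous_fst)
    have h3 : Continuous fun q : K × I => ((q.2 : ℝ) : ℂ) := by fun_prop
    exact h1.add (h3.smul (h2.sub h1))
  obtain ⟨F, hF, hFv⟩ := exists_units_lift (α := α) (R := ℂ) _ hc fun q => hu q.1 _ fun i j => by
    rw [Matrix.add_apply, add_sub_cancel_left]
    exact norm_mul_lt_of_le_one (norm_coe_le q.2) (hzw q.1 i j)
  refine Null.of_homotopy_top F hF (fun x => ?_) (fun x => ?_) fun y hy t => ?_
  · ext1; rw [hFv]; simp
  · ext1; rw [hFv]; simp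
  · ext1; rw [hFv, hFv, hZ y hy]; simp

/-- Every family of loops in the general linear group is homotopic to a family of absolutely
convergent Fourier series. -/
theorem loop_surj {X : Type} [TopologicalSpace X] [CompactSpace X] [T2Space X] {Y : Set X}
    (hY : IsClosed Y) (z : X × I → GLR α ℂ) (hz : z ∈ maps (bd Y) (GLR α ℂ)) :
    ∃ ℓ : X → GLR α Lau, Continuous ℓ ∧ (∀ y ∈ Y, ℓ y = 1) ∧ (∀ x, mapGL (aug _) (ℓ x) = 1) ∧
      Null ⊤ (bd Y) (evl ℓ * z⁻¹) := by
  obtain ⟨hzc, hz1⟩ := mem_maps.1 hz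
  obtain ⟨ε, hε, hu⟩ := exists_unit_radius z hzc
  obtain ⟨ℓ, hℓ, hℓY, haug, hd⟩ := exists_approx hY z hzc hz1 hε hu
  exact ⟨ℓ, hℓ, hℓY, haug, null_segment hzc (continuous_evl hℓ) hu (fun p => hd p.1 p.2)
    fun p hp => by rw [hz1 p hp, evl_eq_one haug hℓY p hp]⟩

/-- A family of Fourier series whose family of loops is null-homotopic is null-homotopic through
invertible matrices of Fourier series. -/
theorem loop_inj {X : Type} [TopologicalSpace X] [CompactSpace X] [T2Space X] {Y : Set X}
    (hY : IsClosed Y) (ℓ : X → GLR α Lau) (hℓ : Continuous ℓ) (hℓY : ∀ y ∈ Y, ℓ y = 1)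
    (haug : ∀ x, mapGL (aug _) (ℓ x) = 1) (hn : Null ⊤ (bd Y) (evl ℓ)) :
    Null (mapGL (α := α) (aug (Multiplicative ℤ))).ker Y ℓ := by
  obtain ⟨F, hF, hF0, hF1, hFY, -⟩ := hn
  let Y' : Set (X × I) := {p | p.1 ∈ Y ∨ p.2 = 0}
  have hY' : IsClosed Y' := (hY.preimage continuous_fst).union
    (isClosed_singleton.preimage (continuous_snd (X := X) (Y := I)))
  let z : (X × I) × I → GLR α ℂ := fun p => F ((p.1.1, p.2), p.1.2)
  have hz : Continuous z := hF.comp (by fun_prop)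
  have hz1 : ∀ p ∈ bd Y', z p = 1 := by
    rintro ⟨⟨x, u⟩, s⟩ ((h | h) | h)
    · exact hFY (x, s) (Or.inl h) u
    · simp only at h; subst h; exact hF0 _
    · exact hFY (x, s) (Or.inr h) u
  obtain ⟨ε, hε, hu⟩ := exists_unit_radius z hz
  obtain ⟨L, hL, hLY, hLaug, hd⟩ := exists_approx hY' z hz hz1 hε hu
  have hN1 : Null (mapGL (α := α) (aug (Multiplicative ℤ))).ker Y fun x => L (x, 1) :=
    ⟨L, hL, fun x => hLY _ (Or.inr rfl), fun x => rfl, fun y hy t => hLY _ (Or.inl hy),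
      fun p => hLaug p⟩
  -- `L` is a null homotopy of an approximation of `ℓ`, joined to `ℓ` by a segment
  refine Null.of_mul_inv (f := fun x => L (x, 1)) ?_ hN1
  have hL1 : Continuous fun x => L (x, 1) := hL.comp (by fun_prop)
  have hc : Continuous fun q : X × I =>
      (1 - (q.2 : ℝ) : ℂ) • (L (q.1, 1)).1 + ((q.2 : ℝ) : ℂ) • (ℓ q.1).1 := by
    have h1 : Continuous fun q : X × I => (L (q.1, 1)).1 :=
      Units.continuous_val.comp (hL1.comp continuous_fst)
    have h2 : Continuous fun q : X × I => (ℓ q.1).1 :=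
      Units.continuous_val.comp (hℓ.comp continuous_fst)
    have h3 : Continuous fun q : X × I => ((q.2 : ℝ) : ℂ) := by fun_prop
    exact ((continuous_const.sub h3).smul h1).add (h3.smul h2)
  obtain ⟨G, hG, hGv⟩ := exists_units_lift (α := α) (R := Lau) _ hc fun q =>
    isUnit_of_close hu (q.1, 1) _ fun s i j => by
      have h1 : z ((q.1, 1), s) = evl ℓ (q.1, s) := hF1 _
      have h2 : (evl ℓ (q.1, s)).1 i j = Ev ((ℓ q.1).1 i j) ((s : ℝ) : UnitAddCircle) := rfl
      have h3 := hd (q.1, 1) s i j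
      rw [h1, h2] at h3 ⊢
      have h4 : Ev (((1 - (q.2 : ℝ) : ℂ) • (L (q.1, 1)).1 + ((q.2 : ℝ) : ℂ) • (ℓ q.1).1) i j)
          ((s : ℝ) : UnitAddCircle) - Ev ((ℓ q.1).1 i j) ((s : ℝ) : UnitAddCircle) =
          (1 - (q.2 : ℝ) : ℂ) * (Ev ((L (q.1, 1)).1 i j) ((s : ℝ) : UnitAddCircle) -
            Ev ((ℓ q.1).1 i j) ((s : ℝ) : UnitAddCircle)) := by
        rw [Matrix.add_apply, Matrix.smul_apply, Matrix.smul_apply, map_add, Ev_smul, Ev_smul,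
          ContinuousMap.add_apply, ContinuousMap.smul_apply, ContinuousMap.smul_apply, smul_eq_mul,
          smul_eq_mul]
        ring
      rw [h4]
      exact norm_mul_lt_of_le_one (norm_one_sub_coe_le q.2) h3
  have hGaug : ∀ q, mapGL (aug (Multiplicative ℤ)) (G q) = 1 := fun q => by
    ext i j : 2
    have h1 := congrArg (fun u : GLR α ℂ => u.1 i j) (haug q.1)
    have h2 := congrArg (fun u : GLR α ℂ => u.1 i j) (hLaug (q.1, 1))
    simp only [val_mapGL, Matrix.map_apply] at h1 h2
    rw [val_mapGL, Matrix.map_apply, hGv, Matrix.add_apply, Matrix.smul_apply, Matrix.smul_apply,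
      map_add, aug_smul, aug_smul, h1, h2]
    ring
  refine Null.of_homotopy G hG (fun x => ?_) (fun x => ?_) (fun y hy t => ?_) fun p => ?_
  · ext1; rw [hGv]; simp
  · ext1; rw [hGv]; simp
  · ext1
    rw [hGv, hGv, hℓY y hy, hLY (y, 1) (Or.inl hy)]
    simp only [Units.val_one, Icc.coe_zero, Complex.ofReal_zero, zero_smul, add_zero, sub_zero,
      one_smul]
    ext i j
    rw [Matrix.add_apply, Matrix.smul_apply, Matrix.smul_apply, ← add_smul, sub_add_cancel,
      one_smul]
  · rw [MonoidHom.mem_ker, map_mul, map_inv, hGaug, hGaug]; simp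

end
end BottP

/-! ### Compatibility of symbols, corners and stabilization -/

namespace BottP
open Set unitInterval Filter

section
variable {α β : Type} [Fintype α] [DecidableEq α] [Fintype β] [DecidableEq β]

theorem val_kap (u : GLR α ℂ) (i j : α) :
    ((toeFrame.kap α u).1 - 1) i j = toeFrame.lam ((u.1 - 1) i j) * toeFrame.e := by
  rw [← toeFrame.kM_apply, Frame.kap, val_unitsOne, add_sub_cancel_left]

theorem kM_pad (e : α ↪ β) (a : Matrix α α ℂ) :
    toeFrame.kM β (pad e a) = pad e (toeFrame.kM α a) := by
  ext1 i j
  rw [toeFrame.kM_apply]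
  by_cases hi : ∃ k, i = e k
  · obtain ⟨k, rfl⟩ := hi
    by_cases hj : ∃ l, j = e l
    · obtain ⟨l, rfl⟩ := hj
      rw [pad_apply_self, pad_apply_self, toeFrame.kM_apply]
    · push Not at hj
      rw [pad_apply_right _ _ _ _ hj, pad_apply_right _ _ _ _ hj, map_zero, zero_mul]
  · push Not at hi
    rw [pad_apply_left _ _ _ _ hi, pad_apply_left _ _ _ _ hi, map_zero, zero_mul]

theorem kap_st (e : α ↪ β) (u : GLR α ℂ) :
    toeFrame.kap β (st e u) = st e (toeFrame.kap α u) := by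
  ext1
  simp only [Frame.kap, st, val_unitsOne, add_sub_cancel_left, kM_pad]

theorem sym_e : sym toeFrame.e = 0 := sym_of_isK toeFrame.isK_e

theorem mapGL_eq_one_iff {R R' : Type*} [Ring R] [Ring R'] (φ : R →+* R') (g : GLR α R) :
    mapGL φ g = 1 ↔ ∀ i j, φ ((g.1 - 1) i j) = 0 := by
  have h1 : ∀ i j, φ ((g.1 - 1) i j) = ((mapGL φ g).1 - 1) i j := fun i j => by
    rw [val_mapGL, Matrix.sub_apply, Matrix.sub_apply, map_sub, Matrix.map_apply, Matrix.one_apply,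
      Matrix.one_apply, apply_ite φ, map_one, map_zero]
  simp only [h1]
  constructor
  · intro h i j
    rw [h, Units.val_one, sub_self]; rfl
  · intro h
    ext1
    exact sub_eq_zero.1 (Matrix.ext h)

theorem mapGL_sym_kap (u : GLR α ℂ) : mapGL sym (toeFrame.kap α u) = 1 := by
  rw [mapGL_eq_one_iff]
  intro i j
  rw [val_kap, map_mul, sym_e, mul_zero]

theorem mapGL_sym_iM (r : ℕ) (u : GLR (Fin r × α) ℂ) :
    mapGL sym (unitsOne (toeFrame.iM r α) u) = 1 := by
  rw [mapGL_eq_one_iff]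
  intro i j
  rw [val_unitsOne, add_sub_cancel_left, Frame.iM_apply, Matrix.mul_apply, map_sum]
  refine Finset.sum_eq_zero fun k _ => ?_
  rw [map_mul]
  have : sym (toeFrame.Q r α k j) = 0 := by
    rw [Frame.Q, Matrix.of_apply]
    split_ifs
    · rw [map_mul, sym_e, zero_mul]
    · rw [map_zero]
  rw [this, mul_zero]

theorem mapGL_aug_sym (g : GLR α Toe) : mapGL (aug _) (mapGL sym g) = mapGL (aug Bic) g := by
  ext i j
  exact aug_mapA _ _

theorem mapGL_aug_of_sym {g : GLR α Toe} (h : mapGL sym g = 1) : mapGL (aug Bic) g = 1 := by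
  rw [← mapGL_aug_sym, h, map_one]

theorem isK_of_mapGL {g : GLR α Toe} (h : mapGL sym g = 1) (i j : α) :
    toeFrame.IsK ((g.1 - 1) i j) := isK_of_sym ((mapGL_eq_one_iff _ _).1 h i j)

/-- A matrix congruent to `1` modulo the ideal has trivial symbol, and conversely by
`isK_of_mapGL`. -/
theorem mapGL_of_isK {g : GLR α Toe} (h : ∀ i j, toeFrame.IsK ((g.1 - 1) i j)) :
    mapGL sym g = 1 := (mapGL_eq_one_iff _ _).2 fun i j => sym_of_isK (h i j)

theorem evl_st {X : Type} (e : α ↪ β) (ℓ : X → GLR α Lau) :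
    evl (fun x => st e (ℓ x)) = fun p => st e (evl ℓ p) := by
  ext1 p
  simp only [evl, evG, mapGL_st]

theorem evl_null {X : Type} [TopologicalSpace X] {Y : Set X} {ℓ : X → GLR α Lau}
    (h : Null (mapGL (α := α) (aug (Multiplicative ℤ))).ker Y ℓ) : Null ⊤ (bd Y) (evl ℓ) := by
  obtain ⟨F, hF, h0, h1, hY, hk⟩ := h
  have hk' : ∀ p, mapGL (aug _) (F p) = 1 := fun p => hk p
  refine ⟨fun q => evl (fun x => F (x, q.2)) q.1, ?_, ?_, ?_, ?_, fun _ => trivial⟩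
  · exact continuous_evG.comp ((hF.comp (by fun_prop : Continuous fun q : (X × I) × I => (q.1.1, q.2))).prodMk
      (continuous_coe_circle.comp (by fun_prop)))
  · intro p
    simp only [evl, h0, map_one]
  · intro p
    simp only [evl, h1]
  · intro p hp t
    exact evl_eq_one (Y := Y) (ℓ := fun x => F (x, t)) (fun x => hk' _) (fun y hy => hY y hy t) p hp

open Classical in
/-- Two injections with the same domain have a common extension. -/
theorem exists_pushout {β' : Type} [Fintype β'] [DecidableEq β'] (e : α ↪ β) (e' : α ↪ β') :
    ∃ (f : β ↪ β ⊕ β') (f' : β' ↪ β ⊕ β'), e.trans f = e'.trans f' := by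
  refine ⟨⟨Sum.inl, Sum.inl_injective⟩,
    ⟨fun b => if h : ∃ a, e' a = b then Sum.inl (e h.choose) else Sum.inr b, ?_⟩, ?_⟩
  · intro b c h
    dsimp only at h
    split_ifs at h with hb hc hc
    · rw [← hb.choose_spec, ← hc.choose_spec, e.injective (Sum.inl_injective h)]
    · exact Sum.inr_injective h
  · ext1 a
    have h : ∃ a', e' a' = e' a := ⟨a, rfl⟩
    change Sum.inl (e a) = dite _ _ _
    rw [dif_pos h, e'.injective h.choose_spec]

end
end BottP

/-! ### The Bott correspondence -/

namespace BottP
open Set unitInterval Filter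

section
variable {α β δ : Type} [Fintype α] [DecidableEq α] [Fintype β] [DecidableEq β]
  [Fintype δ] [DecidableEq δ]
variable {X : Type} [TopologicalSpace X]

/-- `γ` is a path of maps into the Toeplitz group, relative to `Y` and with trivial augmentation,
from `1` to the corner embedding of `u`. -/
structure Conn (Y : Set X) (u : X → GLR β ℂ) (γ : X × I → GLR β Toe) : Prop where
  cont : Continuous γ
  zero : ∀ x, γ (x, 0) = 1
  one : ∀ x, γ (x, 1) = toeFrame.kap β (u x)
  rel : ∀ y ∈ Y, ∀ t, γ (y, t) = 1
  aug : ∀ p, mapGL (aug Bic) (γ p) = 1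

theorem Conn.mul {Y : Set X} {u u' : X → GLR β ℂ} {γ γ' : X × I → GLR β Toe} (h : Conn Y u γ)
    (h' : Conn Y u' γ') : Conn Y (u * u') (γ * γ') where
  cont := h.cont.mul h'.cont
  zero x := by simp [h.zero, h'.zero]
  one x := by simp [h.one, h'.one]
  rel y hy t := by simp [h.rel y hy, h'.rel y hy]
  aug p := by simp [h.aug, h'.aug]

theorem Conn.inv {Y : Set X} {u : X → GLR β ℂ} {γ : X × I → GLR β Toe} (h : Conn Y u γ) :
    Conn Y u⁻¹ γ⁻¹ where
  cont := h.cont.inv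
  zero x := by simp [h.zero]
  one x := by simp [h.one]
  rel y hy t := by simp [h.rel y hy]
  aug p := by simp [h.aug]

theorem Conn.st {Y : Set X} {u : X → GLR β ℂ} {γ : X × I → GLR β Toe} (h : Conn Y u γ)
    (f : β ↪ δ) : Conn Y (fun x => st f (u x)) (fun p => st f (γ p)) where
  cont := (continuous_st f).comp h.cont
  zero x := by rw [h.zero, map_one]
  one x := by rw [h.one, kap_st]
  rel y hy t := by rw [h.rel y hy, map_one]
  aug p := by rw [mapGL_st, h.aug, map_one]

/-- The symbol of a path. -/
noncomputable def symP (γ : X × I → GLR β Toe) (p : X × I) : GLR β Lau := mapGL sym (γ p)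

theorem Conn.continuous_symP {Y : Set X} {u : X → GLR β ℂ} {γ : X × I → GLR β Toe}
    (h : Conn Y u γ) : Continuous (symP γ) := (continuous_mapGL _ continuous_sym).comp h.cont

theorem Conn.aug_symP {Y : Set X} {u : X → GLR β ℂ} {γ : X × I → GLR β Toe}
    (h : Conn Y u γ) (p : X × I) : mapGL (BottP.aug _) (symP γ p) = 1 := by
  rw [symP, mapGL_aug_sym, h.aug]

theorem Conn.symP_eq_one {Y : Set X} {u : X → GLR β ℂ} {γ : X × I → GLR β Toe}
    (h : Conn Y u γ) : ∀ p ∈ bd Y, symP γ p = 1 := by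
  rintro ⟨x, t⟩ (hp | rfl | rfl : x ∈ Y ∨ t = 0 ∨ t = 1)
  · rw [symP, h.rel x hp, map_one]
  · rw [symP, h.zero, map_one]
  · rw [symP, h.one, mapGL_sym_kap]

theorem Conn.mem_maps {Y : Set X} {u : X → GLR β ℂ} {γ : X × I → GLR β Toe}
    (h : Conn Y u γ) : evl (symP γ) ∈ maps (bd (bd Y)) (GLR β ℂ) :=
  evl_mem_maps h.continuous_symP h.aug_symP h.symP_eq_one

theorem symP_mul (γ γ' : X × I → GLR β Toe) : symP (γ * γ') = symP γ * symP γ' := by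
  ext1 p; simp [symP]

theorem symP_inv (γ : X × I → GLR β Toe) : symP γ⁻¹ = (symP γ)⁻¹ := by
  ext1 p; simp [symP]

/-- The Bott correspondence at the level of an injection `e` of index sets: `x` and `z` are linked
by a path `γ` in the Toeplitz group from `1` to the corner embedding of `x` whose symbol is a
loop of maps homotopic to `z`. -/
def BottAt (Y : Set X) (e : α ↪ β) (x : X → GLR α ℂ) (z : (X × I) × I → GLR α ℂ) : Prop :=
  ∃ γ : X × I → GLR β Toe, Conn Y (fun i => st e (x i)) γ ∧
    Null ⊤ (bd (bd Y)) (evl (symP γ) * (fun q => st e (z q))⁻¹)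

/-- Linked maps remain linked after further stabilization. -/
theorem BottAt.push {Y : Set X} {e : α ↪ β} {x : X → GLR α ℂ} {z : (X × I) × I → GLR α ℂ}
    (h : BottAt Y e x z) (f : β ↪ δ) : BottAt Y (e.trans f) x z := by
  obtain ⟨γ, hγ, hn⟩ := h
  refine ⟨fun p => st f (γ p), by simpa only [st_trans] using hγ.st f, ?_⟩
  have h1 : symP (fun p => st f (γ p)) = fun p => st f (symP γ p) := by
    ext1 p; simp only [symP, mapGL_st]
  have := hn.map (H' := ⊤) (st f) (continuous_st f) fun _ _ => trivial
  rw [h1, evl_st]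
  convert this using 1
  ext1 q
  simp only [Pi.mul_apply, Pi.inv_apply, st_trans, map_mul, map_inv]

theorem BottAt.mul {Y : Set X} {e : α ↪ β} {x x' : X → GLR α ℂ} {z z' : (X × I) × I → GLR α ℂ}
    (h : BottAt Y e x z) (h' : BottAt Y e x' z') : BottAt Y e (x * x') (z * z') := by
  obtain ⟨γ, hγ, hn⟩ := h
  obtain ⟨γ', hγ', hn'⟩ := h'
  refine ⟨γ * γ', ?_, ?_⟩
  · convert hγ.mul hγ' using 1
    ext1 i; simp
  · have h1 := (hn'.conj (mem_maps.1 hγ.mem_maps).1).mul hn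
    convert h1 using 1
    rw [symP_mul, evl_mul]
    ext1 q
    simp only [Pi.mul_apply, Pi.inv_apply, map_mul]
    group

theorem BottAt.inv {Y : Set X} {e : α ↪ β} {x : X → GLR α ℂ} {z : (X × I) × I → GLR α ℂ}
    (h : BottAt Y e x z) : BottAt Y e x⁻¹ z⁻¹ := by
  obtain ⟨γ, hγ, hn⟩ := h
  refine ⟨γ⁻¹, ?_, ?_⟩
  · convert hγ.inv using 1
    ext1 i; simp
  · have h1 := hn.inv.conj (mem_maps.1 hγ.mem_maps).1.inv
    convert h1 using 1
    rw [symP_inv, evl_inv]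
    ext1 q
    simp only [Pi.mul_apply, Pi.inv_apply, map_inv]
    group

theorem BottAt.one (Y : Set X) (e : α ↪ β) : BottAt Y e 1 1 := by
  refine ⟨1, ⟨continuous_const, fun _ => rfl, fun _ => by simp, fun _ _ _ => rfl,
    fun _ => map_one _⟩, ?_⟩
  have h1 : symP (1 : X × I → GLR β Toe) = 1 := by ext1; simp [symP]
  rw [h1, evl_one]
  have h2 : (1 * (fun q => st e ((1 : (X × I) × I → GLR α ℂ) q))⁻¹ : (X × I) × I → GLR β ℂ) = 1 := by
    ext1 q; simp
  rw [h2]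
  exact Null.one ⊤ (bd (bd Y))

/-- The Bott correspondence between maps on `X` and maps on `X × I × I`, at some level of
stabilization. It is a subgroup of the product, which makes the resulting bijection of homotopy
classes an isomorphism of groups. -/
def bottRel (α : Type) [Fintype α] [DecidableEq α] (Y : Set X) :
    Subgroup ((X → GLR α ℂ) × ((X × I) × I → GLR α ℂ)) where
  carrier := {p | p.1 ∈ maps Y (GLR α ℂ) ∧ p.2 ∈ maps (bd (bd Y)) (GLR α ℂ) ∧
    ∃ (β : Type) (_ : Fintype β) (_ : DecidableEq β) (e : α ↪ β), BottAt Y e p.1 p.2}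
  mul_mem' := by
    rintro p q ⟨h1, h2, β, _, _, e, h⟩ ⟨h1', h2', β', _, _, e', h'⟩
    obtain ⟨f, f', hf⟩ := exists_pushout e e'
    refine ⟨mul_mem h1 h1', mul_mem h2 h2', _, _, inferInstance, e.trans f, (h.push f).mul ?_⟩
    rw [hf]
    exact h'.push f'
  one_mem' := ⟨one_mem _, one_mem _, α, _, _, Function.Embedding.refl α, BottAt.one Y _⟩
  inv_mem' := by
    rintro p ⟨h1, h2, β, _, _, e, h⟩
    exact ⟨inv_mem h1, inv_mem h2, β, _, _, e, h.inv⟩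

end
end BottP

/-! ### The Bott isomorphism in the stable range -/

namespace BottP
open Set unitInterval Filter _root_.BottP.Frame

section
variable {α β δ : Type} [Fintype α] [DecidableEq α] [Fintype β] [DecidableEq β]
variable {X : Type} [TopologicalSpace X] [CompactSpace X]

/-- The corner embedding of `x` is null in the Toeplitz group by `toe_null`, and the symbol of the
null homotopy is a loop over the Laurent algebra. -/
theorem bott_total_left {Y : Set X} (x : X → GLR α ℂ) (hx : x ∈ maps Y (GLR α ℂ))
    (hs : ∀ {β : Type} [Fintype β] [DecidableEq β] (e : α ↪ β), StabSurj (bd (bd Y)) e) :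
    ∃ z, (x, z) ∈ bottRel α Y := by
  obtain ⟨hxc, hxY⟩ := mem_maps.1 hx
  obtain ⟨r, γ, h1, h2, h3, h4, h5⟩ := toe_null (Y := Y) (fun i => toeFrame.kap α (x i))
    (toeFrame.continuous_kap.comp hxc) (fun i => mapGL_aug_of_sym (mapGL_sym_kap _))
    (fun y hy => by rw [hxY y hy, map_one])
  have hγ : Conn Y (fun i => st (zeroEmb r α) (x i)) γ :=
    ⟨h1, h2, fun i => by rw [h3, kap_st], h4, fun p => h5 p⟩
  obtain ⟨z, hz, hn⟩ := hs (zeroEmb r α) _ hγ.mem_maps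
  exact ⟨z, hx, hz, _, _, _, zeroEmb r α, γ, hγ, hn⟩

/-- A family of loops is a path over the Laurent algebra, which lifts to the Toeplitz group. The
end point of the lift has trivial symbol, hence deforms to a finite corner. -/
theorem bott_total_right [T2Space X] {Y : Set X} (hY : IsClosed Y) (z : (X × I) × I → GLR α ℂ)
    (hz : z ∈ maps (bd (bd Y)) (GLR α ℂ))
    (hs : ∀ {β : Type} [Fintype β] [DecidableEq β] (e : α ↪ β), StabSurj Y e) :
    ∃ x, (x, z) ∈ bottRel α Y := by
  obtain ⟨ℓ, hℓ, hℓY, haug, hn⟩ := loop_surj (isClosed_bd hY) z hz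
  have hℓ0 : ∀ x, ℓ (x, 0) = 1 := fun x => hℓY _ (Or.inr (Or.inl rfl))
  have hℓ1 : ∀ x, ℓ (x, 1) = 1 := fun x => hℓY _ (Or.inr (Or.inr rfl))
  have hℓy : ∀ y ∈ Y, ∀ t, ℓ (y, t) = 1 := fun y hy t => hℓY _ (Or.inl hy)
  obtain ⟨γ, hγ, hγ0, hγs, hγa, hγc⟩ := exists_toe_lift ℓ hℓ (fun x t => by rw [haug, haug])
  have hsym : ∀ x t, mapGL sym (γ (x, t)) = ℓ (x, t) := fun x t => by
    rw [← hγs x t, hℓ0, mul_one]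
  have hγY : ∀ y ∈ Y, ∀ t, γ (y, t) = 1 := fun y hy t =>
    hγc y (fun t => by rw [hℓy y hy, hℓy y hy]) t
  have hf : Continuous fun x => γ (x, 1) := by fun_prop
  obtain ⟨r, g, H, hg, hH, hH0, hH1, hHK, hHc, hgk⟩ := toeFrame.exists_truncation
    (fun x => γ (x, 1)) hf (fun x => isK_of_mapGL (by rw [hsym, hℓ1]))
  have hgm : g ∈ maps Y _ := mem_maps.2 ⟨hg, fun y hy => by
    rw [hgk y 1 (by rw [hγY y hy, map_one]), map_one]⟩
  obtain ⟨x, hx, G, hG, hG0, hG1, hGY, -⟩ := hs (zeroEmb r α) g hgm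
  -- correct the lift `γ` by a path of trivial symbol so that it ends at the corner embedding of `x`
  refine ⟨x, hx, hz, α, _, _, Function.Embedding.refl α, fun p =>
    (unitsOne (toeFrame.iM (r + 1) α) (G p))⁻¹ * H p * (γ (p.1, 1))⁻¹ * γ p, ⟨?_, ?_, ?_, ?_, ?_⟩, ?_⟩
  · have := continuous_unitsOne _ (toeFrame.continuous_iM (r := r + 1) (α := α))
    exact (((this.comp hG).inv.mul hH).mul (hf.comp continuous_fst).inv).mul hγ
  · intro i
    simp only [hG0, hH0, hγ0, map_one]
    group
  · intro i
    simp only [hG1, hH1, st_refl, Pi.mul_apply, map_mul, map_inv, unitsOne_iM_st]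
    group
  · intro y hy t
    simp only [hGY y hy, hγY y hy, hHc y (hγY y hy 1), map_one]
    group
  · intro p
    rw [map_mul, map_mul, map_mul, map_inv, map_inv, hγa, hγa, mapGL_aug_of_sym (mapGL_sym_iM _ _),
      mapGL_aug_of_sym (mapGL_of_isK (hHK p))]
    group
  · convert hn using 1
    have h1 : symP (fun p : X × I => (unitsOne (toeFrame.iM (r + 1) α) (G p))⁻¹ * H p *
        (γ (p.1, 1))⁻¹ * γ p) = ℓ := by
      ext1 p
      rw [symP, map_mul, map_mul, map_mul, map_inv, map_inv, mapGL_sym_iM, mapGL_of_isK (hHK p), hsym,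
        hℓ1, hsym]
      group
    rw [h1]
    ext1 q
    simp only [Pi.mul_apply, Pi.inv_apply, st_refl]

/-- If `x` is null then the path linking it to `z` closes up to a loop in the Toeplitz group, which
is null by `toe_null`, hence so is its symbol. -/
theorem bott_null_right {Y : Set X} {e : α ↪ β} {x : X → GLR α ℂ}
    {z : (X × I) × I → GLR α ℂ} (h : BottAt Y e x z) (hz : z ∈ maps (bd (bd Y)) (GLR α ℂ))
    (hx : Null ⊤ Y x)
    (hs : ∀ {β : Type} [Fintype β] [DecidableEq β] (e : α ↪ β), StabInj (bd (bd Y)) e) :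
    Null ⊤ (bd (bd Y)) z := by
  obtain ⟨γ, hγ, hn⟩ := h
  obtain ⟨F, hF, hF0, hF1, hFY, -⟩ := hx
  have hk : ∀ u : GLR α ℂ, mapGL sym (toeFrame.kap β (st e u)) = 1 := fun u => mapGL_sym_kap _
  obtain ⟨r, hr⟩ := toe_null (Y := bd Y) (fun p => γ p * (toeFrame.kap β (st e (F p)))⁻¹)
    (hγ.cont.mul ((toeFrame.continuous_kap.comp (continuous_st e)).comp hF).inv)
    (fun p => by rw [map_mul, map_inv, hγ.aug, mapGL_aug_of_sym (hk _)]; group) (by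
      rintro ⟨i, t⟩ (hp | rfl | rfl : i ∈ Y ∨ t = 0 ∨ t = 1)
      · rw [hγ.rel i hp, hFY i hp]; simp
      · rw [hγ.zero, hF0]; simp
      · rw [hγ.one, hF1]; simp)
  have h1 := hr.map (H' := (mapGL (α := Fin (r + 1) × β) (aug (Multiplicative ℤ))).ker) (mapGL sym)
    (continuous_mapGL _ continuous_sym) (fun g hg => by
      rw [MonoidHom.mem_ker, mapGL_aug_sym]; exact hg)
  have h2 : (fun p => mapGL sym (st (zeroEmb r β) (γ p * (toeFrame.kap β (st e (F p)))⁻¹))) =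
      fun p => st (zeroEmb r β) (symP γ p) := by
    ext1 p
    rw [mapGL_st, map_mul, map_inv, hk, inv_one, mul_one, symP]
  rw [h2] at h1
  have h3 := evl_null h1
  rw [evl_st] at h3
  have h4 := (hn.map (H' := ⊤) (st (zeroEmb r β)) (continuous_st _) fun _ _ => trivial).inv.mul h3
  refine hs (e.trans (zeroEmb r β)) z hz ?_
  convert h4 using 1
  ext1 q
  simp only [Pi.mul_apply, Pi.inv_apply, st_trans, map_mul, map_inv]
  group

/-- If `z` is null then, by `loop_inj`, the symbol of the linking path is null over the Laurent
algebra. Lifting this homotopy replaces the path by one with trivial symbol, and truncation turns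
it into a null homotopy of `x`. -/
theorem bott_null_left [T2Space X] {Y : Set X} (hY : IsClosed Y) {e : α ↪ β} {x : X → GLR α ℂ}
    {z : (X × I) × I → GLR α ℂ} (h : BottAt Y e x z) (hx : x ∈ maps Y (GLR α ℂ))
    (hz : Null ⊤ (bd (bd Y)) z)
    (hs : ∀ {β : Type} [Fintype β] [DecidableEq β] (e : α ↪ β), StabInj Y e) :
    Null ⊤ Y x := by
  obtain ⟨γ, hγ, hn⟩ := h
  have h1 : Null ⊤ (bd (bd Y)) (evl (symP γ)) :=
    hn.of_mul_inv (hz.map (H' := ⊤) (st e) (continuous_st _) fun _ _ => trivial)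
  obtain ⟨L, hL, hL0, hL1, hLY, hLa⟩ := loop_inj (isClosed_bd hY) _ hγ.continuous_symP
    hγ.symP_eq_one hγ.aug_symP h1
  have hLa' : ∀ p, mapGL (aug _) (L p) = 1 := fun p => hLa p
  obtain ⟨g, hg, hg0, hgs, hga, hgc⟩ := exists_toe_lift L hL (fun p t => by rw [hLa', hLa'])
  have hg1 : ∀ p ∈ bd Y, g (p, 1) = 1 := fun p hp =>
    hgc p (fun t => by rw [hLY p hp, hLY p hp]) 1
  have hsym : ∀ p, mapGL sym (g (p, 1)) = symP γ p := fun p => by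
    rw [← hL1, ← hgs p 1, hL0, mul_one]
  obtain ⟨r, δ, -, hδ, -, -, -, -, -, hδk⟩ := toeFrame.exists_truncation
    (fun p => γ p * (g (p, 1))⁻¹) (hγ.cont.mul (hg.comp (by fun_prop)).inv)
    (fun p => isK_of_mapGL (by rw [map_mul, map_inv, hsym, symP, mul_inv_cancel]))
  refine hs (e.trans (zeroEmb r β)) x hx ⟨δ, hδ, fun i => ?_, fun i => ?_, fun y hy t => ?_,
    fun _ => trivial⟩
  · rw [hδk (i, 0) 1 (by rw [hγ.zero, hg1 _ (Or.inr (Or.inl rfl))]; simp), map_one]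
  · rw [hδk (i, 1) (st e (x i)) (by rw [hγ.one, hg1 _ (Or.inr (Or.inr rfl))]; simp)]; exact (st_trans _ _ _).symm
  · rw [hδk (y, t) 1 (by rw [hγ.rel y hy, hg1 _ (Or.inl hy)]; simp), map_one]

/-- **Bott periodicity** in the stable range: the homotopy classes of maps from `(X, Y)` to the
general linear group agree with those of maps from `(X, Y) × (I, ∂I)²`. -/
theorem bott_step [T2Space X] {Y : Set X} (hY : IsClosed Y)
    (s1 : ∀ {β : Type} [Fintype β] [DecidableEq β] (e : α ↪ β), StabSurj Y e)
    (s2 : ∀ {β : Type} [Fintype β] [DecidableEq β] (e : α ↪ β), StabInj Y e)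
    (s3 : ∀ {β : Type} [Fintype β] [DecidableEq β] (e : α ↪ β), StabSurj (bd (bd Y)) e)
    (s4 : ∀ {β : Type} [Fintype β] [DecidableEq β] (e : α ↪ β), StabInj (bd (bd Y)) e) :
    Nonempty (PiG Y (GLR α ℂ) ≃* PiG (bd (bd Y)) (GLR α ℂ)) :=
  nonempty_mulEquiv_of_correspondence _ _ _ _ (bottRel α Y) (fun _ hp => hp.1)
    (fun _ hp => hp.2.1) (fun x hx => bott_total_left x hx s3)
    (fun z hz => bott_total_right hY z hz s1) (by
      rintro ⟨x, z⟩ ⟨hx, hz, β, _, _, e, h⟩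
      exact ⟨fun h1 => bott_null_right h hz h1 s4, fun h1 => bott_null_left hY h hx h1 s2⟩)

end
end BottP

/-! ### Winding numbers -/

namespace BottP
open Set unitInterval Filter

/-- Lifting of homotopies starting at the constant `1` along the covering `exp`. -/
theorem exists_log {X : Type} [TopologicalSpace X] (F : X × I → ℂ) (hF : Continuous F)
    (h0 : ∀ x, F (x, 0) = 1) (hne : ∀ p, F p ≠ 0) :
    ∃ L : X × I → ℂ, Continuous L ∧ (∀ p, Complex.exp (L p) = F p) ∧ (∀ x, L (x, 0) = 0) ∧
      ∀ x, (∀ t, F (x, t) = 1) → ∀ t, L (x, t) = 0 := by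
  let H : C(I × X, {z : ℂ // z ≠ 0}) := ⟨fun p => ⟨F (p.2, p.1), hne _⟩,
    Continuous.subtype_mk (hF.comp (continuous_snd.prodMk continuous_fst)) _⟩
  let f : C(X, ℂ) := ⟨fun _ => 0, continuous_const⟩
  have hH : ∀ a, H (0, a) = ⟨_, (f a).exp_ne_zero⟩ := fun a => Subtype.ext (by
    change F (a, 0) = Complex.exp 0
    rw [h0, Complex.exp_zero])
  let Γ := Complex.isCoveringMap_exp.liftHomotopy H f hH
  have hΓ : ∀ t x, Complex.exp (Γ (t, x)) = F (x, t) := fun t x =>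
    congrArg Subtype.val (congrFun (Complex.isCoveringMap_exp.liftHomotopy_lifts H f hH) (t, x))
  have hΓ0 : ∀ x, Γ (0, x) = 0 := Complex.isCoveringMap_exp.liftHomotopy_zero H f hH
  refine ⟨fun p => Γ (p.2, p.1), Γ.continuous.comp (continuous_snd.prodMk continuous_fst),
    fun p => hΓ _ _, hΓ0, fun x hx t => ?_⟩
  have : (fun t => Γ (t, x)) = fun _ => (0 : ℂ) :=
    Complex.isCoveringMap_exp.eq_of_comp_eq (Γ.continuous.comp (by fun_prop)) continuous_const
      (funext fun t => Subtype.ext (by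
        change Complex.exp (Γ (t, x)) = Complex.exp 0
        rw [hΓ, hx, Complex.exp_zero])) 0 (hΓ0 x)
  exact congrFun this t

/-- The exponential as a map to the general linear group of rank one. -/
noncomputable def exp1 (z : ℂ) : GLR (Fin 1) ℂ where
  val := Matrix.scalar _ (Complex.exp z)
  inv := Matrix.scalar _ (Complex.exp (-z))
  val_inv := by rw [← map_mul, ← Complex.exp_add]; simp
  inv_val := by rw [← map_mul, ← Complex.exp_add]; simp

theorem continuous_exp1 : Continuous exp1 := by
  have h : Continuous fun z : ℂ => Matrix.scalar (Fin 1) (Complex.exp z) := by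
    simp only [Matrix.scalar_apply]
    fun_prop
  exact Units.continuous_iff.2 ⟨h, h.comp continuous_neg⟩

theorem exp1_eq_iff {z : ℂ} {g : GLR (Fin 1) ℂ} : exp1 z = g ↔ Complex.exp z = g.1 0 0 := by
  constructor
  · rintro rfl; simp [exp1]
  · intro h
    ext i j
    fin_cases i; fin_cases j
    simpa [exp1] using h

theorem exp1_add (z w : ℂ) : exp1 (z + w) = exp1 z * exp1 w := by
  ext1
  simp only [exp1, Units.val_mul, Complex.exp_add, map_mul]

theorem exp1_neg (z : ℂ) : exp1 (-z) = (exp1 z)⁻¹ := by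
  rw [eq_inv_iff_mul_eq_one, ← exp1_add, neg_add_cancel, exp1_eq_iff]; simp

theorem exp1_zero : exp1 0 = 1 := by rw [exp1_eq_iff]; simp

theorem entry_ne_zero (g : GLR (Fin 1) ℂ) : g.1 0 0 ≠ 0 := by
  have h := congrFun (congrFun g.mul_inv 0) 0
  rw [Matrix.mul_apply] at h
  simp only [Finset.univ_unique, Fin.default_eq_zero, Finset.sum_singleton, Matrix.one_apply_eq] at h
  exact left_ne_zero_of_mul_eq_one h

/-- Maps from the interval to the group of rank one, together with their winding number. -/
noncomputable def windRel : Subgroup (((Fin 1 → I) → GLR (Fin 1) ℂ) × Multiplicative ℤ) where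
  carrier := {p | p.1 ∈ maps (Cube.boundary (Fin 1)) (GLR (Fin 1) ℂ) ∧ ∃ L : I → ℂ, Continuous L ∧
    L 0 = 0 ∧ L 1 = (p.2.toAdd : ℂ) * (2 * Real.pi * Complex.I) ∧ ∀ t, exp1 (L t) = p.1 fun _ => t}
  mul_mem' := by
    rintro p q ⟨h, L, hL, h0, h1, hf⟩ ⟨h', L', hL', h0', h1', hf'⟩
    refine ⟨mul_mem h h', fun t => L t + L' t, hL.add hL', by simp [h0, h0'], ?_, fun t => ?_⟩
    · simp only [h1, h1']; push_cast [Prod.snd_mul, toAdd_mul]; ring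
    · rw [exp1_add, hf, hf']; rfl
  one_mem' := ⟨one_mem _, fun _ => 0, continuous_const, rfl, by simp, fun t => exp1_zero⟩
  inv_mem' := by
    rintro p ⟨h, L, hL, h0, h1, hf⟩
    refine ⟨inv_mem h, fun t => -L t, hL.neg, by simp [h0], ?_, fun t => ?_⟩
    · simp only [h1]; push_cast [Prod.snd_inv, toAdd_inv]; ring
    · rw [exp1_neg, hf]; rfl

theorem boundary_one {x : Fin 1 → I} : x ∈ Cube.boundary (Fin 1) ↔ x 0 = 0 ∨ x 0 = 1 := by
  simp [Cube.boundary]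

theorem eq_const (x : Fin 1 → I) : (fun _ => x 0) = x := by
  ext1 i; rw [Subsingleton.elim i 0]

theorem exp_int_eq_one (m : ℤ) : exp1 ((m : ℂ) * (2 * Real.pi * Complex.I)) = 1 := by
  rw [exp1_eq_iff]; simp [Complex.exp_int_mul_two_pi_mul_I m]

/-- The winding number is an isomorphism from the fundamental group of `ℂ ∖ 0` to `ℤ`. -/
theorem nonempty_winding :
    Nonempty (PiG (Cube.boundary (Fin 1)) (GLR (Fin 1) ℂ) ≃* Multiplicative ℤ) := by
  have hc : Continuous fun (t : I) (_ : Fin 1) => t := by fun_prop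
  obtain ⟨e⟩ := nonempty_mulEquiv_of_correspondence (maps (Cube.boundary (Fin 1)) (GLR (Fin 1) ℂ))
    (nulls ⊤ (Cube.boundary (Fin 1))) (⊤ : Subgroup (Multiplicative ℤ)) ⊥ windRel
    (fun p hp => hp.1) (fun p hp => trivial) (by
      rintro f hf
      obtain ⟨hfc, hf1⟩ := mem_maps.1 hf
      obtain ⟨L, hL, hLe, hL0, -⟩ := exists_log (X := Unit) (fun p => (f fun _ => p.2).1 0 0)
        ((Units.continuous_val.comp (hfc.comp (hc.comp continuous_snd))).matrix_elem 0 0)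
        (fun x => by rw [hf1 _ (boundary_one.2 (Or.inl rfl))]; simp) (fun p => entry_ne_zero _)
      have h1 : Complex.exp (L ((), 1)) = 1 := by
        rw [hLe, hf1 _ (boundary_one.2 (Or.inr rfl))]; simp
      obtain ⟨m, hm⟩ := Complex.exp_eq_one_iff.1 h1
      exact ⟨Multiplicative.ofAdd m, hf, fun t => L ((), t), hL.comp (by fun_prop), hL0 _, hm,
        fun t => exp1_eq_iff.2 (hLe _)⟩) (by
      rintro m -
      let L : I → ℂ := fun t => ((t : ℝ) : ℂ) * ((m.toAdd : ℂ) * (2 * Real.pi * Complex.I))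
      have hL : Continuous L := by fun_prop
      refine ⟨fun x => exp1 (L (x 0)), mem_maps.2 ⟨continuous_exp1.comp (hL.comp (by fun_prop)), ?_⟩,
        L, hL, by simp [L], by simp [L], fun t => rfl⟩
      intro y hy
      rcases boundary_one.1 hy with h | h
      · simp [h, L, exp1_zero]
      · simp only [h, L, Icc.coe_one, Complex.ofReal_one, one_mul, exp_int_eq_one]) (by
      rintro ⟨f, m⟩ ⟨hf, L, hL, hL0, hL1, hLf⟩
      dsimp only at hL1 hLf ⊢
      constructor
      · rintro ⟨F, hF, hF0, hF1, hFY, -⟩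
        obtain ⟨Λ, hΛ, hΛe, hΛ0, hΛc⟩ := exists_log (X := I) (fun p => (F ((fun _ => p.1), p.2)).1 0 0)
          ((Units.continuous_val.comp (hF.comp (((hc.comp continuous_fst).prodMk
            continuous_snd)))).matrix_elem 0 0)
          (fun x => by rw [hF0]; simp) (fun p => entry_ne_zero _)
        have h0 : Λ (0, 1) = 0 := hΛc 0 (fun t => by
          rw [hFY _ (boundary_one.2 (Or.inl rfl))]; simp) 1
        have h1 : Λ (1, 1) = 0 := hΛc 1 (fun t => by
          rw [hFY _ (boundary_one.2 (Or.inr rfl))]; simp) 1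
        have h2 : L = fun s => Λ (s, 1) :=
          Complex.isCoveringMap_exp.eq_of_comp_eq hL (hΛ.comp (by fun_prop))
            (funext fun s => Subtype.ext (by
              change Complex.exp (L s) = Complex.exp (Λ (s, 1))
              rw [hΛe, hF1, exp1_eq_iff.1 (hLf s)])) 0 (by rw [hL0, h0])
        rw [congrFun h2 1, h1, zero_eq_mul, or_iff_left Complex.two_pi_I_ne_zero] at hL1
        rw [Subgroup.mem_bot]
        exact_mod_cast hL1
      · intro hm
        rw [Subgroup.mem_bot] at hm
        rw [hm, toAdd_one, Int.cast_zero, zero_mul] at hL1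
        refine ⟨fun p => exp1 ((p.2 : ℝ) * L (p.1 0)), continuous_exp1.comp ?_, fun x => ?_,
          fun x => ?_, fun y hy t => ?_, fun _ => trivial⟩
        · have : Continuous fun p : (Fin 1 → I) × I => L (p.1 0) := hL.comp (by fun_prop)
          fun_prop
        · simp [exp1_zero]
        · simp only [Icc.coe_one, Complex.ofReal_one, one_mul, hLf, eq_const]
        · rcases boundary_one.1 hy with h | h
          · simp [h, hL0, exp1_zero]
          · simp [h, hL1, exp1_zero])
  exact ⟨e.trans (((QuotientGroup.quotientMulEquivOfEq (by simp)).trans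
    (QuotientGroup.quotientBot)).trans Subgroup.topEquiv)⟩

end BottP

/-! ### Homotopy groups of general linear groups -/

namespace BottP
open Set unitInterval Filter

section
variable {X X' : Type} [TopologicalSpace X] [TopologicalSpace X']
variable {G : Type} [Group G] [TopologicalSpace G] [IsTopologicalGroup G]

/-- A homomorphism between groups of maps which is bijective up to null homotopies induces an
isomorphism of groups of homotopy classes. -/
theorem nonempty_piG_of_hom {G' : Type} [Group G'] [TopologicalSpace G'] [IsTopologicalGroup G']
    {Y : Set X} {Y' : Set X'} (Φ : (X → G) →* (X' → G'))
    (h1 : ∀ f ∈ maps Y G, Φ f ∈ maps Y' G') (h2 : ∀ f ∈ maps Y G, Null ⊤ Y f ↔ Null ⊤ Y' (Φ f))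
    (h3 : ∀ g ∈ maps Y' G', ∃ f ∈ maps Y G, Null ⊤ Y' (g * (Φ f)⁻¹)) :
    Nonempty (PiG Y G ≃* PiG Y' G') := by
  let φ : maps Y G →* maps Y' G' := (Φ.comp (maps Y G).subtype).codRestrict _ fun f => h1 f f.2
  let ψ : maps Y G →* PiG Y' G' := (QuotientGroup.mk' _).comp φ
  have hψ : Function.Surjective ψ := by
    intro q
    obtain ⟨g, rfl⟩ := QuotientGroup.mk'_surjective _ q
    obtain ⟨f, hf, hn⟩ := h3 g g.2
    refine ⟨⟨f, hf⟩, ?_⟩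
    rw [MonoidHom.comp_apply, QuotientGroup.mk'_eq_mk']
    refine ⟨(φ ⟨f, hf⟩)⁻¹ * g, ?_, mul_inv_cancel_left _ _⟩
    rw [Subgroup.mem_subgroupOf]
    have := hn.conj (g := (Φ f)⁻¹) (mem_maps.1 (h1 f hf)).1.inv
    have he : (Φ f)⁻¹ * (g : X' → G') = (Φ f)⁻¹ * (g * (Φ f)⁻¹) * (Φ f)⁻¹⁻¹ := by group
    change Null ⊤ Y' ((Φ f)⁻¹ * (g : X' → G'))
    rw [he]
    exact this
  have hk : ψ.ker = (nulls (⊤ : Subgroup G) Y).subgroupOf (maps Y G) := by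
    ext f
    rw [MonoidHom.mem_ker, MonoidHom.comp_apply, QuotientGroup.mk'_apply, QuotientGroup.eq_one_iff,
      Subgroup.mem_subgroupOf, Subgroup.mem_subgroupOf]
    exact (h2 f f.2).symm
  exact ⟨(QuotientGroup.quotientMulEquivOfEq hk.symm).trans
    (QuotientGroup.quotientKerEquivOfSurjective ψ hψ)⟩

/-- A homeomorphism of pairs induces an isomorphism of groups of homotopy classes. -/
theorem nonempty_piG_homeo {Y : Set X} {Y' : Set X'} (θ : X ≃ₜ X') (h : ∀ x, x ∈ Y ↔ θ x ∈ Y') :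
    Nonempty (PiG Y' G ≃* PiG Y G) := by
  have h' : ∀ x, x ∈ Y' ↔ θ.symm x ∈ Y := fun x => by rw [h, θ.apply_symm_apply]
  refine nonempty_piG_of_hom (MonoidHom.pi fun x => Pi.evalMonoidHom _ (θ x)) ?_ ?_ ?_
  · intro f hf
    obtain ⟨hc, hY⟩ := mem_maps.1 hf
    exact mem_maps.2 ⟨hc.comp θ.continuous, fun y hy => hY _ ((h y).1 hy)⟩
  · intro f hf
    refine ⟨fun hn => hn.comp θ θ.continuous fun y hy => (h y).1 hy, fun hn => ?_⟩
    have := hn.comp θ.symm θ.symm.continuous fun y hy => (h' y).1 hy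
    have he : (fun x => f (θ (θ.symm x))) = f := funext fun x => by rw [θ.apply_symm_apply]
    exact he ▸ this
  · intro g hg
    obtain ⟨hc, hY⟩ := mem_maps.1 hg
    refine ⟨g ∘ θ.symm, mem_maps.2 ⟨hc.comp θ.symm.continuous, fun y hy => hY _ ((h' y).1 hy)⟩, ?_⟩
    have he : g * (fun x => (g (θ.symm (θ x)))⁻¹) = 1 := funext fun x => by
      rw [Pi.mul_apply, θ.symm_apply_apply, mul_inv_cancel, Pi.one_apply]
    change Null ⊤ Y (g * (fun x => (g (θ.symm (θ x)))⁻¹))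
    rw [he]
    exact Null.one ⊤ Y
  
end

/-- The `k + 1`-dimensional cube as a product. -/
def cubeSucc (k : ℕ) : (Fin k → I) × I ≃ₜ (Fin (k + 1) → I) where
  toFun p := Fin.snoc (α := fun _ => I) p.1 p.2
  invFun f := (Fin.init f, f (Fin.last k))
  left_inv p := by simp
  right_inv f := by simp
  continuous_toFun := Continuous.finSnoc (A := fun _ => I) continuous_fst continuous_snd
  continuous_invFun := by unfold Fin.init; fun_prop

theorem mem_bd_cubeSucc (k : ℕ) (p : (Fin k → I) × I) :
    p ∈ bd (Cube.boundary (Fin k)) ↔ cubeSucc k p ∈ Cube.boundary (Fin (k + 1)) := by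
  change _ ↔ ∃ i, _
  rw [Fin.exists_fin_succ']
  simp [cubeSucc, bd, Cube.boundary]

theorem isClosed_boundary (k : ℕ) : IsClosed (Cube.boundary (Fin k)) := by
  have : Cube.boundary (Fin k) = ⋃ i, {y | y i = 0 ∨ y i = 1} := by ext; simp [Cube.boundary]
  rw [this]
  refine isClosed_iUnion_of_finite fun i => ?_
  exact (isClosed_singleton.preimage (continuous_apply i)).union
    (isClosed_singleton.preimage (continuous_apply i))

/-- `bott_step` for cubes. The bound is the stable range of injectivity in dimension `k + 2`. -/
theorem nonempty_bott_cube {k n : ℕ} (h : k + 4 < 2 * (n + 1)) :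
    Nonempty (PiG (Cube.boundary (Fin k)) (GLR (Fin n) ℂ) ≃*
      PiG (Cube.boundary (Fin (k + 2))) (GLR (Fin n) ℂ)) := by
  let j : (Fin k → I) → (Fin k → ℝ) := fun x i => x i
  have hj : Continuous j := by fun_prop
  have hji : Function.Injective j := fun x y hxy => funext fun i => Subtype.ext (congrFun hxy i)
  let j' : ((Fin k → I) × I) × I → ((Fin k → ℝ) × ℝ) × ℝ := fun p => ((j p.1.1, p.1.2), p.2)
  have hj' : Continuous j' := by fun_prop
  have hji' : Function.Injective j' := by
    rintro ⟨⟨x, s⟩, t⟩ ⟨⟨x', s'⟩, t'⟩ hxy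
    simp only [j', Prod.mk.injEq] at hxy
    obtain ⟨⟨h1, h2⟩, h3⟩ := hxy
    rw [hji h1, Subtype.ext h2, Subtype.ext h3]
  have hd : Module.finrank ℝ (Fin k → ℝ) = k := by simp
  have hd' : Module.finrank ℝ (((Fin k → ℝ) × ℝ) × ℝ) = k + 2 := by simp
  have hn : Fintype.card (Fin n) = n := Fintype.card_fin n
  obtain ⟨e1⟩ := bott_step (α := Fin n) (isClosed_boundary k)
    (fun e => stabSurj j hj hji (by omega) _ e) (fun e => stabInj j hj hji (by omega) _ e)
    (fun e => stabSurj j' hj' hji' (by omega) _ e) (fun e => stabInj j' hj' hji' (by omega) _ e)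
  obtain ⟨e2⟩ := nonempty_piG_homeo (G := GLR (Fin n) ℂ)
    (((cubeSucc k).prodCongr (Homeomorph.refl I)).trans (cubeSucc (k + 1)))
    (Y := bd (bd (Cube.boundary (Fin k)))) (Y' := Cube.boundary (Fin (k + 1 + 1))) (by
      rintro ⟨p, t⟩
      change _ ↔ cubeSucc (k + 1) (cubeSucc k p, t) ∈ _
      rw [← mem_bd_cubeSucc]
      change (p ∈ bd _ ∨ _) ↔ (_ ∨ _)
      rw [mem_bd_cubeSucc])
  exact ⟨e1.trans e2.symm⟩

/-- Connectedness of the general linear groups, by stabilization from the trivial group of rank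
zero. -/
theorem subsingleton_pi_zero (n : ℕ) :
    Subsingleton (PiG (Cube.boundary (Fin 0)) (GLR (Fin n) ℂ)) := by
  rw [QuotientGroup.subsingleton_iff, Subgroup.subgroupOf_eq_top]
  intro M hM
  obtain ⟨B, -, hB⟩ := stabSurj (E := Fin 0 → ℝ) (fun (x : Fin 0 → I) i => x i) (by fun_prop)
    (fun x y _ => Subsingleton.elim x y) (by simp) (Cube.boundary (Fin 0))
    (Fin.castLEEmb (Nat.zero_le n)) M hM
  have he : (M * fun x => (st (Fin.castLEEmb (Nat.zero_le n)) (B x))⁻¹) = M := funext fun x => by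
    rw [Pi.mul_apply, Subsingleton.elim (B x) 1, map_one, inv_one, mul_one]
  rw [he] at hB
  exact hB

/-- The fundamental group of the general linear group, by stabilization from rank one. -/
theorem nonempty_pi_one {n : ℕ} (hn : 1 ≤ n) :
    Nonempty (PiG (Cube.boundary (Fin 1)) (GLR (Fin n) ℂ) ≃* Multiplicative ℤ) := by
  let j : (Fin 1 → I) → (Fin 1 → ℝ) := fun x i => x i
  have hj : Continuous j := by fun_prop
  have hji : Function.Injective j := fun x y hxy => funext fun i => Subtype.ext (congrFun hxy i)
  let e : Fin 1 ↪ Fin n := Fin.castLEEmb hn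
  have s1 := stabSurj j hj hji (by simp) (Cube.boundary (Fin 1)) e
  have s2 := stabInj j hj hji (by simp) (Cube.boundary (Fin 1)) e
  obtain ⟨e1⟩ := nonempty_piG_of_hom (Y := Cube.boundary (Fin 1)) (Y' := Cube.boundary (Fin 1))
    (MonoidHom.pi fun x => (st e : GLR (Fin 1) ℂ →* GLR (Fin n) ℂ).comp (Pi.evalMonoidHom _ x))
    (fun f hf => mem_maps.2 ⟨(continuous_st e).comp (mem_maps.1 hf).1, fun y hy => by
      change st e (f y) = 1
      rw [(mem_maps.1 hf).2 y hy, map_one]⟩)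
    (fun f hf => ⟨fun h => h.map (st e) (continuous_st e) fun _ _ => trivial, fun h => s2 f hf h⟩)
    (fun g hg => s1 g hg)
  obtain ⟨e2⟩ := nonempty_winding
  exact ⟨e1.symm.trans e2⟩

/-- Bott periodicity for the general linear groups, by induction in steps of two from `i = 0` and
`i = 1`. -/
theorem pi_gl : ∀ i : ℕ, ∃ N, ∀ n, N ≤ n →
    (i % 2 = 0 → Subsingleton (PiG (Cube.boundary (Fin i)) (GLR (Fin n) ℂ))) ∧
    (i % 2 = 1 → Nonempty (PiG (Cube.boundary (Fin i)) (GLR (Fin n) ℂ) ≃* Multiplicative ℤ))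
  | 0 => ⟨0, fun n _ => ⟨fun _ => subsingleton_pi_zero n, by simp⟩⟩
  | 1 => ⟨1, fun n hn => ⟨by simp, fun _ => nonempty_pi_one hn⟩⟩
  | i + 2 => by
    obtain ⟨N, hN⟩ := pi_gl i
    refine ⟨max N (i + 2), fun n hn => ?_⟩
    obtain ⟨h1, h2⟩ := hN n ((le_max_left _ _).trans hn)
    obtain ⟨e⟩ := nonempty_bott_cube (k := i) (n := n) (by
      have := (le_max_right N (i + 2)).trans hn
      omega)
    rw [Nat.add_mod_right]
    refine ⟨fun h => ?_, fun h => ?_⟩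
    · have := h1 h
      exact e.symm.injective.subsingleton
    · obtain ⟨e'⟩ := h2 h
      exact ⟨e.symm.trans e'⟩

end BottP

/-! ### Polar decomposition -/

namespace BottP
open Set unitInterval Filter

section
variable {A : Type} [CStarAlgebra A] [PartialOrder A] [StarOrderedRing A]

theorem continuous_rpow_of_strictlyPositive {Z : Type} [TopologicalSpace Z] {b : Z → A}
    (hb : Continuous b) (h : ∀ z, IsStrictlyPositive (b z)) (y : ℝ) :
    Continuous fun z => b z ^ y := by
  refine Continuous.cfc_nnreal_of_mem_nhdsSet (s := {0}ᶜ) (fun x => x ^ y) ?_ hb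
    (fun z => (h z).nonneg) ?_
  · refine isOpen_compl_singleton.mem_nhdsSet.2 (iUnion_subset fun z => ?_)
    exact subset_compl_singleton_iff.2 (spectrum.zero_notMem _ (h z).isUnit)
  · exact fun x hx => (NNReal.continuousAt_rpow_const (Or.inl hx)).continuousWithinAt

theorem isStrictlyPositive_mul_star (a : Aˣ) : IsStrictlyPositive ((a : A) * star (a : A)) :=
  IsStrictlyPositive.iff_of_unital.2 ⟨mul_star_self_nonneg _, a.isUnit.mul a.isUnit.star⟩

/-- The inverse of the absolute value in the left polar decomposition of `a`. -/
noncomputable def absInv (a : Aˣ) : A := ((a : A) * star (a : A)) ^ (-(1 / 2) : ℝ)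

theorem absInv_pos (a : Aˣ) : IsStrictlyPositive (absInv a) :=
  (isStrictlyPositive_mul_star a).rpow _ _

theorem absInv_of_mem {a : Aˣ} (h : (a : A) ∈ unitary A) : absInv a = 1 := by
  rw [absInv, (Unitary.mem_iff.1 h).2, CFC.one_rpow]

theorem absInv_mul_mem (a : Aˣ) : absInv a * a ∈ unitary A := by
  have hs : star (absInv a) = absInv a := (absInv_pos a).nonneg.isSelfAdjoint.star_eq
  have h : absInv a * a * star (absInv a * a) = 1 := by
    rw [star_mul, hs, ← mul_assoc, mul_assoc (absInv a)]
    exact CFC.conjugate_rpow_neg_one_half _ (isStrictlyPositive_mul_star a)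
  have hu : IsUnit (absInv a * a) := (absInv_pos a).isUnit.mul a.isUnit
  refine Unitary.mem_iff.2 ⟨?_, h⟩
  obtain ⟨u, hu⟩ := hu
  rw [← hu] at h ⊢
  rw [← Units.inv_eq_of_mul_eq_one_right h, Units.inv_mul]

/-- The segment from `1` to the positive element `absInv a` consists of invertible elements. -/
theorem isUnit_segment (a : Aˣ) (t : I) :
    IsUnit (((1 - t : ℝ) • (1 : A) + (t : ℝ) • absInv a) * a) := by
  refine IsUnit.mul ?_ a.isUnit
  rcases eq_or_ne t 0 with rfl | ht
  · simp
  · have ht' : 0 < (t : ℝ) := lt_of_le_of_ne t.2.1 fun h => ht (Subtype.ext h.symm)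
    refine (IsStrictlyPositive.nonneg_add (smul_nonneg (sub_nonneg.2 t.2.2) zero_le_one)
      ((absInv_pos a).smul ht')).isUnit

theorem continuous_absInv {Z : Type} [TopologicalSpace Z] {a : Z → Aˣ} (h : Continuous a) :
    Continuous fun z => absInv (a z) := by
  have h' : Continuous fun z => (a z : A) := Units.continuous_val.comp h
  exact continuous_rpow_of_strictlyPositive (h'.mul h'.star)
    (fun z => isStrictlyPositive_mul_star (a z)) _
end

section
variable {n : ℕ}
open scoped Matrix.Norms.L2Operator MatrixOrder

/-- The retraction `r` onto the unitary group is the unitary part of the polar decomposition, and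
`H` is the segment homotopy from the identity to it. -/
theorem exists_polar :
    ∃ (r : GLR (Fin n) ℂ → Matrix.unitaryGroup (Fin n) ℂ) (H : GLR (Fin n) ℂ × I → GLR (Fin n) ℂ),
      Continuous r ∧ Continuous H ∧ (∀ u, r (Unitary.toUnits u) = u) ∧ (∀ a, H (a, 0) = a) ∧
      (∀ a, H (a, 1) = Unitary.toUnits (r a)) ∧ ∀ t, H (1, t) = 1 := by
  have hc : Continuous fun p : GLR (Fin n) ℂ × I =>
      (((1 - p.2 : ℝ) • (1 : Matrix (Fin n) (Fin n) ℂ) + (p.2 : ℝ) • absInv p.1) * p.1 :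
        Matrix (Fin n) (Fin n) ℂ) := by
    have h1 := continuous_absInv (A := Matrix (Fin n) (Fin n) ℂ)
      (continuous_fst : Continuous fun p : GLR (Fin n) ℂ × I => p.1)
    have h2 : Continuous fun p : GLR (Fin n) ℂ × I => (p.2 : ℝ) := by fun_prop
    have h3 : Continuous fun p : GLR (Fin n) ℂ × I => (p.1 : Matrix (Fin n) (Fin n) ℂ) :=
      Units.continuous_val.comp continuous_fst
    exact (((continuous_const.sub h2).smul continuous_const).add (h2.smul h1)).mul h3
  obtain ⟨H, hH, hv⟩ := exists_units_lift _ hc fun p => isUnit_segment p.1 p.2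
  refine ⟨fun a => ⟨absInv a * a, absInv_mul_mem a⟩, H, ?_, hH, ?_, ?_, ?_, ?_⟩
  · exact ((continuous_absInv continuous_id).mul Units.continuous_val).subtype_mk _
  · intro u
    refine Subtype.ext ?_
    change absInv (Unitary.toUnits u) * (u : Matrix (Fin n) (Fin n) ℂ) = u
    rw [absInv_of_mem (by exact u.2), one_mul]
  · intro a; ext1; simp [hv]
  · intro a; ext1; simp [hv]
  · intro t; ext1
    rw [hv, absInv_of_mem (by exact one_mem _), ← add_smul]; simp
end

theorem continuous_toUnits {n : ℕ} :
    Continuous (Unitary.toUnits : Matrix.unitaryGroup (Fin n) ℂ →* GLR (Fin n) ℂ) :=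
  (isOpenEmbedding_val_GLR (Fin n) ℂ).isInducing.continuous_iff.2 continuous_subtype_val

/-- The inclusion of the unitary group induces isomorphisms on homotopy classes, because it is a
deformation retract of the general linear group. -/
theorem nonempty_unitary {X : Type} [TopologicalSpace X] (Y : Set X) (n : ℕ) :
    Nonempty (PiG Y (Matrix.unitaryGroup (Fin n) ℂ) ≃* PiG Y (GLR (Fin n) ℂ)) := by
  obtain ⟨r, H, hr, hH, hru, H0, H1, Hone⟩ := exists_polar (n := n)
  have hr1 : r 1 = 1 := by rw [← map_one Unitary.toUnits, hru]
  refine nonempty_piG_of_hom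
    (MonoidHom.pi fun x => (Unitary.toUnits : Matrix.unitaryGroup (Fin n) ℂ →* GLR (Fin n) ℂ).comp
      (Pi.evalMonoidHom _ x)) ?_ ?_ ?_
  · intro f hf
    obtain ⟨hc, hY⟩ := mem_maps.1 hf
    refine mem_maps.2 ⟨continuous_toUnits.comp hc, fun y hy => ?_⟩
    change Unitary.toUnits (f y) = 1
    rw [hY y hy, map_one]
  · intro f hf
    refine ⟨fun h => h.map _ continuous_toUnits fun _ _ => trivial, ?_⟩
    rintro ⟨F, hF, F0, F1, FY, -⟩
    refine ⟨fun p => r (F p), hr.comp hF, fun x => ?_, fun x => ?_, fun y hy t => ?_,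
      fun _ => trivial⟩
    · simp only [F0, hr1]
    · simp only [F1]; exact hru _
    · simp only [FY y hy, hr1]
  · intro g hg
    obtain ⟨hc, hY⟩ := mem_maps.1 hg
    refine ⟨fun x => r (g x), mem_maps.2 ⟨hr.comp hc, fun y hy => by rw [hY y hy, hr1]⟩, ?_⟩
    refine ⟨fun p => g p.1 * (H (g p.1, p.2))⁻¹, ?_, fun x => ?_, fun x => ?_, fun y hy t => ?_,
      fun _ => trivial⟩
    · exact (hc.comp continuous_fst).mul
        (hH.comp ((hc.comp continuous_fst).prodMk continuous_snd)).inv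
    · simp only [H0, mul_inv_cancel]
    · simp only [H1]; rfl
    · simp only [hY y hy, Hone, inv_one, mul_one]

end BottP

/-! ### Bott periodicity -/

namespace BottP
/-- Equal types with equal group structures are isomorphic. This compares `bottUnitaryTarget i`,
whose type and group structure are both defined by cases, with `ℤ`. -/
theorem nonempty_addEquiv_of_heq {A B : Type} (iA : AddCommGroup A) (iB : AddCommGroup B) (h : A = B)
    (hh : HEq iA iB) : Nonempty (B ≃+ A) := by
  subst h
  cases hh
  exact ⟨AddEquiv.refl _⟩

theorem decidable_casesOn_true {P : Prop} (d : Decidable P) {C : Type*} (a : ¬P → C) (b : P → C)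
    (h : P) : Decidable.casesOn (motive := fun _ => C) d a b = b h := by
  cases d with
  | isFalse h' => exact absurd h h'
  | isTrue h' => rfl

theorem nonempty_addEquiv_target {i : ℕ} (h : i % 2 = 1) : Nonempty (ℤ ≃+ bottUnitaryTarget i) := by
  refine nonempty_addEquiv_of_heq _ _ (if_pos h) ?_
  exact (heq_of_eq (decidable_casesOn_true _ _ _ h)).trans (cast_heq _ _)

theorem tgt_even {i : ℕ} (h : i % 2 = 0) : Subsingleton (bottUnitaryTarget i) := by
  rw [bottUnitaryTarget, if_neg (by omega)]
  infer_instance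
end BottP

/-- **Bott periodicity for the stable homotopy groups of the unitary groups.**
For every `i ≥ 0` there is an `N` such that for all `n ≥ N` the `i`-th homotopy group
`π_i(U(n), I)` (based at the identity) is isomorphic to `ℤ` if `i` is odd, and is trivial
if `i` is even.  The isomorphism is stated as a bijection for every `i` (covering the case
`i = 0` of pointed sets of path components), together with a group isomorphism whenever
`i ≥ 1` (where the homotopy group carries its group structure). -/
theorem bott_periodicity_unitary (i : ℕ) :
    ∃ N : ℕ, ∀ n : ℕ, N ≤ n →
      Nonempty ((π_ i) (Matrix.unitaryGroup (Fin n) ℂ) 1 ≃ bottUnitaryTarget i) ∧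
      ∀ j : ℕ, i = j + 1 →
        Nonempty (Additive ((π_ (j + 1)) (Matrix.unitaryGroup (Fin n) ℂ) 1) ≃+
          bottUnitaryTarget i) := by
  obtain ⟨N, hN⟩ := BottP.pi_gl i
  refine ⟨N, fun n hn => ?_⟩
  obtain ⟨e⟩ := BottP.nonempty_unitary (Cube.boundary (Fin i)) n
  obtain ⟨h0, h1⟩ := hN n hn
  rcases Nat.mod_two_eq_zero_or_one i with hi | hi
  · have := h0 hi
    have := BottP.tgt_even hi
    have hs := e.toEquiv.subsingleton
    have hs' := (BottP.piEquiv i (G := Matrix.unitaryGroup (Fin n) ℂ)).subsingleton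
    refine ⟨⟨⟨fun _ => 0, fun _ => (BottP.piEquiv i).symm 1, fun _ => Subsingleton.elim _ _,
      fun _ => Subsingleton.elim _ _⟩⟩, ?_⟩
    rintro j rfl
    exact ⟨⟨⟨fun _ => 0, fun _ => 0, fun _ => Subsingleton.elim (α := π_ _ _ _) _ _,
      fun _ => Subsingleton.elim _ _⟩, fun _ _ => Subsingleton.elim _ _⟩⟩
  · obtain ⟨e'⟩ := h1 hi
    obtain ⟨e''⟩ := BottP.nonempty_addEquiv_target hi
    refine ⟨⟨(BottP.piEquiv i).trans ((e.trans e').toEquiv.trans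
      (Multiplicative.toAdd.trans e''.toEquiv))⟩, ?_⟩
    rintro j rfl
    exact ⟨(MulEquiv.toAdditiveLeft ((MulEquiv.mk' (BottP.piEquiv (j + 1))
      (BottP.piEquiv_mul j)).trans (e.trans e'))).trans e''⟩
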